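/- arXiv:1205.0873 — 4 statements merged into one kernel-verified Lean document; each statement's English description precedes it below -/
import Mathlib

section
/- Let X be a geodesic ptolemaic metric space and suppose there is a homeomorphism h : ℝ × [0,1] → X together with two unit-speed geodesic lines c₀, c₁ : ℝ → X that are parallel and whose images are h(ℝ × {0}) and h(ℝ × {1}) respectively. Then there exists a ≥ 0 such that X is isometric to the flat strip ℝ × [0,a] ⊆ ℝ² equipped with the Euclidean metric. -/
open Metric Set Filter Topology

/-- A metric space is ptolemaic if all quadruples satisfy the Ptolemy inequality. -/
def Ptolemaic (X : Type*) [MetricSpace X] : Prop :=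
  ∀ x y z w : X, dist x y * dist z w ≤ dist x z * dist y w + dist x w * dist y z

/-- A metric space is geodesic if every pair of points is joined by a geodesic. -/
def GeodesicMetricSpace (X : Type*) [MetricSpace X] : Prop :=
  ∀ x y : X, ∃ c : ℝ → X, c 0 = x ∧ c 1 = y ∧
    ∀ s ∈ Set.Icc (0:ℝ) 1, ∀ t ∈ Set.Icc (0:ℝ) 1,
      dist (c s) (c t) = dist x y * |s - t|

/-- A unit-speed geodesic line: an isometric embedding of ℝ. -/
def IsGeodesicLine {X : Type*} [MetricSpace X] (c : ℝ → X) : Prop :=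
  ∀ s t : ℝ, dist (c s) (c t) = |s - t|

/-- Two lines are parallel if their distance is sublinear in both directions. -/
def ParallelLines {X : Type*} [MetricSpace X] (c₀ c₁ : ℝ → X) : Prop :=
  Filter.Tendsto (fun t => dist (c₀ t) (c₁ t) / |t|) Filter.atTop (nhds 0) ∧
  Filter.Tendsto (fun t => dist (c₀ t) (c₁ t) / |t|) Filter.atBot (nhds 0)

/-!
Let `b₊` and `b₋` be the Busemann functions of the two ends of `c₀`. In a ptolemaic space they are
convex, and parallel lines have equal Busemann functions up to a constant. Hence, with `c₁` suitably
shifted, segments from `c₀ t` to `c₁ t` lie in the flat set `b₊ + b₋ = 0`, where `-b₊` is an affine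
time coordinate. By a planar intersection theorem any curve joining the two ends crosses each of
these segments, and the segments vary continuously, so they sweep out all of `X`. This gives
coordinates: the time `T` and the distance `U` from `c₀`.

To compare the metric with the Euclidean one, rescale at an interior point. The limits are affine
planes with a translation invariant, hence seminormed, ptolemaic metric in which the coordinate
directions are in Birkhoff position, and such a seminorm is Euclidean. This yields a first
variation formula and the upper bound `d² ≤ ΔT² + ΔU²`; the lower bound follows by applying the
Ptolemy inequality to a thin cross whose other five distances are already controlled.
-/

/-! ### Busemann functions -/

/-- The Busemann function of a geodesic line `c`. Since `dist z (c t) - t` decreases in `t`, the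
limit at infinity is an infimum. -/
noncomputable def busemann {X : Type*} [MetricSpace X] (c : ℝ → X) (z : X) : ℝ :=
  ⨅ t : ℝ, (dist z (c t) - t)

namespace IsGeodesicLine

variable {X : Type*} [MetricSpace X] {c c₀ c₁ : ℝ → X}

lemma reverse (hc : IsGeodesicLine c) : IsGeodesicLine (c ∘ Neg.neg) := fun s t => by
  rw [Function.comp_apply, Function.comp_apply, hc, ← abs_neg]
  congr 1
  ring

lemma shift (hc : IsGeodesicLine c) (a : ℝ) : IsGeodesicLine fun s => c (s + a) := fun s t => by
  rw [hc, add_sub_add_right_eq_sub]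

lemma continuous (hc : IsGeodesicLine c) : Continuous c :=
  (Isometry.of_dist_eq fun s t => by rw [hc, Real.dist_eq]).continuous

lemma antitone_dist_sub (hc : IsGeodesicLine c) (z : X) :
    Antitone fun t : ℝ => dist z (c t) - t := fun s t hst => by
  have h := hc s t
  rw [abs_sub_comm, abs_of_nonneg (sub_nonneg.2 hst)] at h
  linarith [dist_triangle z (c s) (c t)]

lemma bddBelow_dist_sub (hc : IsGeodesicLine c) (z : X) :
    BddBelow (range fun t : ℝ => dist z (c t) - t) := by
  refine ⟨-dist z (c 0), ?_⟩
  rintro _ ⟨t, rfl⟩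
  have h := hc t 0
  rw [sub_zero] at h
  linarith [dist_triangle_left (c t) (c 0) z, le_abs_self t]

lemma tendsto_busemann (hc : IsGeodesicLine c) (z : X) :
    Tendsto (fun t : ℝ => dist z (c t) - t) atTop (𝓝 (busemann c z)) :=
  tendsto_atTop_ciInf (hc.antitone_dist_sub z) (hc.bddBelow_dist_sub z)

lemma tendsto_dist_div_sub (hc : IsGeodesicLine c) (z : X) (a : ℝ) :
    Tendsto (fun t : ℝ => dist z (c t) / (t - a)) atTop (𝓝 1) := by
  have h := (((hc.tendsto_busemann z).add_const a).div_atTop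
    (tendsto_atTop_add_const_right atTop (-a) tendsto_id)).const_add 1
  rw [add_zero] at h
  refine h.congr' ?_
  filter_upwards [eventually_gt_atTop a] with t ht
  have := (sub_pos.2 ht).ne'
  rw [id, ← sub_eq_add_neg]
  field_simp
  ring

lemma busemann_apply (hc : IsGeodesicLine c) (s : ℝ) : busemann c (c s) = -s := by
  refine tendsto_nhds_unique (hc.tendsto_busemann (c s)) (tendsto_const_nhds.congr' ?_)
  filter_upwards [eventually_ge_atTop s] with t ht
  rw [hc, abs_sub_comm, abs_of_nonneg (sub_nonneg.2 ht)]
  ring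

lemma busemann_reverse_apply (hc : IsGeodesicLine c) (s : ℝ) :
    busemann (c ∘ Neg.neg) (c s) = s := by
  simpa using hc.reverse.busemann_apply (-s)

lemma busemann_le_add_dist (hc : IsGeodesicLine c) (z w : X) :
    busemann c z ≤ busemann c w + dist z w :=
  le_of_tendsto_of_tendsto' (hc.tendsto_busemann z) ((hc.tendsto_busemann w).add_const _)
    fun t => by linarith [dist_triangle z w (c t)]

lemma abs_busemann_sub_le (hc : IsGeodesicLine c) (z w : X) :
    |busemann c z - busemann c w| ≤ dist z w := by
  have h := hc.busemann_le_add_dist w z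
  rw [dist_comm] at h
  exact abs_sub_le_iff.2 ⟨by linarith [hc.busemann_le_add_dist z w], by linarith⟩

lemma continuous_busemann (hc : IsGeodesicLine c) : Continuous (busemann c) :=
  (LipschitzWith.of_dist_le_mul (K := 1) fun z w => by
    simpa [Real.dist_eq] using hc.abs_busemann_sub_le z w).continuous

lemma busemann_convex (hPT : Ptolemaic X) (hc : IsGeodesicLine c) {a m b : X}
    (hm : dist a m + dist m b = dist a b) :
    dist a b * busemann c m ≤ dist m b * busemann c a + dist a m * busemann c b := by
  refine le_of_tendsto_of_tendsto' ((hc.tendsto_busemann m).const_mul _)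
    (((hc.tendsto_busemann a).const_mul _).add ((hc.tendsto_busemann b).const_mul _)) fun t => ?_
  have h := hPT m (c t) a b
  rw [dist_comm (c t) b, dist_comm (c t) a, dist_comm m a] at h
  linear_combination h + t * hm

lemma busemann_add_reverse_nonneg (hc : IsGeodesicLine c) (z : X) :
    0 ≤ busemann c z + busemann (c ∘ Neg.neg) z := by
  refine ge_of_tendsto ((hc.tendsto_busemann z).add (hc.reverse.tendsto_busemann z)) ?_
  filter_upwards [eventually_ge_atTop 0] with t ht
  have h := hc t (-t)
  rw [abs_of_nonneg (by linarith)] at h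
  have h' := dist_triangle_left (c t) (c (-t)) z
  simp only [Function.comp_apply]
  linarith

lemma busemann_shift (hc : IsGeodesicLine c) (a : ℝ) (z : X) :
    busemann (fun s => c (s + a)) z = busemann c z + a := by
  refine tendsto_nhds_unique ((hc.shift a).tendsto_busemann z)
    ((((hc.tendsto_busemann z).comp
      (tendsto_atTop_add_const_right atTop a tendsto_id)).add_const a).congr fun t => ?_)
  simp only [Function.comp_apply, id]
  ring

/-- Divide Ptolemy's inequality for `z, c₀ t, w, c₁ t` by `t` and let `t` tend to infinity. -/
lemma busemann_sub_le_of_asymptotic (hPT : Ptolemaic X) (h₀ : IsGeodesicLine c₀)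
    (h₁ : IsGeodesicLine c₁)
    (hp : Tendsto (fun t => dist (c₀ t) (c₁ t) / |t|) atTop (𝓝 0)) (z w : X) :
    busemann c₀ z - busemann c₁ z ≤ busemann c₀ w - busemann c₁ w := by
  have hz₀ := h₀.tendsto_busemann z
  have hz₁ := h₁.tendsto_busemann z
  have hw₀ := h₀.tendsto_busemann w
  have hw₁ := h₁.tendsto_busemann w
  have hinv := tendsto_inv_atTop_zero (𝕜 := ℝ)
  have hlhs := (hz₀.add hw₁).add ((hz₀.mul hw₁).mul hinv)
  have hrhs := ((hz₁.add hw₀).add ((hz₁.mul hw₀).mul hinv)).add (hp.const_mul (dist z w))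
  simp only [mul_zero, add_zero] at hlhs hrhs
  suffices h : busemann c₀ z + busemann c₁ w ≤ busemann c₁ z + busemann c₀ w by linarith
  refine le_of_tendsto_of_tendsto hlhs hrhs ?_
  filter_upwards [eventually_gt_atTop 0] with t ht
  have h := hPT z (c₀ t) w (c₁ t)
  rw [dist_comm (c₀ t) w] at h
  rw [abs_of_pos ht, ← sub_nonneg]
  refine (div_nonneg (sub_nonneg.2 h) ht.le).trans_eq ?_
  field_simp
  ring

lemma busemann_sub_eq_of_asymptotic (hPT : Ptolemaic X) (h₀ : IsGeodesicLine c₀)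
    (h₁ : IsGeodesicLine c₁)
    (hp : Tendsto (fun t => dist (c₀ t) (c₁ t) / |t|) atTop (𝓝 0)) (z w : X) :
    busemann c₀ z - busemann c₁ z = busemann c₀ w - busemann c₁ w :=
  (busemann_sub_le_of_asymptotic hPT h₀ h₁ hp z w).antisymm
    (busemann_sub_le_of_asymptotic hPT h₀ h₁ hp w z)

lemma exists_shift_busemann_eq (hPT : Ptolemaic X) (h₀ : IsGeodesicLine c₀)
    (h₁ : IsGeodesicLine c₁) (hp : ParallelLines c₀ c₁) :
    ∃ a : ℝ, (∀ z, busemann (fun s => c₁ (s + a)) z = busemann c₀ z) ∧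
      ∀ z, busemann ((fun s => c₁ (s + a)) ∘ Neg.neg) z = busemann (c₀ ∘ Neg.neg) z := by
  have hrev : Tendsto (fun t => dist ((c₀ ∘ Neg.neg) t) ((c₁ ∘ Neg.neg) t) / |t|) atTop (𝓝 0) :=
    (hp.2.comp tendsto_neg_atTop_atBot).congr fun t => by simp
  have hplus := busemann_sub_eq_of_asymptotic hPT h₀ h₁ hp.1
  have hminus := busemann_sub_eq_of_asymptotic hPT h₀.reverse h₁.reverse hrev
  have hsum : busemann c₁ (c₀ 0) + busemann (c₁ ∘ Neg.neg) (c₀ 0) = 0 := by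
    linarith [hplus (c₀ 0) (c₁ 0), hminus (c₀ 0) (c₁ 0), h₀.busemann_apply 0,
      h₀.busemann_reverse_apply 0, h₁.busemann_apply 0, h₁.busemann_reverse_apply 0,
      h₀.busemann_add_reverse_nonneg (c₁ 0), h₁.busemann_add_reverse_nonneg (c₀ 0)]
  refine ⟨-busemann c₁ (c₀ 0), fun z => ?_, fun z => ?_⟩
  · rw [busemann_shift h₁]
    linarith [hplus z (c₀ 0), h₀.busemann_apply 0]
  · have hshift : (fun s => c₁ (s + -busemann c₁ (c₀ 0))) ∘ Neg.neg =
        fun s => (c₁ ∘ Neg.neg) (s + busemann c₁ (c₀ 0)) := by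
      funext s
      simp only [Function.comp_apply]
      congr 1
      ring
    rw [hshift, busemann_shift h₁.reverse]
    linarith [hminus z (c₀ 0), h₀.busemann_reverse_apply 0]

end IsGeodesicLine

/-! ### The Poincaré–Miranda theorem in the plane -/

section PoincareMiranda

lemma lt_of_isPreconnected_of_forall_ne {α : Type*} [TopologicalSpace α] {S : Set α}
    (hS : IsPreconnected S) {g : α → ℝ} (hg : ContinuousOn g S) {x y : α} {v : ℝ} (hx : x ∈ S)
    (hy : y ∈ S) (hne : ∀ z ∈ S, g z ≠ v) (h : g x < v) : g y < v := by
  by_contra! hv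
  obtain ⟨z, hz, hzv⟩ := hS.intermediate_value hx hy hg ⟨h.le, hv⟩
  exact hne z hz hzv

lemma gt_of_isPreconnected_of_forall_ne {α : Type*} [TopologicalSpace α] {S : Set α}
    (hS : IsPreconnected S) {g : α → ℝ} (hg : ContinuousOn g S) {x y : α} {v : ℝ} (hx : x ∈ S)
    (hy : y ∈ S) (hne : ∀ z ∈ S, g z ≠ v) (h : v < g x) : v < g y := by
  by_contra! hv
  obtain ⟨z, hz, hzv⟩ := hS.intermediate_value hy hx hg ⟨hv, h.le⟩
  exact hne z hz hzv

variable {a b c d : ℝ}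

open Real in
/-- Continue the angle around the boundary from the corner `(b, c)`. -/
lemma not_exists_angle_on_rectangle {θ : ℝ × ℝ → ℝ} (hθ : Continuous θ) (hab : a ≤ b) (hcd : c ≤ d)
    (hleft : ∀ y ∈ Icc c d, cos (θ (a, y)) < 0) (hright : ∀ y ∈ Icc c d, 0 < cos (θ (b, y)))
    (hbot : ∀ x ∈ Icc a b, sin (θ (x, c)) ≤ 0) (htop : ∀ x ∈ Icc a b, 0 ≤ sin (θ (x, d)))
    (hcorner : |θ (b, c)| ≤ π) : False := by
  have ha : a ∈ Icc a b := left_mem_Icc.2 hab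
  have hb : b ∈ Icc a b := right_mem_Icc.2 hab
  have hc : c ∈ Icc c d := left_mem_Icc.2 hcd
  have hd : d ∈ Icc c d := right_mem_Icc.2 hcd
  have hvert (x : ℝ) : ContinuousOn (fun y => θ (x, y)) (Icc c d) := by fun_prop
  have hhor (y : ℝ) : ContinuousOn (fun x => θ (x, y)) (Icc a b) := by fun_prop
  have hcos_neg : cos (-(π / 2)) = 0 := by rw [cos_neg, cos_pi_div_two]
  have hcorner' : |θ (b, c)| < π / 2 := by
    by_contra! h
    have hcos := cos_nonpos_of_pi_div_two_le_of_le h (by linarith [pi_pos])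
    rw [cos_abs] at hcos
    exact hcos.not_gt (hright c hc)
  have hright_lower : -(π / 2) < θ (b, d) :=
    gt_of_isPreconnected_of_forall_ne isPreconnected_Icc (hvert b) hc hd
      (fun y hy h => (hright y hy).ne' (by rw [h, hcos_neg])) (abs_lt.1 hcorner').1
  have htop_lower : -(π / 2) < θ (a, d) :=
    gt_of_isPreconnected_of_forall_ne isPreconnected_Icc (hhor d) hb ha
      (fun x hx h => (htop x hx).not_gt (by rw [h, sin_neg, sin_pi_div_two]; norm_num))
      hright_lower
  have hbot_upper : θ (a, c) < π / 2 :=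
    lt_of_isPreconnected_of_forall_ne isPreconnected_Icc (hhor c) hb ha
      (fun x hx h => (hbot x hx).not_gt (by rw [h, sin_pi_div_two]; norm_num))
      (abs_lt.1 hcorner').2
  have htop_left : π / 2 < θ (a, d) := by
    by_contra! h
    exact (cos_nonneg_of_neg_pi_div_two_le_of_le htop_lower.le h).not_gt (hleft d hd)
  have hbot_left : π / 2 < θ (a, c) :=
    gt_of_isPreconnected_of_forall_ne isPreconnected_Icc (hvert a) hd hc
      (fun y hy h => (hleft y hy).ne (by rw [h, cos_pi_div_two])) htop_left
  exact hbot_upper.not_gt hbot_left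

/-- A nowhere vanishing `f` has a continuous argument on the simply connected plane. -/
lemma exists_eq_zero_of_re_im_sign {f : ℝ × ℝ → ℂ} (hf : Continuous f) (hab : a ≤ b) (hcd : c ≤ d)
    (hleft : ∀ y ∈ Icc c d, (f (a, y)).re < 0) (hright : ∀ y ∈ Icc c d, 0 < (f (b, y)).re)
    (hbot : ∀ x ∈ Icc a b, (f (x, c)).im ≤ 0) (htop : ∀ x ∈ Icc a b, 0 ≤ (f (x, d)).im) :
    ∃ p, f p = 0 := by
  by_contra! hne
  obtain ⟨L, ⟨-, hL⟩, -⟩ := Complex.isCoveringMapOn_exp.existsUnique_continuousMap_lifts ⟨f, hf⟩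
    (a₀ := (0, 0)) (e₀ := Complex.log (f (0, 0))) (Complex.exp_log (hne _)) hne
  let n : ℤ := round ((L (b, c)).im / (2 * Real.pi))
  let θ : ℝ × ℝ → ℝ := fun p => (L p).im - n * (2 * Real.pi)
  have hre (p) : (f p).re = Real.exp (L p).re * Real.cos (θ p) := by
    rw [Real.cos_sub_int_mul_two_pi, ← Complex.exp_re]
    exact congrArg Complex.re (congrFun hL p).symm
  have him (p) : (f p).im = Real.exp (L p).re * Real.sin (θ p) := by
    rw [Real.sin_sub_int_mul_two_pi, ← Complex.exp_im]
    exact congrArg Complex.im (congrFun hL p).symm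
  refine not_exists_angle_on_rectangle (θ := θ) (by fun_prop) hab hcd
    (fun y hy => ?_) (fun y hy => ?_) (fun x hx => ?_) (fun x hx => ?_) ?_
  · exact (pos_iff_neg_of_mul_neg (hre _ ▸ hleft y hy)).1 (Real.exp_pos _)
  · exact (pos_iff_pos_of_mul_pos (hre _ ▸ hright y hy)).1 (Real.exp_pos _)
  · exact nonpos_of_mul_nonpos_right (him _ ▸ hbot x hx) (Real.exp_pos _)
  · exact nonneg_of_mul_nonneg_right (him _ ▸ htop x hx) (Real.exp_pos _)
  · have hround := abs_sub_round ((L (b, c)).im / (2 * Real.pi))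
    have hθ : θ (b, c) = ((L (b, c)).im / (2 * Real.pi) - n) * (2 * Real.pi) := by
      simp only [θ]
      field_simp
    rw [hθ, abs_mul, abs_of_pos Real.two_pi_pos]
    nlinarith [Real.pi_pos]

theorem poincare_miranda {P Q : ℝ × ℝ → ℝ} (hab : a ≤ b) (hcd : c ≤ d)
    (hP : ContinuousOn P (Icc a b ×ˢ Icc c d)) (hQ : ContinuousOn Q (Icc a b ×ˢ Icc c d))
    (hleft : ∀ y ∈ Icc c d, P (a, y) < 0) (hright : ∀ y ∈ Icc c d, 0 < P (b, y))
    (hbot : ∀ x ∈ Icc a b, Q (x, c) ≤ 0) (htop : ∀ x ∈ Icc a b, 0 ≤ Q (x, d)) :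
    ∃ p ∈ Icc a b ×ˢ Icc c d, P p = 0 ∧ Q p = 0 := by
  let r : ℝ × ℝ → ℝ × ℝ := fun p => (projIcc a b hab p.1, projIcc c d hcd p.2)
  have hr : Continuous r := by fun_prop
  have hr_mem (p) : r p ∈ Icc a b ×ˢ Icc c d :=
    ⟨(projIcc a b hab p.1).2, (projIcc c d hcd p.2).2⟩
  have hr_eq {x y : ℝ} (hx : x ∈ Icc a b) (hy : y ∈ Icc c d) : r (x, y) = (x, y) := by
    simp only [r, projIcc_of_mem hab hx, projIcc_of_mem hcd hy]
  have hf : Continuous fun p => (⟨P (r p), Q (r p)⟩ : ℂ) :=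
    Complex.equivRealProdCLM.symm.continuous.comp
      ((hP.comp_continuous hr hr_mem).prodMk (hQ.comp_continuous hr hr_mem))
  obtain ⟨p, hp⟩ := exists_eq_zero_of_re_im_sign hf hab hcd
    (fun y hy => by simpa only [hr_eq (left_mem_Icc.2 hab) hy] using hleft y hy)
    (fun y hy => by simpa only [hr_eq (right_mem_Icc.2 hab) hy] using hright y hy)
    (fun x hx => by simpa only [hr_eq hx (left_mem_Icc.2 hcd)] using hbot x hx)
    (fun x hx => by simpa only [hr_eq hx (right_mem_Icc.2 hcd)] using htop x hx)
  exact ⟨r p, hr_mem p, congrArg Complex.re hp, congrArg Complex.im hp⟩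

end PoincareMiranda

/-! ### Geodesic segments -/

/-- A geodesic segment from `a` to `b`, parametrised on `[0, 1]` proportionally to arc length. -/
structure IsSegment {X : Type*} [MetricSpace X] (a b : X) (c : ℝ → X) : Prop where
  left : c 0 = a
  right : c 1 = b
  dist_eq : ∀ s ∈ Icc (0 : ℝ) 1, ∀ t ∈ Icc (0 : ℝ) 1, dist (c s) (c t) = dist a b * |s - t|

lemma GeodesicMetricSpace.exists_isSegment {X : Type*} [MetricSpace X]
    (hX : GeodesicMetricSpace X) (a b : X) : ∃ c, IsSegment a b c :=
  let ⟨c, h0, h1, hc⟩ := hX a b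
  ⟨c, h0, h1, hc⟩

namespace IsSegment

variable {X : Type*} [MetricSpace X] {a b : X} {c : ℝ → X} {s : ℝ}

lemma dist_left (hc : IsSegment a b c) (hs : s ∈ Icc (0 : ℝ) 1) :
    dist a (c s) = dist a b * s := by
  simpa [hc.left, abs_of_nonneg hs.1] using hc.dist_eq 0 (by simp) s hs

lemma dist_right (hc : IsSegment a b c) (hs : s ∈ Icc (0 : ℝ) 1) :
    dist (c s) b = dist a b * (1 - s) := by
  simpa [hc.right, abs_sub_comm s, abs_of_nonneg (sub_nonneg.2 hs.2)] using
    hc.dist_eq s hs 1 (by simp)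

lemma dist_add_dist (hc : IsSegment a b c) (hs : s ∈ Icc (0 : ℝ) 1) :
    dist a (c s) + dist (c s) b = dist a b := by
  rw [hc.dist_left hs, hc.dist_right hs]
  ring

lemma continuousOn (hc : IsSegment a b c) : ContinuousOn c (Icc 0 1) :=
  LipschitzOnWith.continuousOn (K := (dist a b).toNNReal) <|
    LipschitzOnWith.of_dist_le_mul fun s hs t ht => by
      rw [hc.dist_eq s hs t ht, Real.dist_eq, Real.coe_toNNReal _ dist_nonneg]

/-- A segment as a path. -/
def path (hc : IsSegment a b c) : Path a b where
  toFun s := c s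
  continuous_toFun := continuousOn_iff_continuous_domRestrict.1 hc.continuousOn
  source' := hc.left
  target' := hc.right

lemma mem_range_path {hc : IsSegment a b c} {z : X} :
    z ∈ range hc.path ↔ ∃ s ∈ Icc (0 : ℝ) 1, c s = z :=
  ⟨fun ⟨s, hs⟩ => ⟨s, s.2, hs⟩, fun ⟨s, hs, hz⟩ => ⟨⟨s, hs⟩, hz⟩⟩

end IsSegment

/-! ### Level segments of the Busemann function -/

/-- A ptolemaic geodesic strip with topological coordinates `x` and `y`, bounded by the geodesic
lines `c₀` (at `y = 0`) and `c₁` (at `y = 1`), which have the same Busemann functions in both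
directions. -/
structure TopologicalStrip (X : Type*) [MetricSpace X] where
  ptolemaic : Ptolemaic X
  geodesic : GeodesicMetricSpace X
  x : X → ℝ
  y : X → ℝ
  continuous_x : Continuous x
  continuous_y : Continuous y
  y_mem : ∀ z, y z ∈ Icc (0 : ℝ) 1
  eq_of_coord_eq : ∀ z w, x z = x w → y z = y w → z = w
  isCompact_slab : ∀ R, IsCompact {z | |x z| ≤ R}
  c₀ : ℝ → X
  c₁ : ℝ → X
  line₀ : IsGeodesicLine c₀
  line₁ : IsGeodesicLine c₁
  y_c₀ : ∀ s, y (c₀ s) = 0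
  y_c₁ : ∀ s, y (c₁ s) = 1
  tendsto_atTop : Tendsto (fun s => x (c₀ s)) atTop atTop
  tendsto_atBot : Tendsto (fun s => x (c₀ s)) atBot atBot
  busemann_eq : ∀ z, busemann c₁ z = busemann c₀ z
  busemann_reverse_eq : ∀ z, busemann (c₁ ∘ Neg.neg) z = busemann (c₀ ∘ Neg.neg) z

namespace TopologicalStrip

variable {X : Type*} [MetricSpace X] (S : TopologicalStrip X) {z w : X} {t : ℝ}

/-- The same strip with both boundary lines traversed backwards. -/
def reverse : TopologicalStrip X where
  ptolemaic := S.ptolemaic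
  geodesic := S.geodesic
  x z := -S.x z
  y := S.y
  continuous_x := S.continuous_x.neg
  continuous_y := S.continuous_y
  y_mem := S.y_mem
  eq_of_coord_eq z w h := S.eq_of_coord_eq z w (neg_injective h)
  isCompact_slab R := by simpa only [abs_neg] using S.isCompact_slab R
  c₀ := S.c₀ ∘ Neg.neg
  c₁ := S.c₁ ∘ Neg.neg
  line₀ := S.line₀.reverse
  line₁ := S.line₁.reverse
  y_c₀ s := S.y_c₀ (-s)
  y_c₁ s := S.y_c₁ (-s)
  tendsto_atTop := tendsto_neg_atBot_atTop.comp (S.tendsto_atBot.comp tendsto_neg_atTop_atBot)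
  tendsto_atBot := tendsto_neg_atTop_atBot.comp (S.tendsto_atTop.comp tendsto_neg_atBot_atTop)
  busemann_eq := S.busemann_reverse_eq
  busemann_reverse_eq := by simpa [Function.comp_assoc] using S.busemann_eq

/-- The horizontal coordinate: the negative of the Busemann function of the boundary lines, so that
`time (c₀ t) = t`. -/
noncomputable def time (z : X) : ℝ := -busemann S.c₀ z

/-- The points at which the Busemann functions of the two ends of the boundary lines add up to
zero. This will turn out to be the whole space. -/
def flatSet : Set X := {z | busemann S.c₀ z + busemann (S.c₀ ∘ Neg.neg) z = 0}

lemma abs_time_sub_le (z w : X) : |S.time z - S.time w| ≤ dist z w := by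
  rw [time, time, neg_sub_neg, abs_sub_comm]
  exact S.line₀.abs_busemann_sub_le z w

lemma continuous_time : Continuous S.time := S.line₀.continuous_busemann.neg

lemma time_c₀ (t : ℝ) : S.time (S.c₀ t) = t := by
  rw [time, S.line₀.busemann_apply, neg_neg]

lemma time_c₁ (t : ℝ) : S.time (S.c₁ t) = t := by
  rw [time, ← S.busemann_eq, S.line₁.busemann_apply, neg_neg]

lemma c₀_mem_flatSet (t : ℝ) : S.c₀ t ∈ S.flatSet := by
  simp [flatSet, S.line₀.busemann_apply, S.line₀.busemann_reverse_apply]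

lemma c₁_mem_flatSet (t : ℝ) : S.c₁ t ∈ S.flatSet := by
  simp [flatSet, ← S.busemann_eq, ← S.busemann_reverse_eq, S.line₁.busemann_apply,
    S.line₁.busemann_reverse_apply]

lemma flatSet_reverse : S.reverse.flatSet = S.flatSet := by
  ext z
  simp [flatSet, reverse, Function.comp_assoc, add_comm]

lemma time_reverse (hz : z ∈ S.flatSet) : S.reverse.time z = -S.time z := by
  simp only [flatSet, mem_ofPred_eq, time, reverse] at hz ⊢
  linarith

/-- Both Busemann functions are convex along a segment and their sum is nonnegative. So if the sum
vanishes at the endpoints, it vanishes on the segment and both functions are affine there. -/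
lemma mem_flatSet_and_time_eq {a b m : X} (ha : a ∈ S.flatSet) (hb : b ∈ S.flatSet)
    (hm : dist a m + dist m b = dist a b) (hab : 0 < dist a b) :
    m ∈ S.flatSet ∧ dist a b * S.time m = dist m b * S.time a + dist a m * S.time b := by
  have h₁ := S.line₀.busemann_convex S.ptolemaic hm
  have h₂ := S.line₀.reverse.busemann_convex S.ptolemaic hm
  have h₃ := S.line₀.busemann_add_reverse_nonneg m
  simp only [flatSet, mem_ofPred_eq, time] at ha hb ⊢
  rw [eq_neg_of_add_eq_zero_right ha, eq_neg_of_add_eq_zero_right hb] at h₂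
  have hsum : busemann S.c₀ m + busemann (S.c₀ ∘ Neg.neg) m = 0 :=
    le_antisymm (nonpos_of_mul_nonpos_right (by linarith) hab) h₃
  rw [eq_neg_of_add_eq_zero_right hsum] at h₂
  exact ⟨hsum, by linarith⟩

variable {S} in
lemma _root_.IsSegment.mem_flatSet_and_time_eq {a b : X} {c : ℝ → X} (hc : IsSegment a b c)
    (ha : a ∈ S.flatSet) (hb : b ∈ S.flatSet) {s : ℝ} (hs : s ∈ Icc (0 : ℝ) 1) :
    c s ∈ S.flatSet ∧ S.time (c s) = (1 - s) * S.time a + s * S.time b := by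
  rcases (dist_nonneg (x := a) (y := b)).eq_or_lt with hab | hab
  · have has : a = c s := dist_eq_zero.1 (by rw [hc.dist_left hs, ← hab, zero_mul])
    rw [← has, ← dist_eq_zero.1 hab.symm]
    exact ⟨ha, by ring⟩
  · obtain ⟨hmem, htime⟩ := S.mem_flatSet_and_time_eq ha hb (hc.dist_add_dist hs) hab
    refine ⟨hmem, mul_left_cancel₀ hab.ne' ?_⟩
    rw [htime, hc.dist_left hs, hc.dist_right hs]
    ring

/-- A chosen segment from `c₀ t` to `c₁ t`. -/
noncomputable def transversal (t : ℝ) : ℝ → X :=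
  (S.geodesic.exists_isSegment (S.c₀ t) (S.c₁ t)).choose

lemma isSegment_transversal (t : ℝ) : IsSegment (S.c₀ t) (S.c₁ t) (S.transversal t) :=
  (S.geodesic.exists_isSegment (S.c₀ t) (S.c₁ t)).choose_spec

/-- The trace of the chosen segment from `c₀ t` to `c₁ t`. -/
def fiber (t : ℝ) : Set X := S.transversal t '' Icc 0 1

lemma isCompact_fiber (t : ℝ) : IsCompact (S.fiber t) :=
  isCompact_Icc.image_of_continuousOn (S.isSegment_transversal t).continuousOn

lemma isPreconnected_fiber (t : ℝ) : IsPreconnected (S.fiber t) :=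
  isPreconnected_Icc.image _ (S.isSegment_transversal t).continuousOn

lemma c₀_mem_fiber (t : ℝ) : S.c₀ t ∈ S.fiber t :=
  ⟨0, by simp, (S.isSegment_transversal t).left⟩

lemma transversal_mem_flatSet_and_time_eq {u : ℝ} (hu : u ∈ Icc (0 : ℝ) 1) :
    S.transversal t u ∈ S.flatSet ∧ S.time (S.transversal t u) = t := by
  obtain ⟨hmem, htime⟩ := (S.isSegment_transversal t).mem_flatSet_and_time_eq
    (S.c₀_mem_flatSet t) (S.c₁_mem_flatSet t) hu
  refine ⟨hmem, ?_⟩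
  rw [htime, S.time_c₀, S.time_c₁]
  ring

/-- Apply the Poincaré–Miranda theorem to the differences of the `x`- and `y`-coordinates of the
two paths. -/
lemma exists_mem_fiber_of_path {a b : X} (γ : Path a b)
    (ha : ∀ z ∈ S.fiber t, S.x a < S.x z) (hb : ∀ z ∈ S.fiber t, S.x z < S.x b) :
    ∃ z ∈ range γ, z ∈ S.fiber t := by
  have hG := S.isSegment_transversal t
  have hγ : Continuous fun p : ℝ × ℝ => γ.extend p.1 := γ.continuous_extend.comp continuous_fst
  have hG' : ContinuousOn (fun p : ℝ × ℝ => S.transversal t p.2) (Icc 0 1 ×ˢ Icc 0 1) :=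
    hG.continuousOn.comp continuousOn_snd fun p hp => hp.2
  obtain ⟨⟨r, u⟩, ⟨hr, hu⟩, hx, hy⟩ := poincare_miranda
    (P := fun p => S.x (γ.extend p.1) - S.x (S.transversal t p.2))
    (Q := fun p => S.y (S.transversal t p.2) - S.y (γ.extend p.1)) zero_le_one zero_le_one
    ((S.continuous_x.comp hγ).continuousOn.sub (S.continuous_x.comp_continuousOn hG'))
    ((S.continuous_y.comp_continuousOn hG').sub (S.continuous_y.comp hγ).continuousOn)
    (fun u hu => by simpa using ha _ ⟨u, hu, rfl⟩) (fun u hu => by simpa using hb _ ⟨u, hu, rfl⟩)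
    (fun r _ => by simpa [hG.left, S.y_c₀] using (S.y_mem _).1)
    (fun r _ => by simpa [hG.right, S.y_c₁] using (S.y_mem _).2)
  refine ⟨γ.extend r, ?_, u, hu, (S.eq_of_coord_eq _ _ (sub_eq_zero.1 hx) ?_).symm⟩
  · rw [γ.extend_apply hr]
    exact mem_range_self _
  · exact (sub_eq_zero.1 hy).symm

lemma eventually_exists_mem_fiber_of_path (t : ℝ) :
    ∀ᶠ N in atTop, ∀ γ : Path (S.c₀ (-N)) (S.c₀ N), ∃ z ∈ range γ, z ∈ S.fiber t := by
  obtain ⟨R, hR⟩ :=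
    ((S.isCompact_fiber t).image S.continuous_x).isBounded.exists_norm_le
  have hR' (z) (hz : z ∈ S.fiber t) : |S.x z| ≤ R := hR _ (mem_image_of_mem _ hz)
  filter_upwards [S.tendsto_atTop.eventually_gt_atTop R,
    (S.tendsto_atBot.comp tendsto_neg_atTop_atBot).eventually_lt_atBot (-R)] with N hN hN' γ
  exact S.exists_mem_fiber_of_path γ
    (fun z hz => hN'.trans_le (abs_le.1 (hR' z hz)).1)
    (fun z hz => (abs_le.1 (hR' z hz)).2.trans_lt hN)

/-- Extend the segment by segments from `c₀ (-N)` and to `c₀ N`, on which `time` is affine. The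
extended path meets the fiber, which it cannot do on the added pieces except at their ends. -/
lemma exists_mem_fiber_of_isSegment {c : ℝ → X} (hc : IsSegment z w c) (hz : z ∈ S.flatSet)
    (hw : w ∈ S.flatSet) (hzt : S.time z ≤ t) (htw : t ≤ S.time w) :
    ∃ s ∈ Icc (0 : ℝ) 1, c s ∈ S.fiber t := by
  obtain ⟨N, hN, hNz, hNw⟩ := ((S.eventually_exists_mem_fiber_of_path t).and
    ((eventually_gt_atTop (-S.time z)).and (eventually_gt_atTop (S.time w)))).exists
  obtain ⟨c', hc'⟩ := S.geodesic.exists_isSegment (S.c₀ (-N)) z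
  obtain ⟨c'', hc''⟩ := S.geodesic.exists_isSegment w (S.c₀ N)
  obtain ⟨p, hp, hpt⟩ := hN ((hc'.path.trans hc.path).trans hc''.path)
  have htime : S.time p = t := by
    obtain ⟨u, hu, rfl⟩ := hpt
    exact (S.transversal_mem_flatSet_and_time_eq hu).2
  rw [Path.trans_range, Path.trans_range, union_assoc] at hp
  rcases hp with hp | hp | hp <;> obtain ⟨s, hs, rfl⟩ := IsSegment.mem_range_path.1 hp
  · have h := (hc'.mem_flatSet_and_time_eq (S.c₀_mem_flatSet _) hz hs).2
    rw [htime, S.time_c₀] at h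
    obtain rfl : s = 1 := hs.2.antisymm (by nlinarith)
    exact ⟨0, by simp, by rwa [hc.left, ← hc'.right]⟩
  · exact ⟨s, hs, hpt⟩
  · have h := (hc''.mem_flatSet_and_time_eq hw (S.c₀_mem_flatSet _) hs).2
    rw [htime, S.time_c₀] at h
    obtain rfl : s = 0 := le_antisymm (by nlinarith) hs.1
    exact ⟨1, by simp, by rwa [hc.right, ← hc''.left]⟩

lemma mem_fiber_iff : z ∈ S.fiber t ↔ z ∈ S.flatSet ∧ S.time z = t := by
  refine ⟨fun ⟨u, hu, hz⟩ => hz ▸ S.transversal_mem_flatSet_and_time_eq hu, fun ⟨hz, ht⟩ => ?_⟩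
  have hconst : IsSegment z z fun _ => z := ⟨rfl, rfl, by simp⟩
  obtain ⟨s, -, hs⟩ := S.exists_mem_fiber_of_isSegment hconst hz hz ht.le ht.ge
  exact hs

lemma fiber_reverse (t : ℝ) : S.reverse.fiber (-t) = S.fiber t := by
  ext z
  rw [mem_fiber_iff, mem_fiber_iff, flatSet_reverse]
  exact and_congr_right fun hz => by rw [S.time_reverse hz, neg_inj]

end TopologicalStrip

/-! ### Rays, lines and surjectivity of the level segments -/

namespace TopologicalStrip

variable {X : Type*} [MetricSpace X] (S : TopologicalStrip X) {z w : X} {t : ℝ}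

lemma exists_segment_to_c₀ (hz : z ∈ S.flatSet) {τ : ℝ} (hτ : S.time z < τ) :
    ∃ p : ℝ → X, p (S.time z) = z ∧ (∀ s ∈ Icc (S.time z) τ, p s ∈ S.fiber s) ∧
      ∀ s ∈ Icc (S.time z) τ, ∀ s' ∈ Icc (S.time z) τ,
        dist (p s) (p s') = dist z (S.c₀ τ) / (τ - S.time z) * |s - s'| := by
  obtain ⟨c, hc⟩ := S.geodesic.exists_isSegment z (S.c₀ τ)
  have hpos := sub_pos.2 hτ
  have hIcc (s : ℝ) (hs : s ∈ Icc (S.time z) τ) :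
      (s - S.time z) / (τ - S.time z) ∈ Icc (0 : ℝ) 1 :=
    ⟨div_nonneg (sub_nonneg.2 hs.1) hpos.le, (div_le_one hpos).2 (by linarith [hs.2])⟩
  refine ⟨fun s => c ((s - S.time z) / (τ - S.time z)), by simpa using hc.left,
    fun s hs => ?_, fun s hs s' hs' => ?_⟩
  · obtain ⟨hmem, htime⟩ := hc.mem_flatSet_and_time_eq hz (S.c₀_mem_flatSet τ) (hIcc s hs)
    refine S.mem_fiber_iff.2 ⟨hmem, ?_⟩
    rw [htime, S.time_c₀]
    field_simp
    ring
  · rw [hc.dist_eq _ (hIcc s hs) _ (hIcc s' hs'), ← sub_div, sub_sub_sub_cancel_right, abs_div,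
      abs_of_pos hpos]
    ring

/-- The ray is a limit of the segments from `z` to `c₀ τ` as `τ` tends to infinity. -/
lemma exists_ray (hz : z ∈ S.flatSet) :
    ∃ r : ℝ → X, r (S.time z) = z ∧ (∀ s, S.time z ≤ s → r s ∈ S.fiber s) ∧
      ∀ s s', S.time z ≤ s → S.time z ≤ s' → dist (r s) (r s') = |s - s'| := by
  have : Nonempty X := ⟨z⟩
  choose! p hpz hp_mem hp_dist using fun τ (hτ : S.time z < τ) => S.exists_segment_to_c₀ hz hτ
  set t := S.time z
  let U : Ultrafilter ℝ := Ultrafilter.of atTop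
  have hU : (U : Filter ℝ) ≤ atTop := Ultrafilter.of_le _
  have hlim (s : ℝ) (hs : t ≤ s) : ∃ L ∈ S.fiber s, Tendsto (fun τ => p τ s) U (𝓝 L) := by
    refine (S.isCompact_fiber s).ultrafilter_le_nhds (U.map fun τ => p τ s)
      (le_principal_iff.2 (hU ?_))
    filter_upwards [eventually_gt_atTop t, eventually_ge_atTop s] with τ hτ hsτ
    exact hp_mem τ hτ s ⟨hs, hsτ⟩
  choose! r hr_mem hr using hlim
  refine ⟨r, tendsto_nhds_unique (hr t le_rfl) ?_, hr_mem, fun s s' hs hs' => ?_⟩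
  · refine tendsto_const_nhds.congr' (hU ?_)
    filter_upwards [eventually_gt_atTop t] with τ hτ using (hpz τ hτ).symm
  · have h := (S.line₀.tendsto_dist_div_sub z t).mul_const |s - s'|
    rw [one_mul] at h
    refine tendsto_nhds_unique ((hr s hs).dist (hr s' hs')) ((h.congr' ?_).mono_left hU)
    filter_upwards [eventually_gt_atTop t, eventually_ge_atTop s, eventually_ge_atTop s']
      with τ hτ hsτ hsτ'
    exact (hp_dist τ hτ s ⟨hs, hsτ⟩ s' ⟨hs', hsτ'⟩).symm

lemma exists_line_mem_fiber (hz : z ∈ S.flatSet) :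
    ∃ l : ℝ → X, IsGeodesicLine l ∧ l (S.time z) = z ∧ ∀ s, l s ∈ S.fiber s := by
  obtain ⟨p, hpz, hp, hp_dist⟩ := S.exists_ray hz
  obtain ⟨q, hqz, hq, hq_dist⟩ := S.reverse.exists_ray (z := z) (by rwa [flatSet_reverse])
  rw [S.time_reverse hz] at hqz hq hq_dist
  set t := S.time z
  have hq (s) (hs : s ≤ t) : q (-s) ∈ S.fiber s := S.fiber_reverse s ▸ hq _ (neg_le_neg hs)
  have hqp {s s' : ℝ} (hs : s ≤ t) (hs' : t ≤ s') : dist (q (-s)) (p s') = |s - s'| := by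
    refine le_antisymm ?_ ?_
    · have h := hq_dist (-s) (-t) (neg_le_neg hs) le_rfl
      have h' := hp_dist t s' le_rfl hs'
      rw [hqz, abs_of_nonneg (by linarith)] at h
      rw [hpz, abs_of_nonpos (by linarith)] at h'
      rw [abs_of_nonpos (by linarith)]
      linarith [dist_triangle (q (-s)) z (p s')]
    · have h := S.abs_time_sub_le (q (-s)) (p s')
      rwa [(S.mem_fiber_iff.1 (hq s hs)).2, (S.mem_fiber_iff.1 (hp s' hs')).2] at h
  refine ⟨fun s => if s ≤ t then q (-s) else p s, fun s s' => ?_, by simpa using hqz, fun s => ?_⟩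
  · rcases le_or_gt s t with hs | hs <;> rcases le_or_gt s' t with hs' | hs' <;>
      simp only [hs, hs', not_le.2, if_true, if_false]
    · rw [hq_dist _ _ (neg_le_neg hs) (neg_le_neg hs'), neg_sub_neg, abs_sub_comm]
    · exact hqp hs hs'.le
    · rw [dist_comm, hqp hs' hs.le, abs_sub_comm]
    · exact hp_dist _ _ hs.le hs'.le
  · dsimp only
    split_ifs with hs
    exacts [hq s hs, hp s (le_of_not_ge hs)]

/-- The length of the segment from `c₀ t` to `c₁ t`. -/
noncomputable def width (t : ℝ) : ℝ := dist (S.c₀ t) (S.c₁ t)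

lemma width_pos (t : ℝ) : 0 < S.width t := by
  refine dist_pos.2 fun h => ?_
  have := S.y_c₀ t
  rw [h, S.y_c₁] at this
  exact one_ne_zero this

lemma continuous_width : Continuous S.width :=
  S.line₀.continuous.dist S.line₁.continuous

lemma dist_transversal_le (t' : ℝ) {u u' : ℝ} (hu : u ∈ Icc (0 : ℝ) 1)
    (hu' : u' ∈ Icc (0 : ℝ) 1) :
    dist (S.transversal t u) (S.transversal t' u') ≤
      3 * |t - t'| + |S.width t * u - S.width t' * u'| := by
  obtain ⟨hmem, htime⟩ := S.transversal_mem_flatSet_and_time_eq (t := t) hu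
  obtain ⟨l, hl, hlt, hl_mem⟩ := S.exists_line_mem_fiber hmem
  obtain ⟨v, hv, hlv⟩ := hl_mem t'
  have hlt' : dist (S.transversal t u) (S.transversal t' v) = |t - t'| := by
    rw [hlv, ← hlt, htime, hl]
  have hv_close := dist_dist_dist_le (S.c₀ t) (S.transversal t u) (S.c₀ t') (S.transversal t' v)
  rw [hlt', S.line₀, (S.isSegment_transversal t).dist_left hu,
    (S.isSegment_transversal t').dist_left hv, Real.dist_eq, ← width, ← width] at hv_close
  have hvu : dist (S.transversal t' v) (S.transversal t' u') =
      |S.width t' * v - S.width t' * u'| := by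
    rw [(S.isSegment_transversal t').dist_eq v hv u' hu', ← mul_sub, abs_mul,
      abs_of_pos (S.width_pos t'), width]
  rw [abs_sub_comm] at hv_close
  linarith [dist_triangle (S.transversal t u) (S.transversal t' v) (S.transversal t' u'),
    abs_sub_le (S.width t' * v) (S.width t * u) (S.width t' * u')]

lemma continuousOn_transversal :
    ContinuousOn (fun p : ℝ × ℝ => S.transversal p.1 p.2) (univ ×ˢ Icc (0 : ℝ) 1) := by
  intro p hp
  rw [ContinuousWithinAt, tendsto_iff_dist_tendsto_zero]
  have hbound : Continuous fun q : ℝ × ℝ =>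
      3 * |q.1 - p.1| + |S.width q.1 * q.2 - S.width p.1 * p.2| := by
    have := S.continuous_width
    fun_prop
  refine squeeze_zero' (Eventually.of_forall fun _ => dist_nonneg) ?_
    ((hbound.tendsto' p 0 (by simp)).mono_left nhdsWithin_le_nhds)
  filter_upwards [self_mem_nhdsWithin] with q hq
  exact S.dist_transversal_le p.1 hq.2 hp.2

/-- Since `time` is bounded on the compact slab `|x| ≤ |R|`, the connected set `fiber t` avoids this
slab for large `t`. -/
lemma eventually_forall_fiber_lt_x (R : ℝ) : ∀ᶠ t in atTop, ∀ z ∈ S.fiber t, R < S.x z := by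
  obtain ⟨B, hB⟩ := ((S.isCompact_slab |R|).image S.continuous_time).isBounded.exists_norm_le
  filter_upwards [eventually_gt_atTop B, S.tendsto_atTop.eventually_gt_atTop R] with t ht hx z hz
  refine gt_of_isPreconnected_of_forall_ne (S.isPreconnected_fiber t)
    S.continuous_x.continuousOn (S.c₀_mem_fiber t) hz (fun w hw hR => ?_) hx
  have h := hB _ (mem_image_of_mem _ (show w ∈ {z | |S.x z| ≤ |R|} from by simp [hR]))
  rw [(S.mem_fiber_iff.1 hw).2] at h
  exact ((le_abs_self t).trans h).not_gt ht

lemma eventually_forall_fiber_x_lt (R : ℝ) : ∀ᶠ t in atTop, ∀ z ∈ S.fiber (-t), S.x z < R := by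
  filter_upwards [S.reverse.eventually_forall_fiber_lt_x (-R)] with t ht z hz
  rw [← S.fiber_reverse, neg_neg] at hz
  exact neg_lt_neg_iff.1 (ht z hz)

lemma mem_flatSet (z : X) : z ∈ S.flatSet := by
  obtain ⟨N, hN0, hN, hN'⟩ := ((eventually_ge_atTop 0).and
    ((S.eventually_forall_fiber_lt_x (S.x z)).and
      (S.eventually_forall_fiber_x_lt (S.x z)))).exists
  have hG : ContinuousOn (fun p : ℝ × ℝ => S.transversal p.1 p.2) (Icc (-N) N ×ˢ Icc 0 1) :=
    S.continuousOn_transversal.mono (prod_mono (subset_univ _) le_rfl)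
  obtain ⟨⟨t, u⟩, ⟨-, hu⟩, hx, hy⟩ := poincare_miranda
    (P := fun p => S.x (S.transversal p.1 p.2) - S.x z)
    (Q := fun p => S.y (S.transversal p.1 p.2) - S.y z) (neg_le_self hN0) zero_le_one
    ((S.continuous_x.comp_continuousOn hG).sub continuousOn_const)
    ((S.continuous_y.comp_continuousOn hG).sub continuousOn_const)
    (fun u hu => sub_neg.2 (hN' _ ⟨u, hu, rfl⟩)) (fun u hu => sub_pos.2 (hN _ ⟨u, hu, rfl⟩))
    (fun t _ => by simpa [(S.isSegment_transversal t).left, S.y_c₀] using (S.y_mem z).1)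
    (fun t _ => by simpa [(S.isSegment_transversal t).right, S.y_c₁] using (S.y_mem z).2)
  rw [← S.eq_of_coord_eq _ _ (sub_eq_zero.1 hx) (sub_eq_zero.1 hy)]
  exact (S.transversal_mem_flatSet_and_time_eq hu).1

end TopologicalStrip

lemma tendsto_atTop_of_bijective {φ : ℝ → ℝ} (hφ : Continuous φ) (hbij : Function.Bijective φ) :
    (Tendsto φ atTop atTop ∧ Tendsto φ atBot atBot) ∨
      (Tendsto (-φ) atTop atTop ∧ Tendsto (-φ) atBot atBot) := by
  rcases hφ.strictMono_of_inj hbij.1 with hmono | hanti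
  · let e := hmono.orderIsoOfSurjective φ hbij.2
    exact .inl ⟨e.tendsto_atTop, e.tendsto_atBot⟩
  · let e := hanti.neg.orderIsoOfSurjective (-φ) (neg_surjective.comp hbij.2)
    exact .inr ⟨e.tendsto_atTop, e.tendsto_atBot⟩

section Homeomorph

variable {X : Type*} [MetricSpace X] {h : ℝ × Icc (0 : ℝ) 1 ≃ₜ X} {c₀ c₁ : ℝ → X}

lemma homeomorph_symm_snd_eq {v : ℝ} {c : ℝ → X}
    (him : range c = h '' {p : ℝ × Icc (0 : ℝ) 1 | (p.2 : ℝ) = v}) (s : ℝ) :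
    ((h.symm (c s)).2 : ℝ) = v := by
  obtain ⟨p, hp, hps⟩ := him ▸ mem_range_self s
  rw [← hps, h.symm_apply_apply]
  exact hp

lemma IsGeodesicLine.bijective_symm_fst (hc₀ : IsGeodesicLine c₀)
    (him₀ : range c₀ = h '' {p : ℝ × Icc (0 : ℝ) 1 | (p.2 : ℝ) = 0}) :
    Function.Bijective fun s => (h.symm (c₀ s)).1 := by
  refine ⟨fun s t hst => ?_, fun r => ?_⟩
  · have hy : (h.symm (c₀ s)).2 = (h.symm (c₀ t)).2 :=
      Subtype.ext ((homeomorph_symm_snd_eq him₀ s).trans (homeomorph_symm_snd_eq him₀ t).symm)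
    have hdist := hc₀ s t
    rw [h.symm.injective (Prod.ext hst hy), dist_self] at hdist
    exact sub_eq_zero.1 (abs_eq_zero.1 hdist.symm)
  · obtain ⟨s, hs⟩ : h (r, 0) ∈ range c₀ := him₀ ▸ ⟨(r, 0), rfl, rfl⟩
    exact ⟨s, by simp only [hs, h.symm_apply_apply]⟩

lemma TopologicalStrip.nonempty_of_tendsto (hPT : Ptolemaic X) (hgeo : GeodesicMetricSpace X)
    (hc₀ : IsGeodesicLine c₀) (hc₁ : IsGeodesicLine c₁) (hpar : ParallelLines c₀ c₁)
    (him₀ : range c₀ = h '' {p : ℝ × Icc (0 : ℝ) 1 | (p.2 : ℝ) = 0})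
    (him₁ : range c₁ = h '' {p : ℝ × Icc (0 : ℝ) 1 | (p.2 : ℝ) = 1})
    (htop : Tendsto (fun s => (h.symm (c₀ s)).1) atTop atTop)
    (hbot : Tendsto (fun s => (h.symm (c₀ s)).1) atBot atBot) :
    Nonempty (TopologicalStrip X) := by
  obtain ⟨a, hbus, hbus'⟩ := IsGeodesicLine.exists_shift_busemann_eq hPT hc₀ hc₁ hpar
  refine ⟨{
    ptolemaic := hPT
    geodesic := hgeo
    x z := (h.symm z).1
    y z := (h.symm z).2
    continuous_x := by fun_prop
    continuous_y := by fun_prop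
    y_mem z := (h.symm z).2.2
    eq_of_coord_eq z w hx hy := h.symm.injective (Prod.ext hx (Subtype.ext hy))
    isCompact_slab R := ?_
    c₀ := c₀
    c₁ := fun s => c₁ (s + a)
    line₀ := hc₀
    line₁ := hc₁.shift a
    y_c₀ := homeomorph_symm_snd_eq him₀
    y_c₁ s := homeomorph_symm_snd_eq him₁ _
    tendsto_atTop := htop
    tendsto_atBot := hbot
    busemann_eq := hbus
    busemann_reverse_eq := hbus' }⟩
  have hslab : {z | |(h.symm z).1| ≤ R} = h.symm ⁻¹' (Icc (-R) R ×ˢ univ) := by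
    ext z
    simp [abs_le]
  rw [hslab, h.symm.isCompact_preimage]
  exact isCompact_Icc.prod isCompact_univ

theorem TopologicalStrip.nonempty_of_homeomorph (hPT : Ptolemaic X)
    (hgeo : GeodesicMetricSpace X) (hc₀ : IsGeodesicLine c₀) (hc₁ : IsGeodesicLine c₁)
    (hpar : ParallelLines c₀ c₁)
    (him₀ : range c₀ = h '' {p : ℝ × Icc (0 : ℝ) 1 | (p.2 : ℝ) = 0})
    (him₁ : range c₁ = h '' {p : ℝ × Icc (0 : ℝ) 1 | (p.2 : ℝ) = 1}) :
    Nonempty (TopologicalStrip X) := by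
  have hcont : Continuous fun s => (h.symm (c₀ s)).1 :=
    continuous_fst.comp (h.symm.continuous.comp hc₀.continuous)
  rcases tendsto_atTop_of_bijective hcont (hc₀.bijective_symm_fst him₀) with
    ⟨htop, hbot⟩ | ⟨htop, hbot⟩
  · exact nonempty_of_tendsto hPT hgeo hc₀ hc₁ hpar him₀ him₁ htop hbot
  · let e : ℝ × Icc (0 : ℝ) 1 ≃ₜ ℝ × Icc (0 : ℝ) 1 :=
      (Homeomorph.neg ℝ).prodCongr (Homeomorph.refl _)
    have him (v : ℝ) : e.trans h '' {p : ℝ × Icc (0 : ℝ) 1 | (p.2 : ℝ) = v} =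
        h '' {p : ℝ × Icc (0 : ℝ) 1 | (p.2 : ℝ) = v} := by
      change (h ∘ e) '' _ = _
      rw [image_comp, e.image_eq_preimage_symm]
      rfl
    exact nonempty_of_tendsto (h := e.trans h) hPT hgeo hc₀ hc₁ hpar (by rw [him, him₀])
      (by rw [him, him₁]) htop hbot

end Homeomorph

/-- A strip in metric coordinates: `T` is the coordinate along the strip and `U` the distance to the
bottom line within a level set of `T`. The value `point t u` is meaningful only for
`0 ≤ u ≤ width t`. -/
structure MetricStrip (X : Type*) [MetricSpace X] where
  ptolemaic : Ptolemaic X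
  T : X → ℝ
  U : X → ℝ
  width : ℝ → ℝ
  point : ℝ → ℝ → X
  width_pos : ∀ t, 0 < width t
  U_mem : ∀ z, U z ∈ Icc 0 (width (T z))
  T_point : ∀ {t u}, u ∈ Icc 0 (width t) → T (point t u) = t
  U_point : ∀ {t u}, u ∈ Icc 0 (width t) → U (point t u) = u
  abs_T_sub_le : ∀ z w, |T z - T w| ≤ dist z w
  dist_of_T_eq : ∀ {z w}, T z = T w → dist z w = |U z - U w|
  dist_bottom : ∀ {z w}, U z = 0 → U w = 0 → dist z w = |T z - T w|
  dist_top : ∀ {z w}, U z = width (T z) → U w = width (T w) → dist z w = |T z - T w|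
  exists_line : ∀ z, ∃ l : ℝ → X, IsGeodesicLine l ∧ (∀ s, T (l s) = s) ∧ l (T z) = z
  exists_isSegment : ∀ z w, ∃ c : ℝ → X, IsSegment z w c ∧
    ∀ s ∈ Icc (0 : ℝ) 1, T (c s) = (1 - s) * T z + s * T w

namespace TopologicalStrip

variable {X : Type*} [MetricSpace X] (S : TopologicalStrip X)

lemma mem_fiber_time (z : X) : z ∈ S.fiber (S.time z) := S.mem_fiber_iff.2 ⟨S.mem_flatSet z, rfl⟩

lemma transversal_div_width_mem_fiber {t u : ℝ} (hu : u ∈ Icc 0 (S.width t)) :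
    S.transversal t (u / S.width t) ∈ S.fiber t :=
  mem_image_of_mem _
    ⟨div_nonneg hu.1 (S.width_pos t).le, (div_le_one (S.width_pos t)).2 hu.2⟩

lemma dist_of_mem_fiber {t : ℝ} {z w : X} (hz : z ∈ S.fiber t) (hw : w ∈ S.fiber t) :
    dist z w = |dist (S.c₀ t) z - dist (S.c₀ t) w| := by
  obtain ⟨⟨u, hu, rfl⟩, ⟨v, hv, rfl⟩⟩ := hz, hw
  have h := S.isSegment_transversal t
  rw [h.dist_eq u hu v hv, h.dist_left hu, h.dist_left hv, ← mul_sub, abs_mul, abs_dist]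

lemma dist_c₀_transversal {t u : ℝ} (hu : u ∈ Icc 0 (S.width t)) :
    dist (S.c₀ t) (S.transversal t (u / S.width t)) = u := by
  rw [(S.isSegment_transversal t).dist_left
    ⟨div_nonneg hu.1 (S.width_pos t).le, (div_le_one (S.width_pos t)).2 hu.2⟩]
  exact mul_div_cancel₀ u (S.width_pos t).ne'

lemma dist_c₀_add_dist_c₁ (z : X) :
    dist (S.c₀ (S.time z)) z + dist z (S.c₁ (S.time z)) = S.width (S.time z) := by
  obtain ⟨u, hu, huz⟩ := S.mem_fiber_time z
  have h := (S.isSegment_transversal (S.time z)).dist_add_dist hu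
  rwa [huz] at h

/-- The metric coordinates of a topological strip. -/
noncomputable def toMetricStrip : MetricStrip X where
  ptolemaic := S.ptolemaic
  T := S.time
  U z := dist (S.c₀ (S.time z)) z
  width := S.width
  point t u := S.transversal t (u / S.width t)
  width_pos := S.width_pos
  U_mem z := ⟨dist_nonneg, by
    linarith [S.dist_c₀_add_dist_c₁ z, @dist_nonneg _ _ z (S.c₁ (S.time z))]⟩
  T_point hu := (S.mem_fiber_iff.1 (S.transversal_div_width_mem_fiber hu)).2
  U_point hu := by
    rw [(S.mem_fiber_iff.1 (S.transversal_div_width_mem_fiber hu)).2, S.dist_c₀_transversal hu]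
  abs_T_sub_le := S.abs_time_sub_le
  dist_of_T_eq {z w} h := by
    rw [← h]
    exact S.dist_of_mem_fiber (S.mem_fiber_time z) (h ▸ S.mem_fiber_time w)
  dist_bottom {z w} hz hw := by rw [← dist_eq_zero.1 hz, ← dist_eq_zero.1 hw, S.line₀,
    S.time_c₀, S.time_c₀]
  dist_top {z w} hz hw := by
    have (v : X) (hv : dist (S.c₀ (S.time v)) v = S.width (S.time v)) : v = S.c₁ (S.time v) :=
      dist_eq_zero.1 (by linarith [S.dist_c₀_add_dist_c₁ v])
    rw [this z hz, this w hw, S.line₁, S.time_c₁, S.time_c₁]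
  exists_line z := by
    obtain ⟨l, hl, hlz, hl_mem⟩ := S.exists_line_mem_fiber (S.mem_flatSet z)
    exact ⟨l, hl, fun s => (S.mem_fiber_iff.1 (hl_mem s)).2, hlz⟩
  exists_isSegment z w := by
    obtain ⟨c, hc⟩ := S.geodesic.exists_isSegment z w
    exact ⟨c, hc, fun s hs =>
      (hc.mem_flatSet_and_time_eq (S.mem_flatSet z) (S.mem_flatSet w) hs).2⟩

end TopologicalStrip

/-! ### Metric strips -/

namespace MetricStrip

variable {X : Type*} [MetricSpace X]

/-- The strip with reversed time. -/
def reverse (S : MetricStrip X) : MetricStrip X where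
  ptolemaic := S.ptolemaic
  T z := -S.T z
  U := S.U
  width t := S.width (-t)
  point t := S.point (-t)
  width_pos t := S.width_pos (-t)
  U_mem z := by simpa using S.U_mem z
  T_point hu := by rw [S.T_point hu, neg_neg]
  U_point hu := S.U_point hu
  abs_T_sub_le z w := by simpa [neg_add_eq_sub, abs_sub_comm] using S.abs_T_sub_le z w
  dist_of_T_eq h := S.dist_of_T_eq (neg_inj.1 h)
  dist_bottom hz hw := by rw [S.dist_bottom hz hw, neg_sub_neg, abs_sub_comm]
  dist_top hz hw := by
    rw [neg_neg] at hz hw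
    rw [S.dist_top hz hw, neg_sub_neg, abs_sub_comm]
  exists_line z := by
    obtain ⟨l, hl, hlT, hlz⟩ := S.exists_line z
    exact ⟨l ∘ Neg.neg, hl.reverse, fun s => by simp [hlT], by simp [hlz]⟩
  exists_isSegment z w := by
    obtain ⟨c, hc, hcT⟩ := S.exists_isSegment z w
    exact ⟨c, hc, fun s hs => by rw [hcT s hs]; ring⟩

/-- The strip with the two boundary lines exchanged. -/
def flip (S : MetricStrip X) : MetricStrip X where
  ptolemaic := S.ptolemaic
  T := S.T
  U z := S.width (S.T z) - S.U z
  width := S.width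
  point t u := S.point t (S.width t - u)
  width_pos := S.width_pos
  U_mem z := ⟨sub_nonneg.2 (S.U_mem z).2, sub_le_self _ (S.U_mem z).1⟩
  T_point hu := S.T_point ⟨sub_nonneg.2 hu.2, sub_le_self _ hu.1⟩
  U_point hu := by
    rw [S.T_point ⟨sub_nonneg.2 hu.2, sub_le_self _ hu.1⟩,
      S.U_point ⟨sub_nonneg.2 hu.2, sub_le_self _ hu.1⟩, sub_sub_cancel]
  abs_T_sub_le := S.abs_T_sub_le
  dist_of_T_eq h := by rw [S.dist_of_T_eq h, h, sub_sub_sub_cancel_left, abs_sub_comm]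
  dist_bottom hz hw := S.dist_top (sub_eq_zero.1 hz).symm (sub_eq_zero.1 hw).symm
  dist_top hz hw := S.dist_bottom (by simpa using hz) (by simpa using hw)
  exists_line := S.exists_line
  exists_isSegment := S.exists_isSegment

variable (S : MetricStrip X)

lemma ext_coord {z w : X} (hT : S.T z = S.T w) (hU : S.U z = S.U w) : z = w :=
  dist_eq_zero.1 (by rw [S.dist_of_T_eq hT, hU, sub_self, abs_zero])

lemma point_T_U (z : X) : S.point (S.T z) (S.U z) = z :=
  S.ext_coord (S.T_point (S.U_mem z)) (S.U_point (S.U_mem z))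

lemma zero_mem (t : ℝ) : (0 : ℝ) ∈ Icc 0 (S.width t) := ⟨le_rfl, (S.width_pos t).le⟩

lemma width_mem (t : ℝ) : S.width t ∈ Icc 0 (S.width t) := ⟨(S.width_pos t).le, le_rfl⟩

lemma abs_width_sub_le (t t' : ℝ) : |S.width t - S.width t'| ≤ 2 * |t - t'| := by
  have hwidth (t : ℝ) : dist (S.point t 0) (S.point t (S.width t)) = S.width t := by
    rw [S.dist_of_T_eq (by rw [S.T_point (S.zero_mem t), S.T_point (S.width_mem t)]),
      S.U_point (S.zero_mem t), S.U_point (S.width_mem t), zero_sub, abs_neg,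
      abs_of_pos (S.width_pos t)]
  have hbottom : dist (S.point t 0) (S.point t' 0) = |t - t'| := by
    rw [S.dist_bottom (S.U_point (S.zero_mem t)) (S.U_point (S.zero_mem t')),
      S.T_point (S.zero_mem t), S.T_point (S.zero_mem t')]
  have htop : dist (S.point t (S.width t)) (S.point t' (S.width t')) = |t - t'| := by
    have := S.T_point (S.width_mem t)
    have := S.T_point (S.width_mem t')
    rw [S.dist_top (by simp [*, S.U_point (S.width_mem _)])
      (by simp [*, S.U_point (S.width_mem _)])]
    simp [*]
  have h := dist_dist_dist_le (S.point t 0) (S.point t (S.width t)) (S.point t' 0)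
    (S.point t' (S.width t'))
  rw [hwidth, hwidth, hbottom, htop, Real.dist_eq] at h
  linarith

lemma abs_U_sub_le_add (z w : X) : |S.U z - S.U w| ≤ dist z w + |S.T z - S.T w| := by
  have hU (z : X) : dist z (S.point (S.T z) 0) = S.U z := by
    rw [S.dist_of_T_eq (S.T_point (S.zero_mem _)).symm, S.U_point (S.zero_mem _), sub_zero,
      abs_of_nonneg (S.U_mem z).1]
  have h := dist_dist_dist_le z (S.point (S.T z) 0) w (S.point (S.T w) 0)
  rwa [hU, hU, Real.dist_eq, S.dist_bottom (S.U_point (S.zero_mem _)) (S.U_point (S.zero_mem _)),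
    S.T_point (S.zero_mem _), S.T_point (S.zero_mem _)] at h

lemma abs_U_sub_le (z w : X) : |S.U z - S.U w| ≤ 2 * dist z w := by
  linarith [S.abs_U_sub_le_add z w, S.abs_T_sub_le z w]

lemma continuous_width : Continuous S.width :=
  (LipschitzWith.of_dist_le_mul (K := 2) fun t t' => S.abs_width_sub_le t t').continuous

lemma continuous_T : Continuous S.T :=
  (LipschitzWith.mk_one fun z w => S.abs_T_sub_le z w).continuous

lemma continuous_U : Continuous S.U :=
  (LipschitzWith.of_dist_le_mul (K := 2) fun z w => S.abs_U_sub_le z w).continuous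

/-- A geodesic line parametrised by the coordinate `T`. -/
structure IsTimeLine (l : ℝ → X) : Prop where
  isGeodesicLine : IsGeodesicLine l
  T_eq : ∀ s, S.T (l s) = s

lemma exists_isTimeLine (z : X) : ∃ l, S.IsTimeLine l ∧ l (S.T z) = z := by
  obtain ⟨l, hl, hlT, hlz⟩ := S.exists_line z
  exact ⟨l, ⟨hl, hlT⟩, hlz⟩

lemma dist_le (z w : X) : dist z w ≤ 3 * |S.T z - S.T w| + |S.U z - S.U w| := by
  obtain ⟨l, hl, hlz⟩ := S.exists_isTimeLine z
  have hzl : dist z (l (S.T w)) = |S.T z - S.T w| := by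
    rw [← hl.isGeodesicLine, hlz]
  have hlw := S.dist_of_T_eq (hl.T_eq (S.T w))
  have hU := S.abs_U_sub_le z (l (S.T w))
  rw [abs_sub_comm] at hU
  linarith [dist_triangle z (l (S.T w)) w, abs_sub_le (S.U (l (S.T w))) (S.U z) (S.U w)]

/-- The points off the two boundary lines. -/
def Interior (z : X) : Prop := S.U z ∈ Ioo 0 (S.width (S.T z))

variable {S} {l : ℝ → X}

lemma IsTimeLine.continuous (hl : S.IsTimeLine l) : Continuous l := hl.isGeodesicLine.continuous

lemma IsTimeLine.reverse (hl : S.IsTimeLine l) : S.reverse.IsTimeLine (l ∘ Neg.neg) :=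
  ⟨hl.isGeodesicLine.reverse, fun s => by simp [MetricStrip.reverse, hl.T_eq]⟩

lemma IsTimeLine.flip (hl : S.IsTimeLine l) : S.flip.IsTimeLine l :=
  ⟨hl.isGeodesicLine, hl.T_eq⟩

lemma Interior.reverse {z : X} (hz : S.Interior z) : S.reverse.Interior z := by
  simpa [Interior, MetricStrip.reverse] using hz

lemma Interior.flip {z : X} (hz : S.Interior z) : S.flip.Interior z :=
  ⟨sub_pos.2 hz.2, sub_lt_self _ hz.1⟩

end MetricStrip

/-! ### Ptolemaic seminorms -/

/-- A seminorm whose distance `N (p - q)` satisfies the Ptolemy inequality. -/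
def PtolemaicSeminorm {E : Type*} [AddCommGroup E] [Module ℝ E] (N : Seminorm ℝ E) : Prop :=
  ∀ p q r s : E, N (p - q) * N (r - s) ≤ N (p - r) * N (q - s) + N (p - s) * N (q - r)

namespace PtolemaicSeminorm

variable {E : Type*} [AddCommGroup E] [Module ℝ E] {N : Seminorm ℝ E} {x y : E}

lemma map_add_mul_map_sub_le (hN : PtolemaicSeminorm N) (p q : E) :
    N (p + q) * N (p - q) ≤ N p ^ 2 + N q ^ 2 := by
  have h := hN (p + q) 0 p q
  simp only [sub_zero, add_sub_cancel_left, add_sub_cancel_right, zero_sub, map_neg_eq_map] at h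
  linarith

lemma sq_map_add_smul_le_three (hN : PtolemaicSeminorm N) (hx : N x = 1) (hy : N y = 1)
    (hge : ∀ t : ℝ, 1 ≤ N (x + t • y)) (t : ℝ) : N (x + t • y) ^ 2 ≤ 1 + 3 * t ^ 2 := by
  have hty : N (t • y) = |t| := by rw [map_smul_eq_mul, hy, mul_one, Real.norm_eq_abs]
  rcases le_total |t| 1 with ht | ht
  · have h := hN.map_add_mul_map_sub_le x (t • y)
    have h1 := hge (-t)
    rw [neg_smul, ← sub_eq_add_neg] at h1
    rw [hx, hty, one_pow] at h
    have hle : N (x + t • y) ≤ 1 + |t| ^ 2 := (le_mul_of_one_le_right (apply_nonneg N _) h1).trans h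
    have hsq := pow_le_pow_left₀ (apply_nonneg N _) hle 2
    rw [← sq_abs t]
    nlinarith [sq_nonneg |t|, mul_le_of_le_one_right (sq_nonneg |t|) (pow_le_one₀ (n := 2)
      (abs_nonneg t) ht)]
  · have hle := map_add_le_add N x (t • y)
    rw [hx, hty] at hle
    rw [← sq_abs t]
    nlinarith [hge t]

lemma _root_.sq_seminorm_smul_add_smul_le {c : ℝ} (hc : 1 ≤ c) (hy : N y = 1)
    (h : ∀ t : ℝ, N (x + t • y) ^ 2 ≤ 1 + c * t ^ 2) (a b : ℝ) :
    N (a • x + b • y) ^ 2 ≤ a ^ 2 + c * b ^ 2 := by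
  rcases eq_or_ne a 0 with rfl | ha
  · rw [zero_smul, zero_add, map_smul_eq_mul, hy, mul_one, Real.norm_eq_abs, sq_abs]
    nlinarith [sq_nonneg b]
  · have hab : a • x + b • y = a • (x + (b / a) • y) := by
      rw [smul_add, smul_smul, mul_div_cancel₀ b ha]
    rw [hab, map_smul_eq_mul, mul_pow, Real.norm_eq_abs, sq_abs]
    calc a ^ 2 * N (x + (b / a) • y) ^ 2 ≤ a ^ 2 * (1 + c * (b / a) ^ 2) := by gcongr; exact h _
      _ = a ^ 2 + c * b ^ 2 := by field_simp

/-- Ptolemy's inequality for `x`, `v = x + t • y`, `-q • x` and `-q⁻¹ • v`. For the Euclidean norm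
and `c = 1` these four points are concyclic, so no information is lost as `c` decreases to `1`. -/
lemma ptolemy_concyclic (hN : PtolemaicSeminorm N) {c : ℝ} (hc : 1 ≤ c) (hx : N x = 1)
    (hy : N y = 1) (h : ∀ t : ℝ, N (x + t • y) ^ 2 ≤ 1 + c * t ^ 2) {t q : ℝ} (hq : 0 < q)
    (hqt : q ^ 2 = 1 + c * t ^ 2) :
    (1 + q) ^ 2 * N (x + t • y) ≤ q * (√c * t ^ 2 + 2 * (q + 1)) := by
  have hsq := sq_seminorm_smul_add_smul_le hc hy h
  have hsmul (r : ℝ) (hr : 0 ≤ r) (z : E) : N (r • z) = r * N z := by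
    rw [map_smul_eq_mul, Real.norm_eq_abs, abs_of_nonneg hr]
  have hside₁ : N ((1 - q ^ 2) • x + t • y) ≤ q * (√c * |t|) := by
    refine abs_le_of_sq_le_sq' ((hsq _ _).trans_eq ?_) (by positivity) |>.2
    rw [mul_pow, mul_pow, Real.sq_sqrt (by linarith), sq_abs, hqt]
    ring
  have hside₂ : N ((1 + q) • x + t • y) ^ 2 ≤ q * (2 * (q + 1)) :=
    (hsq _ _).trans_eq (by linear_combination -hqt)
  have hpt := hN x ((-q) • x) (x + t • y) (-q⁻¹ • (x + t • y))
  have e₁ : x - (-q) • x = (1 + q) • x := by module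
  have e₂ : x + t • y - -q⁻¹ • (x + t • y) = (1 + q⁻¹) • (x + t • y) := by module
  have e₃ : x - (x + t • y) = -(t • y) := by module
  have e₄ : (-q) • x - -q⁻¹ • (x + t • y) = q⁻¹ • ((1 - q ^ 2) • x + t • y) := by
    match_scalars <;> field_simp
    ring
  have e₅ : x - -q⁻¹ • (x + t • y) = q⁻¹ • ((1 + q) • x + t • y) := by
    match_scalars <;> field_simp
    ring
  have e₆ : (-q) • x - (x + t • y) = -((1 + q) • x + t • y) := by module
  rw [e₁, e₂, e₃, e₄, e₅, e₆, map_neg_eq_map, map_neg_eq_map, hsmul (1 + q) (by positivity),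
    hsmul (1 + q⁻¹) (by positivity), hsmul q⁻¹ (by positivity), hsmul q⁻¹ (by positivity),
    map_smul_eq_mul, hx, hy, mul_one, mul_one, Real.norm_eq_abs] at hpt
  have hmul := mul_le_mul_of_nonneg_left hpt (sq_nonneg q)
  have hside₁' := mul_le_mul_of_nonneg_left hside₁ (by positivity : 0 ≤ q * |t|)
  have hside₂' := mul_le_mul_of_nonneg_left hside₂ hq.le
  refine le_of_mul_le_mul_left ?_ hq
  calc q * ((1 + q) ^ 2 * N (x + t • y))
      = q ^ 2 * ((1 + q) * ((1 + q⁻¹) * N (x + t • y))) := by field_simp; ring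
    _ ≤ q * |t| * N ((1 - q ^ 2) • x + t • y) + q * N ((1 + q) • x + t • y) ^ 2 := by
        refine hmul.trans_eq ?_
        field_simp
    _ ≤ q * |t| * (q * (√c * |t|)) + q * (q * (2 * (q + 1))) := add_le_add hside₁' hside₂'
    _ = q * (q * (√c * t ^ 2 + 2 * (q + 1))) := by rw [← sq_abs t]; ring

lemma sq_map_add_smul_le_improve (hN : PtolemaicSeminorm N) {c : ℝ} (hc : 1 ≤ c) (hx : N x = 1)
    (hy : N y = 1) (hge : ∀ t : ℝ, 1 ≤ N (x + t • y))
    (h : ∀ t : ℝ, N (x + t • y) ^ 2 ≤ 1 + c * t ^ 2) (t : ℝ) :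
    N (x + t • y) ^ 2 ≤ 1 + (c + √c) / 2 * t ^ 2 := by
  have hqt : √(1 + c * t ^ 2) ^ 2 = 1 + c * t ^ 2 := Real.sq_sqrt (by positivity)
  set q := √(1 + c * t ^ 2)
  have hq : 1 ≤ q := Real.one_le_sqrt.2 (le_add_of_nonneg_right (by positivity))
  have hpt := hN.ptolemy_concyclic hc hx hy h (zero_lt_one.trans_le hq) hqt
  have hG := hge t
  have hGq : N (x + t • y) ≤ q := abs_le_of_sq_le_sq' (hqt ▸ h t) (by linarith) |>.2
  set G := N (x + t • y)
  have hle : q * ((c - √c) * t ^ 2) ≤ (1 + q) ^ 2 * (q - G) := by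
    linear_combination hpt - q * hqt
  have hfactor : (1 + q) ^ 2 * (q - G) ≤ 2 * q * (q ^ 2 - G ^ 2) := by
    have : (1 + q) ^ 2 ≤ 2 * q * (q + G) := by nlinarith
    nlinarith [mul_le_mul_of_nonneg_right this (sub_nonneg.2 hGq)]
  have := le_of_mul_le_mul_left ((hle.trans hfactor).trans_eq (by ring))
    (zero_lt_one.trans_le hq) (c := 2 * (q ^ 2 - G ^ 2))
  linear_combination this / 2 + hqt

lemma sq_map_add_smul_le (hN : PtolemaicSeminorm N) (hx : N x = 1) (hy : N y = 1)
    (hge : ∀ t : ℝ, 1 ≤ N (x + t • y)) (t : ℝ) : N (x + t • y) ^ 2 ≤ 1 + t ^ 2 := by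
  let A : Set ℝ := {c | 1 ≤ c ∧ ∀ t : ℝ, N (x + t • y) ^ 2 ≤ 1 + c * t ^ 2}
  have hclosed : IsClosed A := by
    simp only [A, ofPred_and, ofPred_forall]
    exact (isClosed_le (by fun_prop) (by fun_prop)).inter
      (isClosed_iInter fun t => isClosed_le (by fun_prop) (by fun_prop))
  have hbdd : BddBelow A := ⟨1, fun c hc => hc.1⟩
  obtain ⟨hc, h⟩ := hclosed.csInf_mem
    ⟨3, by norm_num, hN.sq_map_add_smul_le_three hx hy hge⟩ hbdd
  set c := sInf A
  have hsqrt : 1 ≤ √c := Real.one_le_sqrt.2 hc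
  have himprove : c ≤ (c + √c) / 2 := csInf_le hbdd
    ⟨by linarith, hN.sq_map_add_smul_le_improve hc hx hy hge h⟩
  have hc1 : c = 1 := by nlinarith [Real.sq_sqrt (zero_le_one.trans hc)]
  simpa [hc1] using h t

/-- Ptolemy's inequality for `a² • x`, `-ab • y`, `-b² • x`, `ab • y`, which are concyclic for the
Euclidean norm. -/
lemma sqrt_le_map_smul_add_smul (hN : PtolemaicSeminorm N) (hx : N x = 1) (hy : N y = 1)
    (h : ∀ a b : ℝ, N (a • x + b • y) ≤ √(a ^ 2 + b ^ 2)) (a b : ℝ) :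
    √(a ^ 2 + b ^ 2) ≤ N (a • x + b • y) := by
  have hsmul (r : ℝ) (z : E) : N (r • z) = |r| * N z := by
    rw [map_smul_eq_mul, Real.norm_eq_abs]
  rcases eq_or_ne a 0 with rfl | ha
  · simp [hsmul, hy, Real.sqrt_sq_eq_abs]
  rcases eq_or_ne b 0 with rfl | hb
  · simp [hsmul, hx, Real.sqrt_sq_eq_abs]
  have hn : 0 < √(a ^ 2 + b ^ 2) := Real.sqrt_pos.2 (by positivity)
  have hn2 : √(a ^ 2 + b ^ 2) ^ 2 = a ^ 2 + b ^ 2 := Real.sq_sqrt (by positivity)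
  have hpt := hN (a ^ 2 • x) (-b ^ 2 • x) (-(a * b) • y) ((a * b) • y)
  have e₁ : a ^ 2 • x - -b ^ 2 • x = (a ^ 2 + b ^ 2) • x := by module
  have e₂ : -(a * b) • y - (a * b) • y = (-2 * (a * b)) • y := by module
  have e₃ : a ^ 2 • x - -(a * b) • y = a • (a • x + b • y) := by module
  have e₄ : -b ^ 2 • x - (a * b) • y = -b • (b • x + a • y) := by module
  have e₅ : a ^ 2 • x - (a * b) • y = a • (a • x + (-b) • y) := by module
  have e₆ : -b ^ 2 • x - -(a * b) • y = -b • (b • x + (-a) • y) := by module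
  rw [e₁, e₂, e₃, e₄, e₅, e₆, hsmul, hsmul, hsmul, hsmul, hsmul, hsmul, hx, hy, ← hn2,
    abs_of_pos (pow_pos hn 2), abs_mul, abs_mul, abs_neg, abs_neg, abs_two] at hpt
  have h₁ := h b a
  have h₂ := h a (-b)
  have h₃ := h b (-a)
  rw [add_comm (b ^ 2)] at h₁
  rw [neg_sq] at h₂
  rw [neg_sq, add_comm (b ^ 2)] at h₃
  set n := √(a ^ 2 + b ^ 2)
  have hab : 0 < |a| * |b| * n := by positivity
  refine le_of_mul_le_mul_left ?_ hab
  have h₁' := mul_le_mul_of_nonneg_left h₁ (by positivity : 0 ≤ |a| * |b| * N (a • x + b • y))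
  have h₂₃ := mul_le_mul h₂ h₃ (apply_nonneg N _) hn.le
  have h₂₃' := mul_le_mul_of_nonneg_left h₂₃ (by positivity : 0 ≤ |a| * |b|)
  linarith

theorem map_smul_add_smul (hN : PtolemaicSeminorm N) (hx : N x = 1) (hy : N y = 1)
    (hge : ∀ t : ℝ, 1 ≤ N (x + t • y)) (a b : ℝ) :
    N (a • x + b • y) = √(a ^ 2 + b ^ 2) := by
  have hle (a b : ℝ) : N (a • x + b • y) ≤ √(a ^ 2 + b ^ 2) := by
    refine Real.le_sqrt_of_sq_le ?_
    simpa using sq_seminorm_smul_add_smul_le le_rfl hy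
      (fun t => by simpa using hN.sq_map_add_smul_le hx hy hge t) a b
  exact (hle a b).antisymm (hN.sqrt_le_map_smul_add_smul hx hy hle a b)

end PtolemaicSeminorm

/-! ### Ptolemaic planes -/

lemma dist_add_eq_dist_add {E Y : Type*} [AddCommGroup E] [Module ℝ E] [MetricSpace Y] {P : E → Y}
    (hbdd : ∀ v, ∃ C, ∀ p, dist (P p) (P (p + v)) ≤ C)
    (hseg : ∀ p v, ∀ s ∈ Icc (0 : ℝ) 1, dist (P p) (P (p + s • v)) = s * dist (P p) (P (p + v)))
    (p q v : E) : dist (P p) (P (p + v)) = dist (P q) (P (q + v)) := by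
  obtain ⟨C, hC⟩ := hbdd (q - p)
  have hscale (p : E) (r : ℝ) (hr : 1 ≤ r) :
      dist (P p) (P (p + r • v)) = r * dist (P p) (P (p + v)) := by
    have hr0 : 0 < r := zero_lt_one.trans_le hr
    have h := hseg p (r • v) r⁻¹ ⟨by positivity, inv_le_one_of_one_le₀ hr⟩
    rw [inv_smul_smul₀ hr0.ne'] at h
    rw [h, mul_inv_cancel_left₀ hr0.ne']
  have hclose (r : ℝ) (hr : 1 ≤ r) :
      r * |dist (P p) (P (p + v)) - dist (P q) (P (q + v))| ≤ 2 * C := by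
    have h := dist_dist_dist_le (P p) (P (p + r • v)) (P q) (P (q + r • v))
    rw [hscale p r hr, hscale q r hr, Real.dist_eq, ← mul_sub, abs_mul,
      abs_of_nonneg (zero_le_one.trans hr)] at h
    have h₁ := hC p
    have h₂ := hC (p + r • v)
    rw [add_sub_cancel] at h₁
    rw [show p + r • v + (q - p) = q + r • v by abel] at h₂
    linarith
  by_contra hne
  obtain ⟨r, hr, hr'⟩ := ((eventually_ge_atTop 1).and ((tendsto_id.atTop_mul_const
    (abs_pos.2 (sub_ne_zero.2 hne))).eventually_gt_atTop (2 * C))).exists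
  exact (hclose r hr).not_gt hr'

lemma exists_seminorm_dist_eq {E Y : Type*} [AddCommGroup E] [Module ℝ E] [MetricSpace Y]
    {P : E → Y} (hbdd : ∀ v, ∃ C, ∀ p, dist (P p) (P (p + v)) ≤ C)
    (hseg : ∀ p v, ∀ s ∈ Icc (0 : ℝ) 1, dist (P p) (P (p + s • v)) = s * dist (P p) (P (p + v))) :
    ∃ N : Seminorm ℝ E, ∀ p q, dist (P p) (P q) = N (p - q) := by
  have htrans (p v : E) : dist (P p) (P (p + v)) = dist (P 0) (P v) := by
    simpa using dist_add_eq_dist_add hbdd hseg p 0 v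
  have hneg (v : E) : dist (P 0) (P (-v)) = dist (P 0) (P v) := by
    simpa [dist_comm] using (htrans v (-v)).symm
  have hle_one (r : ℝ) (hr : r ∈ Icc (0 : ℝ) 1) (v : E) :
      dist (P 0) (P (r • v)) = r * dist (P 0) (P v) := by simpa using hseg 0 v r hr
  have hnonneg (r : ℝ) (hr : 0 ≤ r) (v : E) :
      dist (P 0) (P (r • v)) = r * dist (P 0) (P v) := by
    rcases le_total r 1 with hr1 | hr1
    · exact hle_one r ⟨hr, hr1⟩ v
    · have hr0 : 0 < r := zero_lt_one.trans_le hr1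
      have h := hle_one r⁻¹ ⟨by positivity, inv_le_one_of_one_le₀ hr1⟩ (r • v)
      rw [inv_smul_smul₀ hr0.ne'] at h
      rw [h, mul_inv_cancel_left₀ hr0.ne']
  refine ⟨Seminorm.of (fun v => dist (P 0) (P v)) (fun v w => ?_) (fun r v => ?_), fun p q => ?_⟩
  · rw [← htrans v w]
    exact dist_triangle _ _ _
  · rcases le_total 0 r with hr | hr
    · rw [hnonneg r hr, Real.norm_of_nonneg hr]
    · rw [← hneg, ← neg_smul, hnonneg _ (neg_nonneg.2 hr), Real.norm_of_nonpos hr]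
  · rw [dist_comm]
    change dist (P q) (P p) = dist (P 0) (P (p - q))
    simpa using htrans q (p - q)

/-- A parametrisation of a metric space by the plane in which vertical lines and the horizontal axis
are geodesic lines and in which points are joined by segments affine in the first coordinate; the
notion is the outcome of rescaling a strip at an interior point. -/
structure PlaneChart {Y : Type*} [MetricSpace Y] (P : ℝ × ℝ → Y) : Prop where
  dist_vertical : ∀ t u u', dist (P (t, u)) (P (t, u')) = |u - u'|
  dist_axis : ∀ t t', dist (P (t, 0)) (P (t', 0)) = |t - t'|
  abs_sub_le : ∀ p q, |p.1 - q.1| ≤ dist (P p) (P q)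
  exists_dist_le : ∃ K, ∀ p q, dist (P p) (P q) ≤ K * |p.1 - q.1| + |p.2 - q.2|
  exists_mem_segment : ∀ p q, ∀ s ∈ Icc (0 : ℝ) 1, ∃ m : ℝ × ℝ, m.1 = (1 - s) * p.1 + s * q.1 ∧
    dist (P p) (P m) = s * dist (P p) (P q) ∧ dist (P m) (P q) = (1 - s) * dist (P p) (P q)

namespace PlaneChart

variable {Y : Type*} [MetricSpace Y] {P : ℝ × ℝ → Y}

lemma isGeodesicLine_vertical (hP : PlaneChart P) (t : ℝ) : IsGeodesicLine fun u => P (t, u) :=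
  hP.dist_vertical t

lemma injective (hP : PlaneChart P) : Function.Injective P := by
  rintro ⟨t, u⟩ ⟨t', u'⟩ h
  have ht := hP.abs_sub_le (t, u) (t', u')
  rw [h, dist_self] at ht
  obtain rfl : t = t' := sub_eq_zero.1 (abs_nonpos_iff.1 ht)
  have hu := hP.dist_vertical t u u'
  rw [h, dist_self] at hu
  rw [sub_eq_zero.1 (abs_eq_zero.1 hu.symm)]

lemma parallelLines_vertical (hP : PlaneChart P) (t t' : ℝ) :
    ParallelLines (fun u => P (t, u)) (fun u => P (t', u)) := by
  obtain ⟨K, hK⟩ := hP.exists_dist_le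
  have hbound (u : ℝ) : dist (P (t, u)) (P (t', u)) / |u| ≤ K * |t - t'| / |u| := by
    gcongr
    simpa using hK (t, u) (t', u)
  exact ⟨squeeze_zero (fun u => by positivity) hbound (tendsto_abs_atTop_atTop.const_div_atTop _),
    squeeze_zero (fun u => by positivity) hbound (tendsto_abs_atBot_atTop.const_div_atTop _)⟩

/-- The vertical lines are parallel, so that up to constants they share their Busemann functions. -/
lemma exists_busemann_eq (hPT : Ptolemaic Y) (hP : PlaneChart P) : ∃ κ : ℝ → ℝ, ∀ t u,
    busemann (fun u => P (0, u)) (P (t, u)) = κ t - u ∧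
      busemann ((fun u => P (0, u)) ∘ Neg.neg) (P (t, u)) = u - κ t := by
  choose κ hκ hκ' using fun t => (hP.isGeodesicLine_vertical 0).exists_shift_busemann_eq hPT
    (hP.isGeodesicLine_vertical t) (hP.parallelLines_vertical 0 t)
  refine ⟨κ, fun t u => ?_⟩
  have hline := (hP.isGeodesicLine_vertical t).shift (κ t)
  have hplus := hline.busemann_apply (u - κ t)
  have hminus := hline.busemann_reverse_apply (u - κ t)
  rw [sub_add_cancel] at hplus hminus
  rw [← hκ t, ← hκ' t, hplus, hminus]
  exact ⟨neg_sub u _, rfl⟩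

/-- Two convex functions with sum zero are affine. -/
lemma exists_affine (hPT : Ptolemaic Y) (hP : PlaneChart P) :
    ∃ κ : ℝ → ℝ, ∀ {p q m : ℝ × ℝ} {s : ℝ}, dist (P p) (P m) = s * dist (P p) (P q) →
      dist (P m) (P q) = (1 - s) * dist (P p) (P q) →
        κ m.1 - m.2 = (1 - s) * (κ p.1 - p.2) + s * (κ q.1 - q.2) := by
  obtain ⟨κ, hκ⟩ := hP.exists_busemann_eq hPT
  refine ⟨κ, fun {p q m s} hpm hmq => ?_⟩
  rcases (dist_nonneg : 0 ≤ dist (P p) (P q)).eq_or_lt with h0 | hpos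
  · rw [← h0, mul_zero, dist_eq_zero] at hpm hmq
    rw [hP.injective hpm, ← hP.injective hmq]
    ring
  · have hsum : dist (P p) (P m) + dist (P m) (P q) = dist (P p) (P q) := by rw [hpm, hmq]; ring
    have hline := hP.isGeodesicLine_vertical 0
    have hplus := hline.busemann_convex hPT hsum
    have hminus := hline.reverse.busemann_convex hPT hsum
    rw [(hκ _ _).1, (hκ _ _).1, (hκ _ _).1, hpm, hmq] at hplus
    rw [(hκ _ _).2, (hκ _ _).2, (hκ _ _).2, hpm, hmq] at hminus
    exact mul_left_cancel₀ hpos.ne' (by linarith)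

lemma dist_add_smul (hPT : Ptolemaic Y) (hP : PlaneChart P) (p v : ℝ × ℝ) {s : ℝ}
    (hs : s ∈ Icc (0 : ℝ) 1) : dist (P p) (P (p + s • v)) = s * dist (P p) (P (p + v)) := by
  obtain ⟨κ, hκ⟩ := hP.exists_affine hPT
  obtain ⟨m, hm, hpm, hmq⟩ := hP.exists_mem_segment p (p + v) s hs
  have haxis : κ ((1 - s) * p.1 + s * (p + v).1) = (1 - s) * κ p.1 + s * κ (p + v).1 := by
    have h₀ := sub_nonneg.2 hs.2
    have h := hκ (p := (p.1, 0)) (q := ((p + v).1, 0))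
      (m := ((1 - s) * p.1 + s * (p + v).1, 0)) (s := s)
      (by rw [hP.dist_axis, hP.dist_axis, ← abs_of_nonneg hs.1, ← abs_mul, abs_of_nonneg hs.1]
          ring_nf)
      (by rw [hP.dist_axis, hP.dist_axis, ← abs_of_nonneg h₀, ← abs_mul, abs_of_nonneg h₀]
          ring_nf)
    simpa using h
  have hm_eq : m = p + s • v := by
    have h := hκ hpm hmq
    rw [hm, haxis] at h
    ext
    · simp [hm]
      ring
    · simp only [Prod.snd_add, Prod.smul_snd, smul_eq_mul] at h ⊢
      linarith
  rw [← hm_eq, hpm]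

theorem dist_eq (hPT : Ptolemaic Y) (hP : PlaneChart P) (p q : ℝ × ℝ) :
    dist (P p) (P q) = √((p.1 - q.1) ^ 2 + (p.2 - q.2) ^ 2) := by
  obtain ⟨K, hK⟩ := hP.exists_dist_le
  obtain ⟨N, hN⟩ := exists_seminorm_dist_eq (P := P)
    (fun v => ⟨K * |v.1| + |v.2|, fun p => by simpa using hK p (p + v)⟩)
    (fun p v s hs => hP.dist_add_smul hPT p v hs)
  have hN_ptolemaic : PtolemaicSeminorm N := fun p q r s => by
    simpa only [hN] using hPT (P p) (P q) (P r) (P s)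
  have hx : N (1, 0) = 1 := by simpa [hP.dist_axis] using (hN (1, 0) (0, 0)).symm
  have hy : N (0, 1) = 1 := by simpa [hP.dist_vertical] using (hN (0, 1) (0, 0)).symm
  have hge (t : ℝ) : 1 ≤ N ((1, 0) + t • (0, 1)) := by
    simpa [hN] using hP.abs_sub_le (1, t) (0, 0)
  rw [hN, show p - q = (p.1 - q.1, p.2 - q.2) from rfl]
  simpa using hN_ptolemaic.map_smul_add_smul hx hy hge (p.1 - q.1) (p.2 - q.2)

end PlaneChart

/-! ### Rescaling limits -/

universe u

lemma exists_tendsto_of_eventually_abs_le {ι : Type*} {ℱ : Ultrafilter ι} {f : ι → ℝ} {C : ℝ}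
    (hf : ∀ᶠ i in ℱ, |f i| ≤ C) : ∃ L, Tendsto f ℱ (𝓝 L) := by
  obtain ⟨L, -, hL⟩ := (isCompact_Icc (a := -C) (b := C)).ultrafilter_le_nhds (ℱ.map f)
    (le_principal_iff.2 (hf.mono fun _ => abs_le.1))
  exact ⟨L, hL⟩

/-- The limit distance is a pseudometric on the index type; pass to its separation quotient. -/
lemma Ptolemaic.exists_rescaling_limit {X : Type*} {ι : Type u} [MetricSpace X] (hPT : Ptolemaic X)
    {ℱ : Ultrafilter ℝ} (hℱ : ∀ᶠ h : ℝ in (ℱ : Filter ℝ), 0 < h) {z : ℝ → ι → X}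
    (hz : ∀ i j, ∃ C, ∀ᶠ h in ℱ, dist (z h i) (z h j) ≤ C * h) :
    ∃ (Y : Type u) (_ : MetricSpace Y) (P : ι → Y), Ptolemaic Y ∧
      ∀ i j, Tendsto (fun h => dist (z h i) (z h j) / h) ℱ (𝓝 (dist (P i) (P j))) := by
  have hlim (i j : ι) : ∃ L, Tendsto (fun h => dist (z h i) (z h j) / h) ℱ (𝓝 L) := by
    obtain ⟨C, hC⟩ := hz i j
    refine exists_tendsto_of_eventually_abs_le (C := C) ?_
    filter_upwards [hC, hℱ] with h hh hpos
    rwa [abs_of_nonneg (by positivity), div_le_iff₀ hpos]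
  choose D hD using hlim
  let : PseudoMetricSpace ι :=
    { dist := D
      dist_self := fun i => tendsto_nhds_unique (hD i i) (by simp)
      dist_comm := fun i j => tendsto_nhds_unique (hD i j) (by simpa only [dist_comm] using hD j i)
      dist_triangle := fun i j k => by
        refine le_of_tendsto_of_tendsto (hD i k) ((hD i j).add (hD j k)) ?_
        filter_upwards [hℱ] with h hpos
        rw [← add_div]
        gcongr
        exact dist_triangle _ _ _ }
  refine ⟨SeparationQuotient ι, inferInstance, SeparationQuotient.mk, ?_, fun i j => ?_⟩
  · intro a b c d
    obtain ⟨i, rfl⟩ := SeparationQuotient.surjective_mk a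
    obtain ⟨j, rfl⟩ := SeparationQuotient.surjective_mk b
    obtain ⟨k, rfl⟩ := SeparationQuotient.surjective_mk c
    obtain ⟨l, rfl⟩ := SeparationQuotient.surjective_mk d
    simp only [SeparationQuotient.dist_mk]
    refine le_of_tendsto_of_tendsto' ((hD i j).mul (hD k l))
      (((hD i k).mul (hD j l)).add ((hD i l).mul (hD j k))) fun h => ?_
    rw [div_mul_div_comm, div_mul_div_comm, div_mul_div_comm, ← add_div]
    exact div_le_div_of_nonneg_right (hPT _ _ _ _) (mul_self_nonneg h)
  · rw [SeparationQuotient.dist_mk]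
    exact hD i j

namespace MetricStrip

variable {X : Type*} [MetricSpace X] (S : MetricStrip X)

/-- The height of a point above a time line `σ`. -/
def height (σ : ℝ → X) (z : X) : ℝ := S.U z - S.U (σ (S.T z))

/-- The point at time `p.1` and height `p.2` above a time line `σ`, meaningful only if this height
stays within the strip. -/
def offset (σ : ℝ → X) (p : ℝ × ℝ) : X := S.point p.1 (S.U (σ p.1) + p.2)

variable {S} {σ : ℝ → X} {s : ℝ}

lemma T_offset {p : ℝ × ℝ} (hp : S.U (σ p.1) + p.2 ∈ Icc 0 (S.width p.1)) :
    S.T (S.offset σ p) = p.1 := S.T_point hp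

lemma U_offset {p : ℝ × ℝ} (hp : S.U (σ p.1) + p.2 ∈ Icc 0 (S.width p.1)) :
    S.U (S.offset σ p) = S.U (σ p.1) + p.2 := S.U_point hp

lemma height_offset {p : ℝ × ℝ} (hp : S.U (σ p.1) + p.2 ∈ Icc 0 (S.width p.1)) :
    S.height σ (S.offset σ p) = p.2 := by
  rw [height, T_offset hp, U_offset hp, add_sub_cancel_left]

lemma dist_eq_height {z w : X} (hT : S.T z = S.T w) :
    dist z w = |S.height σ z - S.height σ w| := by
  rw [S.dist_of_T_eq hT, height, height, hT, sub_sub_sub_cancel_right]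

namespace IsTimeLine

lemma abs_U_sub_le (hσ : S.IsTimeLine σ) (t t' : ℝ) :
    |S.U (σ t) - S.U (σ t')| ≤ 2 * |t - t'| := by
  simpa only [hσ.isGeodesicLine t t'] using S.abs_U_sub_le (σ t) (σ t')

lemma offset_zero (hσ : S.IsTimeLine σ) (t : ℝ) : S.offset σ (t, 0) = σ t := by
  have h := S.point_T_U (σ t)
  rwa [hσ.T_eq, ← add_zero (S.U (σ t))] at h

lemma dist_le_height (hσ : S.IsTimeLine σ) (z w : X) :
    dist z w ≤ 5 * |S.T z - S.T w| + |S.height σ z - S.height σ w| := by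
  have h := abs_add_le (S.height σ z - S.height σ w) (S.U (σ (S.T z)) - S.U (σ (S.T w)))
  rw [show S.height σ z - S.height σ w + (S.U (σ (S.T z)) - S.U (σ (S.T w))) = S.U z - S.U w by
    simp only [height]; ring] at h
  linarith [S.dist_le z w, hσ.abs_U_sub_le (S.T z) (S.T w)]

lemma abs_height_sub_le (hσ : S.IsTimeLine σ) (z w : X) :
    |S.height σ z - S.height σ w| ≤ 4 * dist z w := by
  have h := abs_sub (S.U z - S.U w) (S.U (σ (S.T z)) - S.U (σ (S.T w)))
  rw [show S.U z - S.U w - (S.U (σ (S.T z)) - S.U (σ (S.T w))) =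
    S.height σ z - S.height σ w by simp only [height]; ring] at h
  linarith [S.abs_U_sub_le z w, S.abs_T_sub_le z w, hσ.abs_U_sub_le (S.T z) (S.T w)]

lemma eventually_mem_Ioo (hσ : S.IsTimeLine σ) (hs : S.Interior (σ s)) {γ : ℝ → ℝ × ℝ} {x : ℝ}
    (hγ : ContinuousAt γ x) (hγx : γ x = (s, 0)) :
    ∀ᶠ r in 𝓝 x, S.U (σ (γ r).1) + (γ r).2 ∈ Ioo 0 (S.width (γ r).1) := by
  have hU : Continuous (fun p : ℝ × ℝ => S.U (σ p.1) + p.2) :=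
    ((S.continuous_U.comp hσ.continuous).comp continuous_fst).add continuous_snd
  have hw : Continuous (fun p : ℝ × ℝ => S.width p.1) := S.continuous_width.comp continuous_fst
  rw [Interior, hσ.T_eq] at hs
  have hU' := hU.continuousAt.comp hγ
  have hw' := hw.continuousAt.comp hγ
  exact (continuousAt_const.eventually_lt hU' (by simpa [hγx] using hs.1)).and
    (hU'.eventually_lt hw' (by simpa [hγx] using hs.2))

lemma eventually_coord_offset (hσ : S.IsTimeLine σ) (hs : S.Interior (σ s)) (q : ℝ × ℝ) :
    ∀ᶠ h in 𝓝 (0 : ℝ), S.T (S.offset σ (s + h * q.1, h * q.2)) = s + h * q.1 ∧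
      S.height σ (S.offset σ (s + h * q.1, h * q.2)) = h * q.2 := by
  have hγ : ContinuousAt (fun h : ℝ => (s + h * q.1, h * q.2)) 0 := by fun_prop
  filter_upwards [hσ.eventually_mem_Ioo hs hγ (by simp)] with h hh
  exact ⟨T_offset (Ioo_subset_Icc_self hh), height_offset (Ioo_subset_Icc_self hh)⟩

lemma eventually_dist_offset_le (hσ : S.IsTimeLine σ) (hs : S.Interior (σ s)) (q r : ℝ × ℝ) :
    ∀ᶠ h in 𝓝[>] (0 : ℝ),
      dist (S.offset σ (s + h * q.1, h * q.2)) (S.offset σ (s + h * r.1, h * r.2)) ≤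
        (5 * |q.1 - r.1| + |q.2 - r.2|) * h := by
  filter_upwards [nhdsWithin_le_nhds (hσ.eventually_coord_offset hs q),
    nhdsWithin_le_nhds (hσ.eventually_coord_offset hs r), self_mem_nhdsWithin] with h hq hr hh
  have hle := hσ.dist_le_height (S.offset σ (s + h * q.1, h * q.2))
    (S.offset σ (s + h * r.1, h * r.2))
  rw [hq.1, hq.2, hr.1, hr.2, add_sub_add_left_eq_sub, ← mul_sub, ← mul_sub, abs_mul, abs_mul,
    abs_of_pos (mem_Ioi.1 hh)] at hle
  linarith

lemma exists_tendsto_height_div (hσ : S.IsTimeLine σ) (hs : S.Interior (σ s)) {ℱ : Ultrafilter ℝ}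
    (hℱ : ↑ℱ ≤ 𝓝[>] (0 : ℝ)) {z : ℝ → X} {p : ℝ × ℝ} {C : ℝ} (hz : ∀ᶠ h in (ℱ : Filter ℝ),
      dist (z h) (S.offset σ (s + h * p.1, h * p.2)) ≤ C * h) :
    ∃ L, Tendsto (fun h => S.height σ (z h) / h) ℱ (𝓝 L) := by
  refine exists_tendsto_of_eventually_abs_le (C := 4 * C + |p.2|) ?_
  filter_upwards [hz, hℱ (nhdsWithin_le_nhds (hσ.eventually_coord_offset hs p)),
    hℱ self_mem_nhdsWithin] with h hz hp hpos
  have hpos' : 0 < h := hpos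
  have hheight := hσ.abs_height_sub_le (z h) (S.offset σ (s + h * p.1, h * p.2))
  have htri := abs_sub_abs_le_abs_sub (S.height σ (z h)) (h * p.2)
  rw [hp.2] at hheight
  rw [abs_mul, abs_of_pos hpos'] at htri
  rw [abs_div, abs_of_pos hpos', div_le_iff₀ hpos']
  linarith

lemma tendsto_dist_offset_of_tendsto_height (hσ : S.IsTimeLine σ) (hs : S.Interior (σ s))
    {ℱ : Ultrafilter ℝ} (hℱ : ↑ℱ ≤ 𝓝[>] (0 : ℝ)) {z : ℝ → X} {m : ℝ × ℝ}
    (hT : ∀ᶠ h in (ℱ : Filter ℝ), S.T (z h) = s + h * m.1)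
    (hheight : Tendsto (fun h => S.height σ (z h) / h) ℱ (𝓝 m.2)) :
    Tendsto (fun h => dist (z h) (S.offset σ (s + h * m.1, h * m.2)) / h) ℱ (𝓝 0) := by
  have hlim := (hheight.sub_const m.2).abs
  rw [sub_self, abs_zero] at hlim
  refine hlim.congr' ?_
  filter_upwards [hT, hℱ (nhdsWithin_le_nhds (hσ.eventually_coord_offset hs m)),
    hℱ self_mem_nhdsWithin] with h hT hm hpos
  have h_pos : 0 < h := hpos
  rw [dist_eq_height (σ := σ) (hT.trans hm.1.symm), hm.2, div_sub' h_pos.ne', abs_div,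
    abs_of_pos h_pos]

/-- The points of a segment joining two points of the blow-up stay at bounded rescaled height, hence
converge along an ultrafilter. -/
lemma exists_mem_segment_limit (hσ : S.IsTimeLine σ) (hs : S.Interior (σ s)) {ℱ : Ultrafilter ℝ}
    (hℱ : ↑ℱ ≤ 𝓝[>] (0 : ℝ)) (p q : ℝ × ℝ) {r : ℝ} (hr : r ∈ Icc (0 : ℝ) 1) :
    ∃ (m : ℝ × ℝ) (z : ℝ → X), m.1 = (1 - r) * p.1 + r * q.1 ∧
      Tendsto (fun h => dist (z h) (S.offset σ (s + h * m.1, h * m.2)) / h) ℱ (𝓝 0) ∧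
      ∀ h, dist (S.offset σ (s + h * p.1, h * p.2)) (z h) =
          dist (S.offset σ (s + h * p.1, h * p.2)) (S.offset σ (s + h * q.1, h * q.2)) * r ∧
        dist (z h) (S.offset σ (s + h * q.1, h * q.2)) =
          dist (S.offset σ (s + h * p.1, h * p.2)) (S.offset σ (s + h * q.1, h * q.2)) *
            (1 - r) := by
  choose c hc hcT using fun h : ℝ => S.exists_isSegment (S.offset σ (s + h * p.1, h * p.2))
    (S.offset σ (s + h * q.1, h * q.2))
  have hT : ∀ᶠ h in (ℱ : Filter ℝ), S.T (c h r) = s + h * ((1 - r) * p.1 + r * q.1) := by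
    filter_upwards [hℱ (nhdsWithin_le_nhds (hσ.eventually_coord_offset hs p)),
      hℱ (nhdsWithin_le_nhds (hσ.eventually_coord_offset hs q))] with h hp hq
    rw [hcT h r hr, hp.1, hq.1]
    ring
  obtain ⟨L, hL⟩ := hσ.exists_tendsto_height_div hs hℱ (z := fun h => c h r) (p := p)
    (C := 5 * |p.1 - q.1| + |p.2 - q.2|) <| by
      filter_upwards [hℱ (hσ.eventually_dist_offset_le hs p q)] with h hpq
      rw [dist_comm, (hc h).dist_left hr]
      exact (mul_le_of_le_one_right dist_nonneg hr.2).trans hpq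
  exact ⟨((1 - r) * p.1 + r * q.1, L), fun h => c h r, rfl,
    hσ.tendsto_dist_offset_of_tendsto_height hs hℱ hT hL,
    fun h => ⟨(hc h).dist_left hr, (hc h).dist_right hr⟩⟩

lemma planeChart (hσ : S.IsTimeLine σ) (hs : S.Interior (σ s)) {ℱ : Ultrafilter ℝ}
    (hℱ : ↑ℱ ≤ 𝓝[>] (0 : ℝ)) {Y : Type*} [MetricSpace Y] {P : ℝ × ℝ → Y}
    (hP : ∀ q r, Tendsto (fun h => dist (S.offset σ (s + h * q.1, h * q.2))
      (S.offset σ (s + h * r.1, h * r.2)) / h) ℱ (𝓝 (dist (P q) (P r)))) : PlaneChart P := by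
  have hcoord (q : ℝ × ℝ) := hℱ (nhdsWithin_le_nhds (hσ.eventually_coord_offset hs q))
  have hpos : ∀ᶠ h in (ℱ : Filter ℝ), 0 < h := hℱ self_mem_nhdsWithin
  refine ⟨fun t u u' => ?_, fun t t' => ?_, fun p q => ?_, ⟨5, fun p q => ?_⟩, fun p q r hr => ?_⟩
  · refine tendsto_nhds_unique (hP (t, u) (t, u')) (tendsto_const_nhds.congr' ?_)
    filter_upwards [hpos, hcoord (t, u), hcoord (t, u')] with h hpos hu hu'
    rw [dist_eq_height (σ := σ) (hu.1.trans hu'.1.symm), hu.2, hu'.2, ← mul_sub, abs_mul,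
      abs_of_pos hpos, mul_div_cancel_left₀ _ hpos.ne']
  · refine tendsto_nhds_unique (hP (t, 0) (t', 0)) (tendsto_const_nhds.congr' ?_)
    filter_upwards [hpos] with h hpos
    rw [mul_zero, hσ.offset_zero, hσ.offset_zero, hσ.isGeodesicLine, add_sub_add_left_eq_sub,
      ← mul_sub, abs_mul, abs_of_pos hpos, mul_div_cancel_left₀ _ hpos.ne']
  · refine ge_of_tendsto (hP p q) ?_
    filter_upwards [hpos, hcoord p, hcoord q] with h hpos hp hq
    have hT := S.abs_T_sub_le (S.offset σ (s + h * p.1, h * p.2))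
      (S.offset σ (s + h * q.1, h * q.2))
    rw [hp.1, hq.1, add_sub_add_left_eq_sub, ← mul_sub, abs_mul, abs_of_pos hpos] at hT
    rwa [le_div_iff₀' hpos]
  · refine le_of_tendsto (hP p q) ?_
    filter_upwards [hpos, hℱ (hσ.eventually_dist_offset_le hs p q)] with h hpos hpq
    rwa [div_le_iff₀ hpos]
  · obtain ⟨m, z, hm, hzm, hz⟩ := hσ.exists_mem_segment_limit hs hℱ p q hr
    have hlim {f g : ℝ → ℝ} {a b : ℝ} (hf : Tendsto (fun h => f h / h) ℱ (𝓝 a))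
        (hg : Tendsto (fun h => g h / h) ℱ (𝓝 b)) (hfg : ∀ h, |f h - g h| ≤
          dist (z h) (S.offset σ (s + h * m.1, h * m.2))) : a = b := by
      have hzero : Tendsto (fun h => f h / h - g h / h) ℱ (𝓝 0) := by
        refine squeeze_zero_norm' ?_ hzm
        filter_upwards [hpos] with h hpos
        rw [← sub_div, Real.norm_eq_abs, abs_div, abs_of_pos hpos]
        exact div_le_div_of_nonneg_right (hfg h) hpos.le
      exact sub_eq_zero.1 (tendsto_nhds_unique (hf.sub hg) hzero)
    have hmul (a : ℝ) := (hP p q).const_mul a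
    simp only [← mul_div_assoc] at hmul
    refine ⟨m, hm, hlim (hP p m) (hmul r) fun h => ?_, hlim (hP m q) (hmul (1 - r)) fun h => ?_⟩
    · rw [mul_comm r, ← (hz h).1, dist_comm (z h), dist_comm _ (S.offset _ (_ + h * m.1, _)),
        dist_comm _ (z h)]
      exact abs_dist_sub_le _ _ _
    · rw [mul_comm (1 - r), ← (hz h).2, dist_comm (z h) (S.offset σ (s + h * m.1, h * m.2))]
      exact abs_dist_sub_le _ _ _

/-- Along every ultrafilter the rescaled strip has a limit, which is a ptolemaic plane. -/
theorem tendsto_dist_offset (hσ : S.IsTimeLine σ) (hs : S.Interior (σ s)) (q r : ℝ × ℝ) :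
    Tendsto (fun h => dist (S.offset σ (s + h * q.1, h * q.2))
      (S.offset σ (s + h * r.1, h * r.2)) / h) (𝓝[>] 0)
      (𝓝 √((q.1 - r.1) ^ 2 + (q.2 - r.2) ^ 2)) := by
  refine (tendsto_iff_ultrafilter _ _ _).2 fun ℱ hℱ => ?_
  obtain ⟨Y, _, P, hY, hP⟩ := S.ptolemaic.exists_rescaling_limit (hℱ self_mem_nhdsWithin)
    (z := fun h (q : ℝ × ℝ) => S.offset σ (s + h * q.1, h * q.2))
    fun q r => ⟨_, hℱ (hσ.eventually_dist_offset_le hs q r)⟩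
  rw [← (hσ.planeChart hs hℱ hP).dist_eq hY]
  exact hP q r

end IsTimeLine

end MetricStrip

/-! ### First variation -/

lemma le_add_mul_sub_of_forall_eventually_le {f : ℝ → ℝ} {a b c : ℝ} (hab : a ≤ b)
    (hf : ContinuousOn f (Icc a b))
    (hc : ∀ x ∈ Ico a b, ∀ c' > c, ∀ᶠ h in 𝓝[>] (0 : ℝ), f (x + h) ≤ f x + c' * h) :
    f b ≤ f a + c * (b - a) := by
  refine image_le_of_liminf_slope_right_le_deriv_boundary hf (B := fun x => f a + c * (x - a))
    (B' := fun _ => c) (by simp) (by fun_prop)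
    (fun x _ => by
      simpa using ((((hasDerivAt_id x).sub_const a).const_mul c).const_add (f a)).hasDerivWithinAt)
    (fun x hx r hr => Eventually.frequently ?_) (right_mem_Icc.2 hab)
  rw [← add_zero x, ← Filter.map_add_left_nhdsGT, eventually_map, add_zero]
  filter_upwards [hc x hx ((c + r) / 2) (by linarith), self_mem_nhdsWithin] with h hle hpos
  have hpos' : 0 < h := hpos
  rw [slope_def_field, add_sub_cancel_left, div_lt_iff₀ hpos']
  nlinarith

namespace MetricStrip

variable {X : Type*} [MetricSpace X] {S : MetricStrip X} {σ τ : ℝ → X}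

namespace IsTimeLine

/-- A curve descending from `σ (s + h)` to the fibre at `s` with slope `1 / ε` has length
`√(1 + ε⁻²) h < (ε⁻¹ + ε) h` up to first order. -/
lemma eventually_dist_le_of_T_eq (hσ : S.IsTimeLine σ) {s : ℝ} (hs : S.Interior (σ s)) {m : X}
    (hm : S.T m = s) (hne : m ≠ σ s) {ε : ℝ} (hε : 0 < ε) :
    ∀ᶠ h in 𝓝[>] (0 : ℝ), dist (σ (s + h)) m ≤ dist (σ s) m + ε * h := by
  set v := S.U m - S.U (σ s) with hv
  have hv_pos : 0 < |v| := abs_pos.2 fun h0 =>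
    hne (S.ext_coord (hm.trans (hσ.T_eq s).symm) (sub_eq_zero.1 h0))
  have hσm : dist (σ s) m = |v| := by
    rw [dist_comm, S.dist_of_T_eq (hm.trans (hσ.T_eq s).symm)]
  obtain ⟨k, hk⟩ : ∃ k, |v| * k = 1 / ε := ⟨1 / ε / |v|, mul_div_cancel₀ _ hv_pos.ne'⟩
  have hslope : √((1 - 0) ^ 2 + (0 - v * k) ^ 2) < 1 / ε + ε := by
    rw [Real.sqrt_lt' (by positivity)]
    have : (v * k) ^ 2 = (1 / ε) ^ 2 := by
      rw [mul_pow, ← sq_abs v, ← mul_pow, hk]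
    have : 1 / ε * ε = 1 := one_div_mul_cancel hε.ne'
    nlinarith [sq_pos_of_pos hε]
  have hsmall : ∀ᶠ h in 𝓝 (0 : ℝ), h * k < 1 :=
    (continuousAt_id.mul_const _).eventually_lt continuousAt_const (by simp)
  filter_upwards [(hσ.tendsto_dist_offset hs (1, 0) (0, v * k)).eventually_lt_const
    hslope, nhdsWithin_le_nhds (hσ.eventually_coord_offset hs (0, v * k)),
    nhdsWithin_le_nhds hsmall, self_mem_nhdsWithin] with h hlt hcoord hle hpos
  have hpos' : 0 < h := hpos
  rw [div_lt_iff₀ hpos', mul_one, mul_zero, add_zero, hσ.offset_zero] at hlt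
  rw [mul_zero, add_zero] at hcoord
  have hdown : dist (S.offset σ (s, h * (v * k))) m = |v| - 1 / ε * h := by
    rw [dist_comm, dist_eq_height (σ := σ) (hm.trans hcoord.1.symm), hcoord.2, height, hm, ← hv,
      show v - h * (v * k) = v * (1 - h * k) by ring, abs_mul,
      abs_of_pos (sub_pos.2 hle), ← hk]
    ring
  have htri := dist_triangle (σ (s + h)) (S.offset σ (s, h * (v * k))) m
  rw [add_mul] at hlt
  rw [hσm]
  linarith

/-- Apply the first variation to both lines at the midpoint of the fibre between them; the cut-off
at `δ` avoids the times at which the lines meet. -/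
lemma dist_le_of_interior (hσ : S.IsTimeLine σ) (hτ : S.IsTimeLine τ) {a b : ℝ} (hab : a ≤ b)
    (hσi : ∀ t ∈ Icc a b, S.Interior (σ t)) (hτi : ∀ t ∈ Icc a b, S.Interior (τ t)) :
    dist (σ b) (τ b) ≤ dist (σ a) (τ a) := by
  have hcont : Continuous fun t => dist (σ t) (τ t) := hσ.continuous.dist hτ.continuous
  suffices hcut : ∀ δ > 0, max (dist (σ b) (τ b)) δ ≤ max (dist (σ a) (τ a)) δ + 0 * (b - a) by
    refine le_of_forall_pos_le_add fun δ hδ => (le_max_left _ δ).trans ((hcut δ hδ).trans ?_)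
    rw [zero_mul, add_zero]
    exact max_le_add_of_nonneg dist_nonneg hδ.le
  intro δ hδ
  refine le_add_mul_sub_of_forall_eventually_le (f := fun t => max (dist (σ t) (τ t)) δ) hab
    (hcont.max continuous_const).continuousOn fun x hx ε hε => ?_
  have hxi := Ico_subset_Icc_self hx
  rcases lt_or_ge (dist (σ x) (τ x)) δ with hlt | hge
  · have hshift : ContinuousAt (fun h => dist (σ (x + h)) (τ (x + h))) 0 :=
      (hcont.comp (continuous_const_add x)).continuousAt
    filter_upwards [self_mem_nhdsWithin, nhdsWithin_le_nhds
      (hshift.eventually_lt continuousAt_const (by simpa using hlt))] with h hpos hh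
    rw [max_eq_right hh.le, max_eq_right hlt.le]
    exact le_add_of_nonneg_right (mul_nonneg hε.le (le_of_lt hpos))
  · obtain ⟨c, hc, hcT⟩ := S.exists_isSegment (σ x) (τ x)
    have hhalf : (1 / 2 : ℝ) ∈ Icc (0 : ℝ) 1 := by norm_num
    have hleft := hc.dist_left hhalf
    have hright := hc.dist_right hhalf
    have hm : S.T (c (1 / 2)) = x := by
      rw [hcT _ hhalf, hσ.T_eq, hτ.T_eq]
      ring
    have : 0 < dist (σ x) (τ x) := hδ.trans_le hge
    filter_upwards [hσ.eventually_dist_le_of_T_eq (hσi x hxi) hm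
        (dist_pos.1 (by rw [dist_comm]; linarith)) (half_pos hε),
      hτ.eventually_dist_le_of_T_eq (hτi x hxi) hm (dist_pos.1 (by linarith)) (half_pos hε),
      self_mem_nhdsWithin] with h hσh hτh hh
    rw [dist_comm (τ (x + h)), dist_comm (τ x)] at hτh
    rw [max_eq_left hge]
    have : 0 ≤ ε * h := mul_nonneg hε.le (le_of_lt hh)
    exact max_le (by linarith [dist_triangle (σ (x + h)) (c (1 / 2)) (τ (x + h))]) (by linarith)

lemma dist_eq_of_interior (hσ : S.IsTimeLine σ) (hτ : S.IsTimeLine τ) {a b : ℝ} (hab : a ≤ b)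
    (hσi : ∀ t ∈ Icc a b, S.Interior (σ t)) (hτi : ∀ t ∈ Icc a b, S.Interior (τ t)) :
    dist (σ b) (τ b) = dist (σ a) (τ a) := by
  have hneg {t : ℝ} (ht : t ∈ Icc (-b) (-a)) : -t ∈ Icc a b := by
    constructor <;> linarith [ht.1, ht.2]
  refine (hσ.dist_le_of_interior hτ hab hσi hτi).antisymm ?_
  simpa using hσ.reverse.dist_le_of_interior hτ.reverse (neg_le_neg hab)
    (fun t ht => (hσi (-t) (hneg ht)).reverse) (fun t ht => (hτi (-t) (hneg ht)).reverse)

lemma U_sub_eq_of_le (hσ : S.IsTimeLine σ) (hτ : S.IsTimeLine τ) {a b : ℝ} (hab : a ≤ b)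
    (hσi : ∀ t ∈ Icc a b, S.Interior (σ t)) (hτi : ∀ t ∈ Icc a b, S.Interior (τ t)) :
    S.U (σ b) - S.U (τ b) = S.U (σ a) - S.U (τ a) := by
  have habs {t : ℝ} (ht : t ∈ Icc a b) :
      |S.U (σ t) - S.U (τ t)| = |S.U (σ a) - S.U (τ a)| := by
    have h := hσ.dist_eq_of_interior hτ ht.1 (fun r hr => hσi r ⟨hr.1, hr.2.trans ht.2⟩)
      (fun r hr => hτi r ⟨hr.1, hr.2.trans ht.2⟩)
    rwa [S.dist_of_T_eq (by rw [hσ.T_eq, hτ.T_eq]), S.dist_of_T_eq (by rw [hσ.T_eq, hτ.T_eq])] at h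
  rcases eq_or_ne (S.U (σ a) - S.U (τ a)) 0 with h0 | h0
  · rw [h0]
    simpa [h0] using habs (right_mem_Icc.2 hab)
  · have hcont : Continuous fun t => S.U (σ t) - S.U (τ t) :=
      (S.continuous_U.comp hσ.continuous).sub (S.continuous_U.comp hτ.continuous)
    exact isPreconnected_Icc.eq_of_sq_eq hcont.continuousOn
      (g := fun _ => S.U (σ a) - S.U (τ a)) continuousOn_const
      (fun t ht => (sq_eq_sq_iff_abs_eq_abs _ _).2 (habs ht))
      (fun _ => h0) (left_mem_Icc.2 hab) rfl (right_mem_Icc.2 hab)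

lemma U_sub_eq (hσ : S.IsTimeLine σ) (hτ : S.IsTimeLine τ) {a b : ℝ}
    (hσi : ∀ t ∈ uIcc a b, S.Interior (σ t)) (hτi : ∀ t ∈ uIcc a b, S.Interior (τ t)) :
    S.U (σ b) - S.U (τ b) = S.U (σ a) - S.U (τ a) := by
  rcases le_total a b with hab | hab
  · rw [uIcc_of_le hab] at hσi hτi
    exact hσ.U_sub_eq_of_le hτ hab hσi hτi
  · rw [uIcc_of_ge hab] at hσi hτi
    exact (hσ.U_sub_eq_of_le hτ hab hσi hτi).symm

lemma isOpen_setOf_interior (hσ : S.IsTimeLine σ) : IsOpen {t | S.Interior (σ t)} := by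
  simp only [Interior, hσ.T_eq]
  exact (isOpen_lt continuous_const (S.continuous_U.comp hσ.continuous)).inter
    (isOpen_lt (S.continuous_U.comp hσ.continuous) S.continuous_width)

lemma eventually_U_sub_eq (hσ : S.IsTimeLine σ) (hτ : S.IsTimeLine τ) {s : ℝ}
    (hσs : S.Interior (σ s)) (hτs : S.Interior (τ s)) :
    ∀ᶠ t in 𝓝 s, S.U (σ t) - S.U (τ t) = S.U (σ s) - S.U (τ s) := by
  obtain ⟨δ, hδ, hball⟩ := Metric.isOpen_iff.1
    (hσ.isOpen_setOf_interior.inter hτ.isOpen_setOf_interior) s ⟨hσs, hτs⟩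
  filter_upwards [ball_mem_nhds s hδ] with t ht
  have hsub : uIcc s t ⊆ ball s δ :=
    (convex_ball s δ).ordConnected.uIcc_subset (mem_ball_self hδ) ht
  exact hσ.U_sub_eq hτ (fun r hr => (hball (hsub hr)).1) (fun r hr => (hball (hsub hr)).2)

end IsTimeLine

end MetricStrip

/-! ### Straight segments and the lower distance bound -/

/-- Up to the factor `η`, the diagonals of the quadrilateral with vertices `(l, 0)`, `(-ηv, 0)`,
`(0, v)`, `(0, -ηl)` split it into similar triangles, so the Euclidean Ptolemy inequality for it is
an equality. -/
lemma Ptolemaic.sqrt_le_dist_of_cross {X : Type*} [MetricSpace X] (hPT : Ptolemaic X) {e w n s : X}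
    {l v η : ℝ} (hη : η ≠ 0) (hsign : 0 ≤ η * (l * v)) (hew : |l + η * v| ≤ dist e w)
    (hns : |v + η * l| ≤ dist n s) (hws : dist w s ≤ √((η * v) ^ 2 + (η * l) ^ 2))
    (hes : dist e s ≤ √(l ^ 2 + (η * l) ^ 2)) (hwn : dist w n ≤ √((η * v) ^ 2 + v ^ 2)) :
    √(l ^ 2 + v ^ 2) ≤ dist e n := by
  have hsqrt (x y z : ℝ) (h : x = y ^ 2 * z) : √x = |y| * √z := by
    rw [h, Real.sqrt_mul (sq_nonneg y), Real.sqrt_sq_eq_abs]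
  rw [hsqrt _ η (l ^ 2 + v ^ 2) (by ring)] at hws
  rw [hsqrt _ l (1 + η ^ 2) (by ring)] at hes
  rw [hsqrt _ v (1 + η ^ 2) (by ring)] at hwn
  have hlhs : |l + η * v| * |v + η * l| =
      |l| * |v| * (1 + η ^ 2) + |η| * √(l ^ 2 + v ^ 2) * √(l ^ 2 + v ^ 2) := by
    rw [mul_assoc |η|, Real.mul_self_sqrt (by positivity), ← abs_mul, ← abs_mul]
    have : 0 ≤ l ^ 2 + v ^ 2 := by positivity
    rcases hη.lt_or_gt with hneg | hpos
    · have hlv : l * v ≤ 0 := nonpos_of_mul_nonneg_right hsign hneg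
      rw [abs_of_nonpos hlv, abs_of_neg hneg, abs_of_nonpos (by nlinarith [sq_nonneg η])]
      ring
    · have hlv : 0 ≤ l * v := nonneg_of_mul_nonneg_right hsign hpos
      rw [abs_of_nonneg hlv, abs_of_pos hpos, abs_of_nonneg (by nlinarith [sq_nonneg η])]
      ring
  have hside : dist e s * dist w n ≤ |l| * |v| * (1 + η ^ 2) := calc
    _ ≤ |l| * √(1 + η ^ 2) * (|v| * √(1 + η ^ 2)) := by gcongr
    _ = |l| * |v| * (√(1 + η ^ 2) * √(1 + η ^ 2)) := by ring
    _ = _ := by rw [Real.mul_self_sqrt (by positivity)]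
  have hdiag := mul_le_mul hew hns (abs_nonneg _) dist_nonneg
  have hdist := mul_le_mul_of_nonneg_left hws (dist_nonneg (x := e) (y := n))
  have hle : |η| * √(l ^ 2 + v ^ 2) * √(l ^ 2 + v ^ 2) ≤ |η| * √(l ^ 2 + v ^ 2) * dist e n := by
    linarith [hPT e w n s]
  rcases (Real.sqrt_nonneg (l ^ 2 + v ^ 2)).eq_or_lt with h0 | h0
  · exact h0 ▸ dist_nonneg
  · exact le_of_mul_le_mul_left hle (mul_pos (abs_pos.2 hη) h0)

lemma exists_ne_zero_mul_nonneg_abs_lt (l v : ℝ) {δ : ℝ} (hδ : 0 < δ) :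
    ∃ η ≠ 0, 0 ≤ η * (l * v) ∧ |η * l| < δ ∧ |η * v| < δ := by
  obtain ⟨r, hr, hrlt⟩ := exists_pos_mul_lt hδ (max |l| |v|)
  have hlt {x : ℝ} (hx : |x| ≤ max |l| |v|) : r * |x| < δ := by
    nlinarith
  rcases le_total 0 (l * v) with h | h
  · refine ⟨r, hr.ne', mul_nonneg hr.le h, ?_⟩
    simp only [abs_mul, abs_of_pos hr]
    exact ⟨hlt (le_max_left _ _), hlt (le_max_right _ _)⟩
  · refine ⟨-r, neg_ne_zero.2 hr.ne', mul_nonneg_of_nonpos_of_nonpos (neg_nonpos.2 hr.le) h, ?_⟩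
    simp only [abs_mul, abs_neg, abs_of_pos hr]
    exact ⟨hlt (le_max_left _ _), hlt (le_max_right _ _)⟩

namespace MetricStrip

variable {X : Type*} [MetricSpace X] (S : MetricStrip X)

/-- The pairs `(t, v)` such that `σ t` and the point at height `v` above it lie off the boundary
lines. -/
def offsetDomain (σ : ℝ → X) : Set (ℝ × ℝ) :=
  {p | S.Interior (σ p.1) ∧ S.U (σ p.1) + p.2 ∈ Ioo 0 (S.width p.1)}

variable {S} {σ τ : ℝ → X} {p q : ℝ × ℝ}

lemma coord_offset (hp : p ∈ S.offsetDomain σ) :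
    S.T (S.offset σ p) = p.1 ∧ S.height σ (S.offset σ p) = p.2 :=
  ⟨T_offset (Ioo_subset_Icc_self hp.2), height_offset (Ioo_subset_Icc_self hp.2)⟩

lemma interior_offset (hp : p ∈ S.offsetDomain σ) : S.Interior (S.offset σ p) := by
  rw [Interior, T_offset (Ioo_subset_Icc_self hp.2), U_offset (Ioo_subset_Icc_self hp.2)]
  exact hp.2

namespace IsTimeLine

lemma isOpen_offsetDomain (hσ : S.IsTimeLine σ) : IsOpen (S.offsetDomain σ) := by
  have hU : Continuous fun p : ℝ × ℝ => S.U (σ p.1) + p.2 :=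
    ((S.continuous_U.comp hσ.continuous).comp continuous_fst).add continuous_snd
  exact (hσ.isOpen_setOf_interior.preimage continuous_fst).inter
    ((isOpen_lt continuous_const hU).inter
      (isOpen_lt hU (S.continuous_width.comp continuous_fst)))

lemma continuousOn_offset (hσ : S.IsTimeLine σ) :
    ContinuousOn (S.offset σ) (S.offsetDomain σ) := by
  refine (LipschitzOnWith.of_dist_le_mul (K := 6) fun p hp q hq => ?_).continuousOn
  have h := hσ.dist_le_height (S.offset σ p) (S.offset σ q)
  rw [(coord_offset hp).1, (coord_offset hp).2, (coord_offset hq).1, (coord_offset hq).2] at h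
  have h₁ : |p.1 - q.1| ≤ dist p q := le_max_left _ _
  have h₂ : |p.2 - q.2| ≤ dist p q := le_max_right _ _
  push_cast
  linarith

lemma eventually_offset_add_smul (hσ : S.IsTimeLine σ) (hτ : S.IsTimeLine τ)
    (hp : p ∈ S.offsetDomain σ) (hτp : τ p.1 = S.offset σ p) (v : ℝ × ℝ) :
    ∀ᶠ h in 𝓝 (0 : ℝ), S.offset σ (p + h • v) = S.offset τ (p.1 + h * v.1, h * v.2) := by
  have hshift : ContinuousAt (fun h : ℝ => p.1 + h * v.1) 0 := by fun_prop
  have hτi : S.Interior (τ p.1) := hτp ▸ interior_offset hp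
  have hU := hσ.eventually_U_sub_eq hτ hp.1 hτi
  rw [hτp, U_offset (Ioo_subset_Icc_self hp.2)] at hU
  filter_upwards [hshift.eventually (by simpa using hU)] with h hh
  simp only [offset, Prod.fst_add, Prod.snd_add, Prod.smul_fst, Prod.smul_snd, smul_eq_mul]
  congr 1
  linarith

/-- By the blow-up at each of its points, the image of a segment has Euclidean speed. -/
theorem dist_offset_le (hσ : S.IsTimeLine σ) (hpq : segment ℝ p q ⊆ S.offsetDomain σ) :
    dist (S.offset σ p) (S.offset σ q) ≤ √((p.1 - q.1) ^ 2 + (p.2 - q.2) ^ 2) := by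
  have hmem {r : ℝ} (hr : r ∈ Icc (0 : ℝ) 1) : p + r • (q - p) ∈ S.offsetDomain σ :=
    hpq (segment_eq_image' ℝ p q ▸ mem_image_of_mem _ hr)
  have hcont : ContinuousOn (fun r : ℝ => dist (S.offset σ p) (S.offset σ (p + r • (q - p))))
      (Icc 0 1) :=
    (continuous_const.dist continuous_id).comp_continuousOn
      (hσ.continuousOn_offset.comp (by fun_prop) fun r hr => hmem hr)
  have h := le_add_mul_sub_of_forall_eventually_le (c := √((p.1 - q.1) ^ 2 + (p.2 - q.2) ^ 2))
    zero_le_one hcont fun x hx c' hc' => ?_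
  · simpa using h
  obtain ⟨τ, hτ, hτx⟩ := S.exists_isTimeLine (S.offset σ (p + x • (q - p)))
  have hx' := hmem (Ico_subset_Icc_self hx)
  rw [(coord_offset hx').1] at hτx
  have hblow := hτ.tendsto_dist_offset (hτx ▸ interior_offset hx') (0, 0) (q - p)
  filter_upwards [hblow.eventually_lt_const (u := c') (by simpa [sub_sq_comm] using hc'),
    nhdsWithin_le_nhds (hσ.eventually_offset_add_smul hτ hx' hτx (q - p)), self_mem_nhdsWithin]
    with h hlt hoff hpos
  rw [div_lt_iff₀ hpos, mul_zero, add_zero, hτ.offset_zero, hτx, ← hoff, add_assoc,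
    ← add_smul] at hlt
  linarith [dist_triangle (S.offset σ p) (S.offset σ (p + x • (q - p)))
    (S.offset σ (p + (x + h) • (q - p)))]

lemma exists_pos_forall_dist_offset_le (hσ : S.IsTimeLine σ)
    (hpq : segment ℝ p q ⊆ S.offsetDomain σ) :
    ∃ δ > 0, ∀ a ∈ thickening δ (segment ℝ p q), ∀ b ∈ thickening δ (segment ℝ p q),
      a ∈ S.offsetDomain σ ∧
        dist (S.offset σ a) (S.offset σ b) ≤ √((a.1 - b.1) ^ 2 + (a.2 - b.2) ^ 2) := by
  have hcompact : IsCompact (segment ℝ p q) := by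
    rw [segment_eq_image_lineMap]
    exact isCompact_Icc.image AffineMap.lineMap_continuous
  obtain ⟨δ, hδ, hsub⟩ := hcompact.exists_thickening_subset_open hσ.isOpen_offsetDomain hpq
  exact ⟨δ, hδ, fun a ha b hb => ⟨hsub ha, hσ.dist_offset_le
    ((((convex_segment p q).thickening δ).segment_subset ha hb).trans hsub)⟩⟩

lemma segment_time_subset_offsetDomain (hσ : S.IsTimeLine σ) {s t : ℝ}
    (hσi : ∀ r ∈ uIcc s t, S.Interior (σ r)) :
    segment ℝ (s, 0) (t, 0) ⊆ S.offsetDomain σ := by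
  rw [← Prod.image_mk_segment_left, segment_eq_uIcc]
  rintro _ ⟨r, hr, rfl⟩
  refine ⟨hσi r hr, ?_⟩
  simpa [Interior, hσ.T_eq] using hσi r hr

lemma segment_fiber_subset_offsetDomain (hσ : S.IsTimeLine σ) {z : X} (hz : S.Interior z)
    (hσz : S.Interior (σ (S.T z))) :
    segment ℝ (S.T z, 0) (S.T z, S.height σ z) ⊆ S.offsetDomain σ := by
  rw [← Prod.image_mk_segment_right, segment_eq_uIcc]
  rintro _ ⟨r, hr, rfl⟩
  refine ⟨hσz, ?_⟩
  rw [Interior, hσ.T_eq] at hσz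
  refine ordConnected_Ioo.uIcc_subset hσz hz ?_
  rw [height] at hr
  have h := mem_image_of_mem (S.U (σ (S.T z)) + ·) hr
  rwa [image_const_add_uIcc, add_zero, add_sub_cancel] at h

/-- The cross consists of short segments near the two legs of a right triangle. -/
theorem le_dist (hσ : S.IsTimeLine σ) {z : X} {t : ℝ} (hz : S.Interior z)
    (hσi : ∀ r ∈ uIcc (S.T z) t, S.Interior (σ r)) :
    √((t - S.T z) ^ 2 + S.height σ z ^ 2) ≤ dist (σ t) z := by
  set s := S.T z
  set v := S.height σ z with hv
  have hseg₁ := hσ.segment_time_subset_offsetDomain hσi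
  have hseg₂ := hσ.segment_fiber_subset_offsetDomain hz (hσi _ left_mem_uIcc)
  obtain ⟨δ₁, hδ₁, hdist₁⟩ := hσ.exists_pos_forall_dist_offset_le hseg₁
  obtain ⟨δ₂, hδ₂, hdist₂⟩ := hσ.exists_pos_forall_dist_offset_le hseg₂
  obtain ⟨η, hη, hsign, hηl, hηv⟩ :=
    exists_ne_zero_mul_nonneg_abs_lt (t - s) v (lt_min hδ₁ hδ₂)
  have hw : (s - η * v, (0 : ℝ)) ∈ ball (s, (0 : ℝ)) (min δ₁ δ₂) := by
    simpa [Prod.dist_eq, Real.dist_eq, hδ₁, hδ₂] using hηv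
  have hn : (s, -(η * (t - s))) ∈ ball (s, (0 : ℝ)) (min δ₁ δ₂) := by
    simpa [Prod.dist_eq, Real.dist_eq, hδ₁, hδ₂] using hηl
  have hball₁ := (ball_subset_ball (min_le_left δ₁ δ₂)).trans
    (ball_subset_thickening (left_mem_segment ℝ (s, (0 : ℝ)) (t, 0)) δ₁)
  have hball₂ := (ball_subset_ball (min_le_right δ₁ δ₂)).trans
    (ball_subset_thickening (left_mem_segment ℝ (s, (0 : ℝ)) (s, v)) δ₂)
  have he := self_subset_thickening hδ₁ _ (right_mem_segment ℝ (s, (0 : ℝ)) (t, 0))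
  have hz' := self_subset_thickening hδ₂ _ (right_mem_segment ℝ (s, (0 : ℝ)) (s, v))
  have hoffset : S.offset σ (s, v) = z := by
    rw [offset, hv, height, add_sub_cancel, S.point_T_U]
  have hws := (hdist₁ _ (hball₁ hw) _ (hball₁ hn)).2
  have hes := (hdist₁ _ he _ (hball₁ hn)).2
  have hwz := (hdist₂ _ (hball₂ hw) _ hz').2
  have hs' := coord_offset (hdist₁ _ (hball₁ hn) _ he).1
  rw [hσ.offset_zero] at hws hes hwz
  rw [hoffset] at hwz
  refine S.ptolemaic.sqrt_le_dist_of_cross hη hsign (w := σ (s - η * v))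
    (s := S.offset σ (s, -(η * (t - s)))) ?_ ?_ ?_ ?_ ?_
  · rw [hσ.isGeodesicLine]
    exact (congrArg abs (by ring)).le
  · rw [dist_eq_height (σ := σ) hs'.1.symm, hs'.2, ← hv, sub_neg_eq_add]
  · convert hws using 2
    ring
  · convert hes using 2
    ring
  · convert hwz using 2
    ring

end IsTimeLine

end MetricStrip

/-! ### Time lines stay at constant height -/

namespace MetricStrip

variable {X : Type*} [MetricSpace X] {S : MetricStrip X} {σ : ℝ → X}

namespace IsTimeLine

/-- If `σ` met the bottom line at time `t`, then `σ s` would be no farther from `σ t` than the foot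
of the perpendicular from `σ s` to the bottom line. -/
lemma U_pos_of_interior (hσ : S.IsTimeLine σ) {s t : ℝ} (hs : S.Interior (σ s))
    (hi : ∀ r ∈ ball s (dist t s), S.Interior (σ r)) : 0 < S.U (σ t) := by
  rcases eq_or_ne s t with rfl | hst
  · exact hs.1
  refine (S.U_mem (σ t)).1.lt_of_ne' fun h0 => ?_
  rw [Interior, hσ.T_eq] at hs
  set w := S.U (σ s) with hw
  have hbound {δ : ℝ} (hδ : δ ∈ Ioo (0 : ℝ) 1) :
      (1 - δ) * √((t - s) ^ 2 + w ^ 2) ≤ |t - s| + δ * (|t - s| + w) := by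
    have hδw : δ * w ∈ Ioo 0 (S.width s) :=
      ⟨mul_pos hδ.1 hs.1, (mul_lt_of_lt_one_left hs.1 hδ.2).trans hs.2⟩
    have hT : S.T (S.point s (δ * w)) = s := S.T_point (Ioo_subset_Icc_self hδw)
    have hU : S.U (S.point s (δ * w)) = δ * w := S.U_point (Ioo_subset_Icc_self hδw)
    have hle := hσ.le_dist (z := S.point s (δ * w)) (t := t + δ * (s - t))
      (by rwa [Interior, hT, hU]) fun r hr => ?_
    · rw [height, hT, hU, ← hw, show (t + δ * (s - t) - s) ^ 2 + (δ * w - w) ^ 2 =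
        (1 - δ) ^ 2 * ((t - s) ^ 2 + w ^ 2) by ring, Real.sqrt_mul (sq_nonneg _),
        Real.sqrt_sq (sub_nonneg.2 hδ.2.le)] at hle
      have h₁ : dist (σ (t + δ * (s - t))) (σ t) = δ * |t - s| := by
        rw [hσ.isGeodesicLine, add_sub_cancel_left, abs_mul, abs_of_pos hδ.1, abs_sub_comm]
      have h₂ : dist (σ t) (S.point s 0) = |t - s| := by
        rw [S.dist_bottom h0 (S.U_point (S.zero_mem s)), hσ.T_eq, S.T_point (S.zero_mem s)]
      have h₃ : dist (S.point s 0) (S.point s (δ * w)) = δ * w := by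
        rw [S.dist_of_T_eq (by rw [hT, S.T_point (S.zero_mem s)]), hU, S.U_point (S.zero_mem s),
          zero_sub, abs_neg, abs_of_pos hδw.1]
      linarith [dist_triangle4 (σ (t + δ * (s - t))) (σ t) (S.point s 0) (S.point s (δ * w))]
    · rw [hT] at hr
      refine hi r (mem_ball.2 ((abs_sub_left_of_mem_uIcc hr).trans_lt ?_))
      rw [show t + δ * (s - t) - s = (1 - δ) * (t - s) by ring, abs_mul,
        abs_of_pos (sub_pos.2 hδ.2), Real.dist_eq]
      exact mul_lt_of_lt_one_left (abs_pos.2 (sub_ne_zero.2 hst.symm)) (sub_lt_self 1 hδ.1)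
  have hlim : √((t - s) ^ 2 + w ^ 2) ≤ |t - s| := by
    have hcont {f : ℝ → ℝ} (hf : Continuous f) : Tendsto f (𝓝[>] 0) (𝓝 (f 0)) :=
      hf.continuousWithinAt
    simpa using le_of_tendsto_of_tendsto
      (hcont (f := fun δ => (1 - δ) * √((t - s) ^ 2 + w ^ 2)) (by fun_prop))
      (hcont (f := fun δ => |t - s| + δ * (|t - s| + w)) (by fun_prop))
      (by filter_upwards [Ioo_mem_nhdsGT one_pos] with δ hδ using hbound hδ)
  rw [Real.sqrt_le_left (abs_nonneg _), sq_abs] at hlim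
  nlinarith [hs.1]

lemma interior_of_forall_mem_ball (hσ : S.IsTimeLine σ) {s t : ℝ} (hs : S.Interior (σ s))
    (hi : ∀ r ∈ ball s (dist t s), S.Interior (σ r)) : S.Interior (σ t) :=
  ⟨hσ.U_pos_of_interior hs hi,
    sub_pos.1 (hσ.flip.U_pos_of_interior hs.flip fun r hr => (hi r hr).flip)⟩

lemma interior (hσ : S.IsTimeLine σ) {s : ℝ} (hs : S.Interior (σ s)) (t : ℝ) :
    S.Interior (σ t) := by
  by_contra ht
  obtain ⟨t₁, ht₁, hnear⟩ :=
    hσ.isOpen_setOf_interior.isClosed_compl.exists_infDist_eq_dist ⟨t, ht⟩ s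
  refine ht₁ (hσ.interior_of_forall_mem_ball hs fun r hr => not_not.1 fun hr' => ?_)
  rw [mem_ball', dist_comm t₁, ← hnear] at hr
  exact hr.not_ge (infDist_le_dist_of_mem hr')

lemma U_le (hσ : S.IsTimeLine σ) {s : ℝ} (hs : S.Interior (σ s)) (t : ℝ) :
    S.U (σ s) ≤ S.U (σ t) := by
  by_contra! hlt
  have ht := hσ.interior hs t
  rw [Interior, hσ.T_eq] at hs
  have hu : S.U (σ s) - S.U (σ t) ∈ Ioo 0 (S.width s) :=
    ⟨sub_pos.2 hlt, (sub_lt_self _ ht.1).trans hs.2⟩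
  obtain ⟨τ, hτ, hτs⟩ := S.exists_isTimeLine (S.point s (S.U (σ s) - S.U (σ t)))
  rw [S.T_point (Ioo_subset_Icc_self hu)] at hτs
  have hUτ : S.U (τ s) = S.U (σ s) - S.U (σ t) := by
    rw [hτs, S.U_point (Ioo_subset_Icc_self hu)]
  have hτi : ∀ r, S.Interior (τ r) := hτ.interior (s := s) (by rwa [Interior, hτ.T_eq, hUτ])
  have h := hσ.U_sub_eq hτ (a := s) (b := t) (fun r _ => hσ.interior ht r) fun r _ => hτi r
  linarith [(hτi t).1]

lemma U_eq (hσ : S.IsTimeLine σ) {s : ℝ} (hs : S.Interior (σ s)) (t : ℝ) :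
    S.U (σ t) = S.U (σ s) :=
  (hσ.U_le (hσ.interior hs t) s).antisymm (hσ.U_le hs t)

end IsTimeLine

variable (S)

lemma exists_interior_T_eq (t : ℝ) : ∃ z, S.Interior z ∧ S.T z = t := by
  have hmem : S.width t / 2 ∈ Ioo 0 (S.width t) :=
    ⟨half_pos (S.width_pos t), half_lt_self (S.width_pos t)⟩
  have hT := S.T_point (Ioo_subset_Icc_self hmem)
  exact ⟨S.point t (S.width t / 2),
    by rwa [Interior, hT, S.U_point (Ioo_subset_Icc_self hmem)], hT⟩

lemma width_eq (s t : ℝ) : S.width t = S.width s := by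
  obtain ⟨z, hz, rfl⟩ := S.exists_interior_T_eq s
  obtain ⟨σ, hσ, hσz⟩ := S.exists_isTimeLine z
  rw [← hσz] at hz
  have h := hσ.U_eq hz t
  have hflip := hσ.flip.U_eq hz.flip t
  simp only [flip, hσ.T_eq] at hflip
  linarith

/-! ### The distance formula -/

lemma IsTimeLine.segment_subset_offsetDomain {S : MetricStrip X} (hσ : S.IsTimeLine σ)
    (hσi : ∀ t, S.Interior (σ t)) {p q : ℝ × ℝ} (hp : p ∈ S.offsetDomain σ)
    (hq : q ∈ S.offsetDomain σ) : segment ℝ p q ⊆ S.offsetDomain σ := by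
  have hU (t : ℝ) : S.U (σ t) = S.U (σ 0) := hσ.U_eq (hσi 0) t
  have hdomain : S.offsetDomain σ =
      (LinearMap.snd ℝ ℝ ℝ) ⁻¹' Ioo (-S.U (σ 0)) (S.width 0 - S.U (σ 0)) := by
    ext p
    simp [offsetDomain, hσi, hU, S.width_eq 0, neg_lt_iff_pos_add', lt_sub_iff_add_lt']
  rw [hdomain] at hp hq ⊢
  exact ((convex_Ioo _ _).linear_preimage _).segment_subset hp hq

lemma dist_eq_of_interior {z w : X} (hz : S.Interior z) (hw : S.Interior w) :
    dist z w = √((S.T z - S.T w) ^ 2 + (S.U z - S.U w) ^ 2) := by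
  obtain ⟨σ, hσ, hσz⟩ := S.exists_isTimeLine z
  have hσi := hσ.interior (hσz.symm ▸ hz)
  have hU (t : ℝ) : S.U (σ t) = S.U z := by rw [hσ.U_eq (hσi (S.T z)) t, hσz]
  have hoffset (x : X) : S.offset σ (S.T x, S.U x - S.U z) = x := by
    rw [offset, hU, add_sub_cancel, S.point_T_U]
  have hmem {x : X} (hx : S.Interior x) : (S.T x, S.U x - S.U z) ∈ S.offsetDomain σ :=
    ⟨hσi _, by simpa [hU] using! hx⟩
  apply le_antisymm
  · have h := hσ.dist_offset_le (hσ.segment_subset_offsetDomain hσi (hmem hz) (hmem hw))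
    rwa [hoffset, hoffset, sub_sub_sub_cancel_right] at h
  · have h := hσ.le_dist (t := S.T z) hw fun r _ => hσi r
    rwa [hσz, height, hU, ← neg_sub (S.U z), neg_sq] at h

lemma dense_setOf_interior : Dense {z | S.Interior z} := by
  intro z
  have hwidth := S.width_pos (S.T z)
  have hU := S.U_mem z
  refine Metric.mem_closure_iff.2 fun ε hε => ?_
  obtain ⟨δ, hδ, hlt⟩ := exists_between (lt_min one_pos (div_pos hε hwidth))
  obtain ⟨hδ₁, hδε⟩ := lt_min_iff.1 hlt
  rw [lt_div_iff₀ hwidth] at hδε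
  have hmem : S.U z + δ * (S.width (S.T z) / 2 - S.U z) ∈ Ioo 0 (S.width (S.T z)) := by
    constructor <;> nlinarith [hU.1, hU.2, mul_pos hδ hwidth]
  have hT := S.T_point (Ioo_subset_Icc_self hmem)
  have hU' := S.U_point (Ioo_subset_Icc_self hmem)
  refine ⟨S.point (S.T z) (S.U z + δ * (S.width (S.T z) / 2 - S.U z)), ?_, ?_⟩
  · rwa [mem_ofPred_eq, Interior, hT, hU']
  · rw [S.dist_of_T_eq hT.symm, hU', sub_add_cancel_left, abs_neg, abs_mul, abs_of_pos hδ]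
    have : |S.width (S.T z) / 2 - S.U z| ≤ S.width (S.T z) :=
      abs_le.2 ⟨by linarith [hU.2], by linarith [hU.1]⟩
    nlinarith

theorem dist_eq (z w : X) : dist z w = √((S.T z - S.T w) ^ 2 + (S.U z - S.U w) ^ 2) := by
  have hT := S.continuous_T
  have hU := S.continuous_U
  have h := Continuous.ext_on (S.dense_setOf_interior.prod S.dense_setOf_interior)
    (f := fun p : X × X => dist p.1 p.2)
    (g := fun p => √((S.T p.1 - S.T p.2) ^ 2 + (S.U p.1 - S.U p.2) ^ 2)) (by fun_prop)
    (by fun_prop) fun p hp => S.dist_eq_of_interior hp.1 hp.2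
  exact congrFun h (z, w)

/-- The coordinates `(T, U)` as an isometry onto a Euclidean strip. -/
noncomputable def isometryEquiv :
    X ≃ᵢ {p : EuclideanSpace ℝ (Fin 2) | p 1 ∈ Icc 0 (S.width 0)} :=
  IsometryEquiv.mk' (fun z => ⟨!₂[S.T z, S.U z], S.width_eq (S.T z) 0 ▸ S.U_mem z⟩)
    (fun p => S.point (p.1 0) (p.1 1))
    (fun ⟨p, hp⟩ => by
      have hp' : p 1 ∈ Icc 0 (S.width (p 0)) := S.width_eq 0 (p 0) ▸ hp
      ext i
      fin_cases i
      exacts [S.T_point hp', S.U_point hp'])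
    (Isometry.of_dist_eq fun z w => by
      rw [Subtype.dist_eq, EuclideanSpace.dist_eq, S.dist_eq]
      simp [Fin.sum_univ_two, Real.dist_eq, sq_abs])

end MetricStrip

/-- **Flat strip theorem for ptolemaic spaces.** -/
theorem flat_strip_theorem (X : Type*) [MetricSpace X]
    (hPT : Ptolemaic X) (hgeo : GeodesicMetricSpace X)
    (h : (ℝ × (Set.Icc (0:ℝ) 1)) ≃ₜ X)
    (c₀ c₁ : ℝ → X)
    (hc₀ : IsGeodesicLine c₀) (hc₁ : IsGeodesicLine c₁)
    (hpar : ParallelLines c₀ c₁)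
    (him₀ : Set.range c₀ = ⇑h '' {p : ℝ × (Set.Icc (0:ℝ) 1) | (p.2 : ℝ) = 0})
    (him₁ : Set.range c₁ = ⇑h '' {p : ℝ × (Set.Icc (0:ℝ) 1) | (p.2 : ℝ) = 1}) :
    ∃ a : ℝ, 0 ≤ a ∧
      Nonempty (X ≃ᵢ {p : EuclideanSpace ℝ (Fin 2) | p 1 ∈ Set.Icc 0 a}) := by
  obtain ⟨S⟩ := TopologicalStrip.nonempty_of_homeomorph hPT hgeo hc₀ hc₁ hpar him₀ him₁
  exact ⟨S.toMetricStrip.width 0, (S.toMetricStrip.width_pos 0).le, ⟨S.toMetricStrip.isometryEquiv⟩⟩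
end

section
/- Let X be a proper geodesic ptolemaic metric space. Then X is strictly distance convex: for every p ∈ X and every geodesic c : [0,1] → X (with d(c(s),c(t)) = λ|s−t| for some λ > 0) such that d(c(s),c(t)) > |d(p,c(s)) − d(p,c(t))| for all s ≠ t in [0,1], the function t ↦ d(p, c(t)) is strictly convex on [0,1]. -/
open Metric Set Filter Topology

/-
Let `ρ` divide the pair `x, z` in the ratio `t : 1 - t`. The Ptolemy inequality for `p, ρ, x, z`
says exactly that `dist p ρ` is at most the affine interpolation of `dist p x` and `dist p z`.
Suppose equality holds, and move `x` a small distance `e` towards `p`, to `q`. Put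
`w = dist q z - dist x z`. The Ptolemy inequality for `p, ρ, q, z`, combined with the first
variation estimate `dist ρ q ≤ dist x ρ + w + o(e)`, gives
`e * dist x z + (dist p x - dist p z) * w ≤ o(e)`. Since `|w| ≤ e`, this contradicts
`|dist p x - dist p z| < dist x z`.

The `o(e)` needs division points of `q, z` converging to `ρ`; compactness provides them for some
`ρ`. That suffices, since strictness at one `ρ` for each pair of points already forces division
points to be unique.
-/

section DivisionPoints

variable {X Y : Type*} [PseudoMetricSpace X] [PseudoMetricSpace Y]

/-- The point `r` divides the pair `x, z` in the ratio `t : 1 - t`, metrically: it is at distance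
`t * dist x z` from `x` and `(1 - t) * dist x z` from `z`. The point at time `t` of a geodesic from
`x` to `z` parametrized by `[0, 1]` is one, but `r` need not lie on a geodesic. -/
structure IsDivisionPoint (t : ℝ) (x z r : X) : Prop where
  dist_left : dist x r = t * dist x z
  dist_right : dist r z = (1 - t) * dist x z

namespace IsDivisionPoint

variable {t : ℝ} {x z r : X}

lemma dist_add_dist (h : IsDivisionPoint t x z r) : dist x r + dist r z = dist x z := by
  rw [h.dist_left, h.dist_right]
  ring

lemma lineMap {E : Type*} [SeminormedAddCommGroup E] [NormedSpace ℝ E] (u v : E)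
    (ht : t ∈ Icc (0 : ℝ) 1) : IsDivisionPoint t u v (AffineMap.lineMap u v t) where
  dist_left := by rw [dist_left_lineMap, Real.norm_of_nonneg ht.1]
  dist_right := by rw [dist_lineMap_right, Real.norm_of_nonneg (sub_nonneg.2 ht.2)]

lemma map_of_dist_eq (h : IsDivisionPoint t x z r) {S : Set X} {c : X → Y} {l : ℝ}
    (hc : ∀ u ∈ S, ∀ v ∈ S, dist (c u) (c v) = l * dist u v)
    (hx : x ∈ S) (hz : z ∈ S) (hr : r ∈ S) : IsDivisionPoint t (c x) (c z) (c r) where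
  dist_left := by rw [hc x hx r hr, hc x hx z hz, h.dist_left, mul_left_comm]
  dist_right := by rw [hc r hr z hz, hc x hx z hz, h.dist_right, mul_left_comm]

lemma of_tendsto {ι : Type*} {f : Filter ι} [f.NeBot] {τ : ι → ℝ} {x' z' r' : ι → X}
    (h : ∀ i, IsDivisionPoint (τ i) (x' i) (z' i) (r' i)) (ht : Tendsto τ f (𝓝 t))
    (hx : Tendsto x' f (𝓝 x)) (hz : Tendsto z' f (𝓝 z)) (hr : Tendsto r' f (𝓝 r)) :
    IsDivisionPoint t x z r where
  dist_left := tendsto_nhds_unique (hx.dist hr)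
    ((ht.mul (hx.dist hz)).congr fun i => (h i).dist_left.symm)
  dist_right := tendsto_nhds_unique (hr.dist hz)
    (((ht.const_sub 1).mul (hx.dist hz)).congr fun i => (h i).dist_right.symm)

lemma tendsto_left {ι : Type*} {f : Filter ι} {τ : ι → ℝ} {r' : ι → X}
    (h : ∀ i, IsDivisionPoint (τ i) x z (r' i)) (hτ : Tendsto τ f (𝓝 0)) :
    Tendsto r' f (𝓝 x) := by
  rw [tendsto_iff_dist_tendsto_zero, ← zero_mul (dist x z)]
  exact (hτ.mul_const (dist x z)).congr fun i =>
    (h i).dist_left.symm.trans (dist_comm x (r' i))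

lemma exists_tendsto_subseq [ProperSpace X] {q r' : ℕ → X}
    (h : ∀ n, IsDivisionPoint t (q n) z (r' n)) (hq : Tendsto q atTop (𝓝 x)) :
    ∃ ρ, IsDivisionPoint t x z ρ ∧
      ∃ φ : ℕ → ℕ, StrictMono φ ∧ Tendsto (r' ∘ φ) atTop (𝓝 ρ) := by
  have hdist : Tendsto (fun n => dist (r' n) z) atTop (𝓝 ((1 - t) * dist x z)) :=
    ((hq.dist tendsto_const_nhds).const_mul (1 - t)).congr fun n => (h n).dist_right.symm
  obtain ⟨R, hR⟩ := hdist.bddAbove_range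
  have hmem : ∀ n, r' n ∈ closedBall z R := fun n => hR (mem_range_self n)
  obtain ⟨ρ, -, φ, hφ, hρ⟩ := (isCompact_closedBall z R).tendsto_subseq hmem
  exact ⟨ρ, of_tendsto (fun n => h (φ n)) tendsto_const_nhds (hq.comp hφ.tendsto_atTop)
    tendsto_const_nhds hρ, φ, hφ, hρ⟩

end IsDivisionPoint

end DivisionPoints

lemma GeodesicMetricSpace.exists_isDivisionPoint {X : Type*} [MetricSpace X]
    (hgeo : GeodesicMetricSpace X) (x z : X) {t : ℝ} (ht : t ∈ Icc (0 : ℝ) 1) :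
    ∃ r, IsDivisionPoint t x z r := by
  obtain ⟨c, rfl, rfl, hc⟩ := hgeo x z
  have hline : IsDivisionPoint t (0 : ℝ) 1 t := by
    simpa only [AffineMap.lineMap_apply_ring, mul_zero, mul_one, zero_add] using
      IsDivisionPoint.lineMap (0 : ℝ) 1 ht
  exact ⟨c t, hline.map_of_dist_eq hc unitInterval.zero_mem unitInterval.one_mem ht⟩

namespace Ptolemaic

variable {X : Type*} [MetricSpace X] {p q x z r ρ : X} {t : ℝ}

lemma dist_le_of_isDivisionPoint (hPT : Ptolemaic X) (p : X) (h : IsDivisionPoint t x z r) :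
    dist p r ≤ (1 - t) * dist p x + t * dist p z := by
  rcases eq_or_ne x z with rfl | hxz
  · have hr : x = r := dist_eq_zero.1 (by rw [h.dist_left, dist_self, mul_zero])
    subst hr
    linarith
  · have hptolemy := hPT p r x z
    rw [h.dist_right, dist_comm r x, h.dist_left] at hptolemy
    refine le_of_mul_le_mul_right ?_ (dist_pos.2 hxz)
    linarith

/-- A quantitative first variation inequality: when `q` is close to `x` and `r` to `ρ`, it reads
`dist ρ q ≤ dist x ρ + (dist q z - dist x z) + o(dist x q)`. -/
lemma mul_dist_le_of_isDivisionPoint (hPT : Ptolemaic X) (ht : t ≤ 1)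
    (hρ : IsDivisionPoint t x z ρ) (hr : IsDivisionPoint t q z r) :
    t * dist x z * dist ρ q ≤ t * dist x z * (t * dist x z + (dist q z - dist x z)) +
      dist x q * ((1 - t) * dist x q + dist r ρ) := by
  have hptolemy : dist r x * dist ρ q ≤
      dist r ρ * dist x q + t * dist q z * (t * dist x z) := by
    simpa only [hρ.dist_left, dist_comm r q, hr.dist_left] using hPT r x ρ q
  have hrx : dist x z - (1 - t) * dist q z ≤ dist r x := by
    rw [← hr.dist_right, dist_comm r x]
    linarith [dist_triangle x r z]
  have hlower := mul_le_mul_of_nonneg_right hrx (dist_nonneg (x := ρ) (y := q))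
  have herror : (dist q z - dist x z) * (dist ρ q - t * dist x z) ≤ dist x q * dist x q := by
    have hz : |dist q z - dist x z| ≤ dist x q := by
      rw [dist_comm x q]
      exact abs_dist_sub_le q x z
    have hy : |dist ρ q - t * dist x z| ≤ dist x q := by
      rw [← hρ.dist_left, dist_comm ρ q, dist_comm x q]
      exact abs_dist_sub_le q x ρ
    calc (dist q z - dist x z) * (dist ρ q - t * dist x z)
        ≤ |dist q z - dist x z| * |dist ρ q - t * dist x z| := by
          rw [← abs_mul]
          exact le_abs_self _
      _ ≤ dist x q * dist x q := by gcongr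
  have hscaled := mul_le_mul_of_nonneg_left herror (sub_nonneg.2 ht)
  linarith

lemma mul_sub_abs_le_of_affine_le_dist (hPT : Ptolemaic X) (ht : t ∈ Icc (0 : ℝ) 1)
    (hρ : IsDivisionPoint t x z ρ) (hr : IsDivisionPoint t q z r)
    (hq : dist x q + dist q p = dist x p) (hxq : x ≠ q)
    (hfar : (1 - t) * dist p x + t * dist p z ≤ dist p ρ) :
    (1 - t) * (t * dist x z) * (dist x z - |dist p x - dist p z|) ≤
      dist p z * ((1 - t) * dist x q + dist r ρ) := by
  have hts : 0 ≤ t * dist x z := mul_nonneg ht.1 dist_nonneg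
  have hptolemy : ((1 - t) * dist p x + t * dist p z) * dist q z ≤
      (dist p x - dist x q) * ((1 - t) * dist x z) + dist p z * dist ρ q := by
    have hpq : dist p q = dist p x - dist x q := by
      rw [dist_comm p q, dist_comm p x]
      linarith
    rw [← hpq, ← hρ.dist_right]
    exact (mul_le_mul_of_nonneg_right hfar dist_nonneg).trans (hPT p ρ q z)
  have hvariation := mul_le_mul_of_nonneg_left
    (hPT.mul_dist_le_of_isDivisionPoint ht.2 hρ hr) (dist_nonneg (x := p) (y := z))
  have hcombined : (1 - t) * (t * dist x z) *
      ((dist p x - dist p z) * (dist q z - dist x z) + dist x q * dist x z) ≤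
      dist x q * (dist p z * ((1 - t) * dist x q + dist r ρ)) := by
    linarith [mul_le_mul_of_nonneg_left hptolemy hts]
  have habs : -(|dist p x - dist p z| * dist x q) ≤
      (dist p x - dist p z) * (dist q z - dist x z) := by
    refine neg_le_of_abs_le ?_
    rw [abs_mul, dist_comm x q]
    gcongr
    exact abs_dist_sub_le q x z
  refine le_of_mul_le_mul_left ?_ (dist_pos.2 hxq)
  calc dist x q * ((1 - t) * (t * dist x z) * (dist x z - |dist p x - dist p z|))
      = (1 - t) * (t * dist x z) *
          (-(|dist p x - dist p z| * dist x q) + dist x q * dist x z) := by ring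
    _ ≤ (1 - t) * (t * dist x z) *
          ((dist p x - dist p z) * (dist q z - dist x z) + dist x q * dist x z) := by
        have := sub_nonneg.2 ht.2
        gcongr
    _ ≤ dist x q * (dist p z * ((1 - t) * dist x q + dist r ρ)) := hcombined

variable [ProperSpace X]

lemma exists_isDivisionPoint_dist_lt (hPT : Ptolemaic X) (hgeo : GeodesicMetricSpace X)
    (ht : t ∈ Ioo (0 : ℝ) 1) (hlt : |dist p x - dist p z| < dist x z) :
    ∃ ρ, IsDivisionPoint t x z ρ ∧ dist p ρ < (1 - t) * dist p x + t * dist p z := by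
  have hxz : 0 < dist x z := (abs_nonneg _).trans_lt hlt
  have hxp : x ≠ p := by
    rintro rfl
    simp only [dist_self, zero_sub, abs_neg, abs_of_nonneg dist_nonneg, lt_irrefl] at hlt
  have hτ : ∀ n : ℕ, 1 / ((n : ℝ) + 1) ∈ Icc (0 : ℝ) 1 := fun n =>
    ⟨Nat.one_div_pos_of_nat.le, by simpa using Nat.one_div_le_one_div (α := ℝ) n.zero_le⟩
  choose q hq using fun n => hgeo.exists_isDivisionPoint x p (hτ n)
  choose r hr using fun n => hgeo.exists_isDivisionPoint (q n) z (Ioo_subset_Icc_self ht)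
  have hqx : Tendsto q atTop (𝓝 x) :=
    IsDivisionPoint.tendsto_left hq tendsto_one_div_add_atTop_nhds_zero_nat
  have hxq : ∀ n, x ≠ q n := fun n => dist_pos.1 <| by
    rw [(hq n).dist_left]
    exact mul_pos Nat.one_div_pos_of_nat (dist_pos.2 hxp)
  obtain ⟨ρ, hρ, φ, hφ, hrρ⟩ := IsDivisionPoint.exists_tendsto_subseq hr hqx
  refine ⟨ρ, hρ, lt_of_not_ge fun hfar => ?_⟩
  have hlim : Tendsto
      (fun n => dist p z * ((1 - t) * dist x (q (φ n)) + dist (r (φ n)) ρ)) atTop (𝓝 0) := by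
    have hq' := tendsto_const_nhds (x := x).dist (hqx.comp hφ.tendsto_atTop)
    have hr' := hrρ.dist (tendsto_const_nhds (x := ρ))
    simpa only [dist_self, mul_zero, add_zero, Function.comp_apply] using
      ((hq'.const_mul (1 - t)).add hr').const_mul (dist p z)
  have hnonpos : (1 - t) * (t * dist x z) * (dist x z - |dist p x - dist p z|) ≤ 0 :=
    ge_of_tendsto' hlim fun n => hPT.mul_sub_abs_le_of_affine_le_dist
      (Ioo_subset_Icc_self ht) hρ (hr (φ n)) (hq (φ n)).dist_add_dist (hxq (φ n)) hfar
  exact hnonpos.not_gt <|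
    mul_pos (mul_pos (sub_pos.2 ht.2) (mul_pos ht.1 hxz)) (sub_pos.2 hlt)

/-- A suitable midpoint of two distinct division points would be strictly closer to `x`, and no
farther from `z`, than they are. -/
lemma isDivisionPoint_unique (hPT : Ptolemaic X) (hgeo : GeodesicMetricSpace X)
    (h : IsDivisionPoint t x z r) (h' : IsDivisionPoint t x z ρ) : r = ρ := by
  by_contra hne
  obtain ⟨m, hm, hxm⟩ := hPT.exists_isDivisionPoint_dist_lt hgeo (p := x) (x := r) (z := ρ)
    (t := 1 / 2) (by norm_num) (by rwa [h.dist_left, h'.dist_left, sub_self, abs_zero, dist_pos])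
  have hzm := hPT.dist_le_of_isDivisionPoint z hm
  rw [h.dist_left, h'.dist_left] at hxm
  rw [dist_comm z r, dist_comm z ρ, h.dist_right, h'.dist_right, dist_comm z m] at hzm
  linarith [dist_triangle x m z]

lemma dist_lt_of_isDivisionPoint (hPT : Ptolemaic X) (hgeo : GeodesicMetricSpace X)
    (ht : t ∈ Ioo (0 : ℝ) 1) (hlt : |dist p x - dist p z| < dist x z)
    (h : IsDivisionPoint t x z r) : dist p r < (1 - t) * dist p x + t * dist p z := by
  obtain ⟨ρ, hρ, hpρ⟩ := hPT.exists_isDivisionPoint_dist_lt hgeo ht hlt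
  rwa [hPT.isDivisionPoint_unique hgeo h hρ]

end Ptolemaic

theorem proper_geodesic_ptolemaic_strictly_distance_convex_general
    {X : Type*} [MetricSpace X] [ProperSpace X]
    {E : Type*} [SeminormedAddCommGroup E] [NormedSpace ℝ E]
    (hPT : Ptolemaic X) (hgeo : GeodesicMetricSpace X) (p : X)
    {S : Set E} (hS : Convex ℝ S) {c : E → X} {l : ℝ}
    (hc : ∀ s ∈ S, ∀ t ∈ S, dist (c s) (c t) = l * dist s t)
    (hstrict : S.Pairwise fun s t => |dist p (c s) - dist p (c t)| < dist (c s) (c t)) :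
    StrictConvexOn ℝ S (fun t => dist p (c t)) := by
  refine ⟨hS, fun s hs u hu hsu a b ha hb hab => ?_⟩
  obtain rfl : a = 1 - b := eq_sub_of_add_eq hab
  have hb1 : b < 1 := sub_pos.1 ha
  have hdiv : IsDivisionPoint b s u ((1 - b) • s + b • u) := by
    rw [← AffineMap.lineMap_apply_module]
    exact IsDivisionPoint.lineMap s u ⟨hb.le, hb1.le⟩
  exact hPT.dist_lt_of_isDivisionPoint hgeo ⟨hb, hb1⟩ (hstrict hs hu hsu)
    (hdiv.map_of_dist_eq hc hs hu (hS hs hu ha.le hb.le hab))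

/-- **A proper geodesic PT space is strictly distance convex.** -/
theorem proper_geodesic_ptolemaic_strictly_distance_convex
    (X : Type*) [MetricSpace X] [ProperSpace X]
    (hPT : Ptolemaic X) (hgeo : GeodesicMetricSpace X)
    (p : X) (c : ℝ → X) (l : ℝ) (hl : 0 < l)
    (hc : ∀ s ∈ Set.Icc (0:ℝ) 1, ∀ t ∈ Set.Icc (0:ℝ) 1,
      dist (c s) (c t) = l * |s - t|)
    (hstrict : ∀ s ∈ Set.Icc (0:ℝ) 1, ∀ t ∈ Set.Icc (0:ℝ) 1, s ≠ t →
      |dist p (c s) - dist p (c t)| < dist (c s) (c t)) :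
    StrictConvexOn ℝ (Set.Icc (0:ℝ) 1) (fun t => dist p (c t)) :=
  proper_geodesic_ptolemaic_strictly_distance_convex_general hPT hgeo p (convex_Icc 0 1) hc
    fun s hs t ht => hstrict s hs t ht
end

section
/- Let X be a proper geodesic ptolemaic metric space. Then for all x,y ∈ X there exists a unique midpoint m(x,y) ∈ X, i.e. a unique point m with d(x,m) = d(m,y) = d(x,y)/2, and the resulting midpoint map m : X × X → X is continuous. -/
open Metric Set Filter Topology

/-!
Let two geodesics `c₁`, `c₂` of the same length issue from `x` and end at points `z₁`, `z₂` that
lie between `x` and `y` in the sense of equality in the triangle inequality. By Ptolemy's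
inequality, the first order behaviour of `s ↦ dist p (c s) / dist p (c τ)` at `s = τ` depends
continuously on `p`. Separability and Rademacher's theorem therefore make, at almost every time
`τ`, all the functions `dist p (cᵢ s)` with `p ≠ cᵢ τ`, as well as `F s = dist (c₁ s) (c₂ s)`,
differentiable. If `c₁ τ ≠ c₂ τ` for such a `τ`, let `p` be a midpoint of these two points and
`Σ s = dist p (c₁ s) + dist p (c₂ s)`. Then `F ≤ Σ`, with equality at `τ`. Distances to points are
midpoint-convex, so `p` is not too far from `y`, hence at least as far from `x` as `c₁ τ` is, and
Ptolemy's inequality for `x, p, c₁ s, c₂ s` gives `τ * F s ≤ s * Σ s`, again with equality at `τ`.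
These two minima at `τ` give `Σ' τ = F' τ` and `Σ τ + τ * Σ' τ = τ * F' τ`, so `F τ = Σ τ = 0`, a
contradiction. Hence `c₁ = c₂` almost everywhere, and `z₁ = z₂` by continuity.

Limits of midpoints are midpoints, so uniqueness and compactness of balls make the midpoint map
continuous.
-/

section Calculus

theorem differentiableAt_of_forall_exists_norm_sub_le {𝕜 E : Type*} [NontriviallyNormedField 𝕜]
    [NormedAddCommGroup E] [NormedSpace 𝕜 E] [CompleteSpace E] {f : 𝕜 → E} {a : 𝕜}
    (h : ∀ ε > 0, ∃ g : 𝕜 → E, DifferentiableAt 𝕜 g a ∧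
      ∀ᶠ x in 𝓝 a, ‖(f x - f a) - (g x - g a)‖ ≤ ε * ‖x - a‖) :
    DifferentiableAt 𝕜 f a := by
  suffices hcauchy : Cauchy ((𝓝[≠] a).map (slope f a)) by
    obtain ⟨f', hf'⟩ := cauchy_map_iff_exists_tendsto.1 hcauchy
    exact (hasDerivAt_iff_tendsto_slope.2 hf').differentiableAt
  refine Metric.cauchy_iff.2 ⟨inferInstance, fun ε hε => ?_⟩
  obtain ⟨g, hg, hfg⟩ := h (ε / 4) (by positivity)
  have hslope : ∀ᶠ x in 𝓝[≠] a, dist (slope f a x) (slope g a x) ≤ ε / 4 := by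
    filter_upwards [nhdsWithin_le_nhds hfg, self_mem_nhdsWithin] with x hx hxa
    have hpos : 0 < ‖x - a‖ := norm_pos_iff.2 (sub_ne_zero.2 hxa)
    rw [dist_eq_norm, slope_def_module, slope_def_module, ← smul_sub, norm_smul, norm_inv,
      inv_mul_le_iff₀ hpos, mul_comm]
    exact hx
  have hlimit : ∀ᶠ x in 𝓝[≠] a, dist (slope g a x) (deriv g a) < ε / 4 :=
    (hasDerivAt_iff_tendsto_slope.1 hg.hasDerivAt).eventually (ball_mem_nhds _ (by positivity))
  have hnear : ∀ᶠ x in 𝓝[≠] a, dist (slope f a x) (deriv g a) < ε / 2 := by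
    filter_upwards [hslope, hlimit] with x hx hx'
    linarith [dist_triangle (slope f a x) (slope g a x) (deriv g a)]
  refine ⟨_, image_mem_map hnear, ?_⟩
  rintro _ ⟨x, hx, rfl⟩ _ ⟨y, hy, rfl⟩
  have hx : dist (slope f a x) (deriv g a) < ε / 2 := hx
  have hy : dist (slope f a y) (deriv g a) < ε / 2 := hy
  linarith [dist_triangle_right (slope f a x) (slope f a y) (deriv g a)]

theorem eq_zero_of_eventually_le_of_mul_le {u v : ℝ → ℝ} {τ : ℝ}
    (hu : DifferentiableAt ℝ u τ) (hv : DifferentiableAt ℝ v τ) (huv : u τ = v τ)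
    (hle : ∀ᶠ s in 𝓝 τ, v s ≤ u s) (hmul : ∀ᶠ s in 𝓝 τ, τ * v s ≤ s * u s) :
    u τ = 0 := by
  have hmin : IsLocalMin (fun s => u s - v s) τ := by
    filter_upwards [hle] with s hs
    linarith
  have hmin_mul : IsLocalMin (fun s => s * u s - τ * v s) τ := by
    filter_upwards [hmul] with s hs
    rw [huv]
    linarith
  have hderiv : deriv u τ - deriv v τ = 0 :=
    hmin.hasDerivAt_eq_zero (hu.hasDerivAt.sub hv.hasDerivAt)
  have hderiv_mul : 1 * u τ + τ * deriv u τ - τ * deriv v τ = 0 :=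
    hmin_mul.hasDerivAt_eq_zero
      (((hasDerivAt_id τ).mul hu.hasDerivAt).sub (hv.hasDerivAt.const_mul τ))
  linear_combination hderiv_mul - τ * hderiv

theorem ae_differentiableAt_of_lipschitzOnWith {E F : Type*} [NormedAddCommGroup E]
    [NormedSpace ℝ E] [FiniteDimensional ℝ E] [MeasurableSpace E] [BorelSpace E]
    [NormedAddCommGroup F] [NormedSpace ℝ F] [FiniteDimensional ℝ F]
    {μ : MeasureTheory.Measure E} [μ.IsAddHaarMeasure] {f : E → F} {K : NNReal} {U : Set E}
    (hf : LipschitzOnWith K f U) :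
    ∀ᵐ t ∂μ, t ∈ interior U → DifferentiableAt ℝ f t := by
  filter_upwards [hf.ae_differentiableWithinAt_of_mem (μ := μ)] with t ht htU
  exact (ht (interior_subset htU)).differentiableAt (mem_interior_iff_mem_nhds.1 htU)

end Calculus

section Geodesics

variable {X : Type*} [MetricSpace X]

/-- `c` restricts to a geodesic from `x` to `y` parametrised proportionally to arc length on
`[0, 1]`, the convention of `GeodesicMetricSpace`; its values outside `[0, 1]` are arbitrary. -/
structure IsGeodesic (c : ℝ → X) (x y : X) : Prop where
  source : c 0 = x
  target : c 1 = y
  dist_eq : ∀ s ∈ Icc (0 : ℝ) 1, ∀ t ∈ Icc (0 : ℝ) 1, dist (c s) (c t) = dist x y * |s - t|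

/-- `m` is a metric midpoint of `x` and `y`. -/
def IsMidpoint (x y m : X) : Prop :=
  dist x m = dist x y / 2 ∧ dist m y = dist x y / 2

theorem GeodesicMetricSpace.exists_isGeodesic (hgeo : GeodesicMetricSpace X) (x y : X) :
    ∃ c : ℝ → X, IsGeodesic c x y := by
  obtain ⟨c, hx, hy, hc⟩ := hgeo x y
  exact ⟨c, hx, hy, hc⟩

namespace IsGeodesic

variable {c : ℝ → X} {x y : X}

theorem dist_source (hc : IsGeodesic c x y) {t : ℝ} (ht : t ∈ Icc (0 : ℝ) 1) :
    dist x (c t) = dist x y * t := by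
  have h := hc.dist_eq 0 (left_mem_Icc.2 zero_le_one) t ht
  rwa [hc.source, zero_sub, abs_neg, abs_of_nonneg ht.1] at h

theorem dist_target (hc : IsGeodesic c x y) {t : ℝ} (ht : t ∈ Icc (0 : ℝ) 1) :
    dist (c t) y = dist x y * (1 - t) := by
  have h := hc.dist_eq t ht 1 (right_mem_Icc.2 zero_le_one)
  rwa [hc.target, abs_sub_comm, abs_of_nonneg (sub_nonneg.2 ht.2)] at h

theorem lipschitzOnWith (hc : IsGeodesic c x y) :
    LipschitzOnWith (nndist x y) c (Icc 0 1) :=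
  LipschitzOnWith.of_dist_le_mul fun s hs t ht => (hc.dist_eq s hs t ht).le

theorem isMidpoint (hc : IsGeodesic c x y) : IsMidpoint x y (c (1 / 2)) := by
  have hhalf : (1 / 2 : ℝ) ∈ Icc (0 : ℝ) 1 := by norm_num
  constructor
  · rw [hc.dist_source hhalf]
    ring
  · rw [hc.dist_target hhalf]
    ring

theorem dist_le_of_dist_add_dist_eq {z : X} (hc : IsGeodesic c x z)
    (hz : dist x z + dist z y = dist x y) {t : ℝ} (ht : t ∈ Icc (0 : ℝ) 1) :
    dist y (c t) ≤ dist x y - dist x z * t := by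
  have htri := dist_triangle (c t) z y
  rw [hc.dist_target ht] at htri
  rw [dist_comm y]
  linarith

theorem ae_differentiableAt_dist_dist {c' : ℝ → X} {x' y' : X} (hc : IsGeodesic c x y)
    (hc' : IsGeodesic c' x' y') :
    ∀ᵐ t : ℝ, t ∈ Ioo (0 : ℝ) 1 → DifferentiableAt ℝ (fun s => dist (c s) (c' s)) t := by
  rw [← interior_Icc]
  exact ae_differentiableAt_of_lipschitzOnWith
    (LipschitzWith.dist.comp_lipschitzOnWith (hc.lipschitzOnWith.prodMk hc'.lipschitzOnWith))

theorem ae_differentiableAt_dist (hc : IsGeodesic c x y) (p : X) :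
    ∀ᵐ t : ℝ, t ∈ Ioo (0 : ℝ) 1 → DifferentiableAt ℝ (fun s => dist p (c s)) t := by
  rw [← interior_Icc]
  exact ae_differentiableAt_of_lipschitzOnWith
    ((LipschitzWith.dist_right p).comp_lipschitzOnWith hc.lipschitzOnWith)

end IsGeodesic

theorem GeodesicMetricSpace.exists_isMidpoint (hgeo : GeodesicMetricSpace X) (x y : X) :
    ∃ m : X, IsMidpoint x y m :=
  let ⟨c, hc⟩ := hgeo.exists_isGeodesic x y
  ⟨c (1 / 2), hc.isMidpoint⟩

end Geodesics

namespace Ptolemaic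

variable {X : Type*} [MetricSpace X]

theorem dist_le_of_isMidpoint (hX : Ptolemaic X) {x y m : X} (hm : IsMidpoint x y m) (q : X) :
    dist q m ≤ (dist q x + dist q y) / 2 := by
  obtain ⟨hxm, hmy⟩ := hm
  rcases (dist_nonneg (x := x) (y := y)).eq_or_lt with hxy | hxy
  · have hmx : x = m := dist_eq_zero.1 (by linarith)
    have hmy : m = y := dist_eq_zero.1 (by linarith)
    subst hmx hmy
    linarith
  · have h := hX q m x y
    rw [dist_comm m x, hxm, hmy] at h
    refine le_of_mul_le_mul_right ?_ hxy
    linarith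

theorem abs_dist_mul_dist_sub_le (hX : Ptolemaic X) (p q z w : X) :
    |dist p z * dist q w - dist p w * dist q z| ≤ dist p q * dist z w := by
  have hzw := hX p z q w
  have hwz := hX p w q z
  rw [dist_comm z q] at hzw
  rw [dist_comm w q, dist_comm w z] at hwz
  rw [abs_le]
  constructor <;> linarith

theorem differentiableAt_dist_of_dense (hX : Ptolemaic X) {c : ℝ → X} {τ : ℝ}
    (hc : (fun s => dist (c s) (c τ)) =O[𝓝 τ] fun s => s - τ) {S : Set X} (hS : Dense S)
    (hd : ∀ q ∈ S, DifferentiableAt ℝ (fun s => dist q (c s)) τ) {p : X} (hp : p ≠ c τ) :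
    DifferentiableAt ℝ (fun s => dist p (c s)) τ := by
  obtain ⟨C, -, hC⟩ := hc.exists_pos
  have hpτ : dist p (c τ) ≠ 0 := dist_ne_zero.2 hp
  refine differentiableAt_of_forall_exists_norm_sub_le fun ε hε => ?_
  have hsmall : ∀ᶠ q in 𝓝 p, dist p q * C / dist q (c τ) < ε := by
    have hcont : ContinuousAt (fun q => dist p q * C / dist q (c τ)) p := by
      fun_prop (disch := exact hpτ)
    exact hcont.eventually_lt_const (by simpa using hε)
  obtain ⟨q, hqS, hqε, hq⟩ := ((mem_closure_iff_frequently.1 (hS p)).and_eventually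
    (hsmall.and (isOpen_ne.mem_nhds hp))).exists
  have hqτ : 0 < dist q (c τ) := dist_pos.2 hq
  refine ⟨fun s => dist p (c τ) / dist q (c τ) * dist q (c s), (hd q hqS).const_mul _, ?_⟩
  filter_upwards [hC.bound] with s hs
  rw [Real.norm_of_nonneg dist_nonneg] at hs
  calc ‖dist p (c s) - dist p (c τ) - (dist p (c τ) / dist q (c τ) * dist q (c s) -
          dist p (c τ) / dist q (c τ) * dist q (c τ))‖
      = ‖(dist p (c s) * dist q (c τ) - dist p (c τ) * dist q (c s)) / dist q (c τ)‖ := by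
        congr 1
        field_simp
        ring
    _ = |dist p (c s) * dist q (c τ) - dist p (c τ) * dist q (c s)| / dist q (c τ) := by
        rw [Real.norm_eq_abs, abs_div, abs_of_pos hqτ]
    _ ≤ dist p q * dist (c s) (c τ) / dist q (c τ) := by
        gcongr
        exact hX.abs_dist_mul_dist_sub_le p q (c s) (c τ)
    _ ≤ dist p q * (C * ‖s - τ‖) / dist q (c τ) := by gcongr
    _ = dist p q * C / dist q (c τ) * ‖s - τ‖ := by ring
    _ ≤ ε * ‖s - τ‖ := by gcongr

theorem ae_forall_differentiableAt_dist [TopologicalSpace.SeparableSpace X] (hX : Ptolemaic X)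
    {c : ℝ → X} {x y : X} (hc : IsGeodesic c x y) :
    ∀ᵐ t : ℝ, t ∈ Ioo (0 : ℝ) 1 →
      ∀ p, p ≠ c t → DifferentiableAt ℝ (fun s => dist p (c s)) t := by
  obtain ⟨S, hS_countable, hS_dense⟩ := TopologicalSpace.exists_countable_dense X
  filter_upwards [(MeasureTheory.ae_ball_iff hS_countable).2
    fun q _ => hc.ae_differentiableAt_dist q] with t hdiff ht p hp
  refine hX.differentiableAt_dist_of_dense ?_ hS_dense (fun q hq => hdiff q hq ht) hp
  refine Asymptotics.IsBigO.of_bound (dist x y) ?_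
  filter_upwards [Icc_mem_nhds ht.1 ht.2] with s hs
  rw [Real.norm_of_nonneg dist_nonneg, hc.dist_eq s hs t (Ioo_subset_Icc_self ht),
    Real.norm_eq_abs]

theorem eq_of_differentiableAt_dist (hX : Ptolemaic X) {x p : X} {c₁ c₂ : ℝ → X} {r τ : ℝ}
    (hr : 0 < r) (hc₁ : ∀ᶠ s in 𝓝 τ, dist x (c₁ s) = r * s)
    (hc₂ : ∀ᶠ s in 𝓝 τ, dist x (c₂ s) = r * s)
    (hp : dist p (c₁ τ) + dist p (c₂ τ) = dist (c₁ τ) (c₂ τ)) (hxp : r * τ ≤ dist x p)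
    (hd₁ : DifferentiableAt ℝ (fun s => dist p (c₁ s)) τ)
    (hd₂ : DifferentiableAt ℝ (fun s => dist p (c₂ s)) τ)
    (hd : DifferentiableAt ℝ (fun s => dist (c₁ s) (c₂ s)) τ) :
    c₁ τ = c₂ τ := by
  have hmul : ∀ᶠ s in 𝓝 τ,
      τ * dist (c₁ s) (c₂ s) ≤ s * (dist p (c₁ s) + dist p (c₂ s)) := by
    filter_upwards [hc₁, hc₂] with s hs₁ hs₂
    refine le_of_mul_le_mul_left ?_ hr
    calc r * (τ * dist (c₁ s) (c₂ s)) = r * τ * dist (c₁ s) (c₂ s) := by ring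
      _ ≤ dist x p * dist (c₁ s) (c₂ s) := by gcongr
      _ ≤ dist x (c₁ s) * dist p (c₂ s) + dist x (c₂ s) * dist p (c₁ s) := hX _ _ _ _
      _ = r * (s * (dist p (c₁ s) + dist p (c₂ s))) := by
        rw [hs₁, hs₂]
        ring
  have hzero := eq_zero_of_eventually_le_of_mul_le (hd₁.add hd₂) hd hp
    (.of_forall fun s => dist_triangle_left (c₁ s) (c₂ s) p) hmul
  exact dist_eq_zero.1 (hp.symm.trans hzero)

theorem eq_of_dist_add_dist_eq [TopologicalSpace.SeparableSpace X] (hX : Ptolemaic X)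
    (hgeo : GeodesicMetricSpace X) {x y z₁ z₂ : X} (hz₁ : dist x z₁ + dist z₁ y = dist x y)
    (hz₂ : dist x z₂ + dist z₂ y = dist x y) (hz : dist x z₁ = dist x z₂) :
    z₁ = z₂ := by
  rcases (dist_nonneg (x := x) (y := z₁)).eq_or_lt with hr | hr
  · exact (dist_eq_zero.1 hr.symm).symm.trans (dist_eq_zero.1 (hz.symm.trans hr.symm))
  obtain ⟨c₁, hc₁⟩ := hgeo.exists_isGeodesic x z₁
  obtain ⟨c₂, hc₂⟩ := hgeo.exists_isGeodesic x z₂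
  have hae : ∀ᵐ τ : ℝ, τ ∈ Ioo (0 : ℝ) 1 → c₁ τ = c₂ τ := by
    filter_upwards [hX.ae_forall_differentiableAt_dist hc₁, hX.ae_forall_differentiableAt_dist hc₂,
      hc₁.ae_differentiableAt_dist_dist hc₂] with τ hd₁ hd₂ hd hτ
    by_contra hne
    obtain ⟨p, hp⟩ := hgeo.exists_isMidpoint (c₁ τ) (c₂ τ)
    have hpos : 0 < dist (c₁ τ) (c₂ τ) := dist_pos.2 hne
    have hp₁ : dist p (c₁ τ) = dist (c₁ τ) (c₂ τ) / 2 := by rw [dist_comm, hp.1]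
    have hxp : dist x z₁ * τ ≤ dist x p := by
      have hτ' := Ioo_subset_Icc_self hτ
      have hy₁ := hc₁.dist_le_of_dist_add_dist_eq hz₁ hτ'
      have hy₂ := hc₂.dist_le_of_dist_add_dist_eq hz₂ hτ'
      have hyp := hX.dist_le_of_isMidpoint hp y
      rw [← hz] at hy₂
      linarith [dist_triangle_right x y p]
    have hnhds := Icc_mem_nhds hτ.1 hτ.2
    refine hne (hX.eq_of_differentiableAt_dist hr ?_ ?_ ?_ hxp (hd₁ hτ p ?_) (hd₂ hτ p ?_) (hd hτ))
    · filter_upwards [hnhds] with s hs using hc₁.dist_source hs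
    · filter_upwards [hnhds] with s hs using hz ▸ hc₂.dist_source hs
    · linarith [hp.2]
    · exact dist_pos.1 (by linarith)
    · exact dist_pos.1 (by linarith [hp.2])
  rw [← MeasureTheory.ae_restrict_iff' measurableSet_Ioo,
    MeasureTheory.restrict_Ioo_eq_restrict_Icc] at hae
  have heq : EqOn c₁ c₂ (Icc 0 1) :=
    MeasureTheory.Measure.eqOn_Icc_of_ae_eq MeasureTheory.volume zero_ne_one hae
      hc₁.lipschitzOnWith.continuousOn hc₂.lipschitzOnWith.continuousOn
  rw [← hc₁.target, ← hc₂.target, heq (right_mem_Icc.2 zero_le_one)]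

end Ptolemaic

namespace IsMidpoint

variable {X : Type*} [MetricSpace X]

theorem dist_add_dist {x y m : X} (hm : IsMidpoint x y m) :
    dist x m + dist m y = dist x y := by
  rw [hm.1, hm.2, add_halves]

theorem unique [TopologicalSpace.SeparableSpace X] (hX : Ptolemaic X)
    (hgeo : GeodesicMetricSpace X) {x y m₁ m₂ : X} (hm₁ : IsMidpoint x y m₁)
    (hm₂ : IsMidpoint x y m₂) : m₁ = m₂ :=
  hX.eq_of_dist_add_dist_eq hgeo hm₁.dist_add_dist hm₂.dist_add_dist (hm₁.1.trans hm₂.1.symm)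

theorem of_tendsto {ι : Type*} {l : Filter ι} [l.NeBot] {f g h : ι → X} {x y m : X}
    (hf : Tendsto f l (𝓝 x)) (hg : Tendsto g l (𝓝 y)) (hh : Tendsto h l (𝓝 m))
    (hmid : ∀ᶠ i in l, IsMidpoint (f i) (g i) (h i)) : IsMidpoint x y m := by
  have hhalf := (hf.dist hg).div_const 2
  exact ⟨tendsto_nhds_unique ((hf.dist hh).congr' (hmid.mono fun _ hi => hi.1)) hhalf,
    tendsto_nhds_unique ((hh.dist hg).congr' (hmid.mono fun _ hi => hi.2)) hhalf⟩

theorem continuous_of_unique [ProperSpace X] {m : X × X → X}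
    (hm : ∀ z, IsMidpoint z.1 z.2 (m z))
    (huniq : ∀ z a, IsMidpoint z.1 z.2 a → a = m z) : Continuous m := by
  refine continuous_iff_ultrafilter.2 fun z U hU => ?_
  have hbound : ∀ᶠ w in 𝓝 z, dist w.1 z.1 + dist w.1 w.2 / 2 < dist z.1 z.2 / 2 + 1 := by
    have hcont : Continuous fun w : X × X => dist w.1 z.1 + dist w.1 w.2 / 2 := by fun_prop
    exact hcont.continuousAt.eventually_lt_const (by simp)
  have hball : ∀ᶠ w in 𝓝 z, m w ∈ closedBall z.1 (dist z.1 z.2 / 2 + 1) := by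
    filter_upwards [hbound] with w hw
    rw [mem_closedBall]
    linarith [dist_triangle_left (m w) z.1 w.1, (hm w).1]
  obtain ⟨a, -, ha⟩ := (isCompact_closedBall z.1 (dist z.1 z.2 / 2 + 1)).ultrafilter_le_nhds'
    (U.map m) (hU hball)
  have hmid : IsMidpoint z.1 z.2 a :=
    of_tendsto (continuousAt_fst.tendsto.mono_left hU) (continuousAt_snd.tendsto.mono_left hU) ha
      (.of_forall hm)
  rw [← huniq z a hmid]
  exact ha

end IsMidpoint

/-- **Unique midpoints and continuity of the midpoint map in a proper geodesic
PT space.** -/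
theorem unique_continuous_midpoints
    (X : Type*) [MetricSpace X] [ProperSpace X]
    (hPT : Ptolemaic X) (hgeo : GeodesicMetricSpace X) :
    (∀ x y : X, ∃! m : X, dist x m = dist x y / 2 ∧ dist m y = dist x y / 2) ∧
    ∃ m : X × X → X, Continuous m ∧
      ∀ x y : X, dist x (m (x, y)) = dist x y / 2 ∧
        dist (m (x, y)) y = dist x y / 2 := by
  choose m hm using fun z : X × X => hgeo.exists_isMidpoint z.1 z.2
  have huniq : ∀ z a, IsMidpoint z.1 z.2 a → a = m z := fun z a ha =>
    ha.unique hPT hgeo (hm z)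
  exact ⟨fun x y => ⟨m (x, y), hm (x, y), huniq (x, y)⟩,
    m, IsMidpoint.continuous_of_unique hm huniq, fun x y => hm (x, y)⟩
end

section
/- Let X be a proper geodesic ptolemaic metric space and let A ⊆ X be a nonempty closed convex subset (convex meaning: for all x,y ∈ A, every midpoint of x and y belongs to A). Then there exists a continuous map π : X → A such that d(x, π(x)) = inf_{a ∈ A} d(x, a) for every x ∈ X. -/
open Metric Set Filter Topology

/-!
Strict convexity of balls is obtained by differentiating the Ptolemy inequality. Let `x ≠ y` be
at distance `r` from `z`, move a point `g` from `x` towards `z`, and compare a midpoint `w` of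
`g` and `y` with a midpoint `m` of `x` and `y`. If `m` were no closer to `z` than `x` is, the
quadruples `g, y, z, m` and `m, g, w, x` would give, to first order in `dist x g`,
`dist x y ^ 2 / 2 ≤ 2 * r * dist m w`. By properness `m` can be chosen as a limit of such `w` as
`g → x`, which is absurd. Hence nearest points in convex sets are unique, and compactness makes the
projection continuous.
-/

/-- `m` is a midpoint of `x` and `y`; several midpoints may exist. -/
structure IsMidpoint_s6 {X : Type*} [PseudoMetricSpace X] (m x y : X) : Prop where
  dist_left : dist x m = dist x y / 2
  dist_right : dist m y = dist x y / 2

/-- A set is convex, in the sense used for metric spaces without unique geodesics, if it contains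
every midpoint of any two of its points. -/
def MidpointConvex {X : Type*} [PseudoMetricSpace X] (A : Set X) : Prop :=
  ∀ x ∈ A, ∀ y ∈ A, ∀ m, IsMidpoint_s6 m x y → m ∈ A

namespace IsMidpoint_s6

variable {X ι : Type*} [PseudoMetricSpace X]

lemma of_tendsto_s6 {l : Filter ι} [l.NeBot] {u v w : ι → X} {x y m : X}
    (hu : Tendsto u l (𝓝 x)) (hv : Tendsto v l (𝓝 y)) (hw : Tendsto w l (𝓝 m))
    (h : ∀ i, IsMidpoint_s6 (w i) (u i) (v i)) : IsMidpoint_s6 m x y where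
  dist_left := tendsto_nhds_unique (hu.dist hw)
    (((hu.dist hv).div_const 2).congr fun i => (h i).dist_left.symm)
  dist_right := tendsto_nhds_unique (hw.dist hv)
    (((hu.dist hv).div_const 2).congr fun i => (h i).dist_right.symm)

lemma exists_tendsto [ProperSpace X] {U : Ultrafilter ι} {u w : ι → X} {x y : X}
    (hu : Tendsto u U (𝓝 x)) (h : ∀ i, IsMidpoint_s6 (w i) (u i) y) :
    ∃ m, IsMidpoint_s6 m x y ∧ Tendsto w U (𝓝 m) := by
  have hdist : Tendsto (fun i => dist (w i) y) U (𝓝 (dist x y / 2)) :=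
    ((hu.dist tendsto_const_nhds).div_const 2).congr fun i => (h i).dist_right.symm
  have hbdd : ∀ᶠ i in U, w i ∈ closedBall y (dist x y / 2 + 1) :=
    hdist.eventually_le_const (lt_add_one _)
  obtain ⟨m, -, hm⟩ :=
    (isCompact_closedBall y (dist x y / 2 + 1)).ultrafilter_le_nhds' (U.map w) hbdd
  exact ⟨m, of_tendsto_s6 hu tendsto_const_nhds hm h, hm⟩

end IsMidpoint_s6

namespace GeodesicMetricSpace

variable {X : Type*} [MetricSpace X]

lemma exists_isMidpoint_s6 (hgeo : GeodesicMetricSpace X) (x y : X) : ∃ m, IsMidpoint_s6 m x y := by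
  obtain ⟨c, rfl, rfl, hc⟩ := hgeo x y
  refine ⟨c (1 / 2), ?_, ?_⟩
  · rw [hc 0 (by simp) (1 / 2) (by norm_num), zero_sub, abs_neg, abs_of_pos one_half_pos]
    ring
  · rw [hc (1 / 2) (by norm_num) 1 (by simp), abs_sub_comm, sub_half, abs_of_pos one_half_pos]
    ring

lemma accPt_dist_add_dist_eq (hgeo : GeodesicMetricSpace X) {x z : X} (hxz : x ≠ z) :
    AccPt x (𝓟 {g | dist x g + dist g z = dist x z}) := by
  obtain ⟨c, rfl, rfl, hc⟩ := hgeo x z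
  have hleft : ∀ t ∈ Ioc (0 : ℝ) 1, dist (c 0) (c t) = dist (c 0) (c 1) * t := fun t ht => by
    rw [hc 0 (by simp) t (Ioc_subset_Icc_self ht), zero_sub, abs_neg, abs_of_pos ht.1]
  have hright : ∀ t ∈ Ioc (0 : ℝ) 1, dist (c t) (c 1) = dist (c 0) (c 1) * (1 - t) :=
    fun t ht => by
      rw [hc t (Ioc_subset_Icc_self ht) 1 (by simp), abs_sub_comm,
        abs_of_nonneg (sub_nonneg.2 ht.2)]
  have hmem : ∀ᶠ t in 𝓝[>] (0 : ℝ), t ∈ Ioc (0 : ℝ) 1 := Ioc_mem_nhdsGT one_pos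
  have hlim : Tendsto c (𝓝[>] 0) (𝓝 (c 0)) := by
    have hscale : Tendsto (fun t => dist (c 0) (c 1) * t) (𝓝[>] 0) (𝓝 0) := by
      have hid : Tendsto id (𝓝[>] (0 : ℝ)) (𝓝 0) := nhdsWithin_le_nhds
      simpa only [id, mul_zero] using hid.const_mul (dist (c 0) (c 1))
    refine tendsto_iff_dist_tendsto_zero.2 (hscale.congr' ?_)
    filter_upwards [hmem] with t ht
    rw [dist_comm (c t), hleft t ht]
  refine accPt_iff_frequently.2 (hlim.frequently (hmem.mono fun t ht => ⟨?_, ?_⟩).frequently)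
  · exact (dist_pos.1 (hleft t ht ▸ mul_pos (dist_pos.2 hxz) ht.1)).symm
  · rw [mem_ofPred_eq, hleft t ht, hright t ht]
    ring

end GeodesicMetricSpace

namespace Ptolemaic

variable {X : Type*} [MetricSpace X]

lemma dist_mul_le_of_isMidpoint (hPT : Ptolemaic X) {x y m g w : X}
    (hm : IsMidpoint_s6 m x y) (hw : IsMidpoint_s6 w g y) :
    dist m g * (dist x y - dist g y / 2) ≤
      dist m w * dist x g + dist x y / 2 * (dist g y / 2) := by
  have hwx : dist x y - dist g y / 2 ≤ dist w x := by
    have := dist_triangle x w y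
    rw [hw.dist_right, dist_comm x w] at this
    linarith
  calc dist m g * (dist x y - dist g y / 2) ≤ dist m g * dist w x := by gcongr
    _ ≤ dist m w * dist g x + dist m x * dist g w := hPT m g w x
    _ = dist m w * dist x g + dist x y / 2 * (dist g y / 2) := by
      rw [dist_comm g x, dist_comm m x, hm.dist_left, hw.dist_left]

/-- Multiplying the Ptolemy inequality for `g, y, z, m` by `dist x y - dist g y / 2` produces the
left side of `dist_mul_le_of_isMidpoint`; the error that remains is the square
`(dist x y - dist g y) ^ 2`, which is of second order in `dist x g`. -/
lemma dist_mul_le_of_le_dist_midpoint (hPT : Ptolemaic X) {x y z m g w : X}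
    (hz : dist z y ≤ dist z x) (hm : IsMidpoint_s6 m x y) (hzm : dist z x ≤ dist z m)
    (hg : dist x g + dist g z = dist x z) (hgx : g ≠ x) (hw : IsMidpoint_s6 w g y) :
    dist x y * (dist x y - dist g y / 2) ≤ dist z x * (2 * dist m w + dist x g) := by
  have hmg := hPT.dist_mul_le_of_isMidpoint hm hw
  have hgm : dist g y * dist z x ≤ (dist z x - dist x g) * (dist x y / 2) + dist m g * dist z x :=
    calc dist g y * dist z x ≤ dist g y * dist z m := by gcongr
      _ ≤ dist g z * dist y m + dist g m * dist y z := hPT g y z m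
      _ = (dist z x - dist x g) * (dist x y / 2) + dist m g * dist z y := by
        rw [dist_comm y m, hm.dist_right, dist_comm g m, dist_comm y z, dist_comm z x, ← hg]
        ring
      _ ≤ (dist z x - dist x g) * (dist x y / 2) + dist m g * dist z x := by gcongr
  have hsq : (dist x y - dist g y) ^ 2 ≤ dist x g ^ 2 :=
    sq_le_sq.2 ((abs_dist_sub_le x g y).trans (le_abs_self _))
  rcases le_total (dist x y - dist g y / 2) 0 with hneg | hpos
  · exact (mul_nonpos_of_nonneg_of_nonpos dist_nonneg hneg).trans (by positivity)
  · refine le_of_mul_le_mul_right ?_ (dist_pos.2 hgx.symm)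
    have hr : 0 ≤ dist z x := dist_nonneg
    linarith [mul_le_mul_of_nonneg_right hgm hpos, mul_le_mul_of_nonneg_left hmg hr,
      mul_le_mul_of_nonneg_left hsq hr]

lemma exists_isMidpoint_dist_lt [ProperSpace X] (hPT : Ptolemaic X)
    (hgeo : GeodesicMetricSpace X) {x y z : X} (hxy : x ≠ y) (hz : dist z y ≤ dist z x) :
    ∃ m, IsMidpoint_s6 m x y ∧ dist z m < dist z x := by
  by_contra! hfar
  have hxz : x ≠ z := by
    rintro rfl
    exact hxy (dist_le_zero.1 (hz.trans_eq (dist_self x)))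
  choose mid hmid using fun g => hgeo.exists_isMidpoint_s6 g y
  let segment : Set X := {g | dist x g + dist g z = dist x z}
  have : (𝓝[≠] x ⊓ 𝓟 segment).NeBot := hgeo.accPt_dist_add_dist_eq hxz
  obtain ⟨U, hU⟩ := Ultrafilter.exists_le (𝓝[≠] x ⊓ 𝓟 segment)
  have hne : ∀ᶠ g in U, g ≠ x := (hU.trans inf_le_left) self_mem_nhdsWithin
  have hseg : ∀ᶠ g in U, dist x g + dist g z = dist x z :=
    (hU.trans inf_le_right) (mem_principal_self _)
  have hlim : Tendsto id U (𝓝 x) := hU.trans (inf_le_left.trans nhdsWithin_le_nhds)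
  obtain ⟨m, hm, hmlim⟩ := IsMidpoint_s6.exists_tendsto hlim hmid
  have hestimate : ∀ᶠ g in U, dist x y * (dist x y - dist g y / 2) ≤
      dist z x * (2 * dist m (mid g) + dist x g) := by
    filter_upwards [hne, hseg] with g hgx hg
    exact hPT.dist_mul_le_of_le_dist_midpoint hz hm (hfar m hm) hg hgx (hmid g)
  have hlimit : dist x y * (dist x y - dist x y / 2) ≤ dist z x * (2 * dist m m + dist x x) :=
    le_of_tendsto_of_tendsto
      ((tendsto_const_nhds.sub ((hlim.dist tendsto_const_nhds).div_const 2)).const_mul _)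
      ((((tendsto_const_nhds.dist hmlim).const_mul 2).add (tendsto_const_nhds.dist hlim)).const_mul
        _) hestimate
  rw [dist_self, dist_self] at hlimit
  linarith [mul_pos (dist_pos.2 hxy) (dist_pos.2 hxy)]

lemma eq_of_dist_eq_infDist [ProperSpace X] (hPT : Ptolemaic X) (hgeo : GeodesicMetricSpace X)
    {A : Set X} (hA : MidpointConvex A) {x a b : X} (ha : a ∈ A) (hb : b ∈ A)
    (hxa : dist x a = infDist x A) (hxb : dist x b = infDist x A) : a = b := by
  by_contra hab
  obtain ⟨m, hm, hlt⟩ := hPT.exists_isMidpoint_dist_lt hgeo hab (hxb.trans hxa.symm).le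
  exact (infDist_le_dist_of_mem (hA a ha b hb m hm)).not_gt (hxa ▸ hlt)

end Ptolemaic

lemma continuous_of_dist_eq_infDist_iff {X : Type*} [PseudoMetricSpace X] {A : Set X}
    [ProperSpace A] {π : X → A} (hπ : ∀ (x : X) (a : A), dist x a = infDist x A ↔ a = π x) :
    Continuous π := by
  have hdist : ∀ x, dist x (π x : X) = infDist x A := fun x => (hπ x _).2 rfl
  refine continuous_iff_continuousAt.2 fun x => ?_
  have hbdd : ∀ᶠ u in 𝓝 x, π u ∈ closedBall (π x) (2 * infDist x A + 1) := by
    have hcont : Continuous fun u => infDist u A + dist u x + infDist x A :=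
      ((continuous_infDist_pt A).add (continuous_id.dist continuous_const)).add continuous_const
    have hlt : infDist x A + dist x x + infDist x A < 2 * infDist x A + 1 := by
      rw [dist_self]
      linarith
    filter_upwards [hcont.continuousAt.eventually_le_const hlt] with u hu
    calc dist (π u : X) (π x) ≤ dist (π u : X) u + dist u x + dist x (π x) := dist_triangle4 ..
      _ = infDist u A + dist u x + infDist x A := by rw [dist_comm _ u, hdist, hdist]
      _ ≤ 2 * infDist x A + 1 := hu
  refine (isCompact_closedBall _ _).tendsto_nhds_of_unique_mapClusterPt hbdd fun p _ hp => ?_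
  obtain ⟨U, hU, hpU⟩ := mapClusterPt_iff_ultrafilter.1 hp
  have hlim : Tendsto (fun u => dist u (π u : X)) U (𝓝 (dist x p)) :=
    Tendsto.dist hU ((continuous_subtype_val.tendsto p).comp hpU)
  refine (hπ x p).1 (tendsto_nhds_unique hlim ?_)
  simpa only [hdist] using ((continuous_infDist_pt A).tendsto x).mono_left hU

/-- **Continuous nearest-point projection onto a closed convex subset of a
proper geodesic PT space.** -/
theorem continuous_projection_onto_closed_convex
    (X : Type*) [MetricSpace X] [ProperSpace X]
    (hPT : Ptolemaic X) (hgeo : GeodesicMetricSpace X)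
    (A : Set X) (hne : A.Nonempty) (hclosed : IsClosed A)
    (hconv : ∀ x ∈ A, ∀ y ∈ A, ∀ m : X,
      dist x m = dist x y / 2 → dist m y = dist x y / 2 → m ∈ A) :
    ∃ π : X → A, Continuous π ∧
      ∀ x : X, dist x (π x : X) = Metric.infDist x A := by
  have : ProperSpace A :=
    LipschitzWith.properSpace hclosed.isClosedEmbedding_subtypeVal.isProperMap (.subtype_val A)
  have hexists (x : X) : ∃ a : A, dist x a = infDist x A := by
    obtain ⟨a, ha, h⟩ := hclosed.exists_infDist_eq_dist hne x
    exact ⟨⟨a, ha⟩, h.symm⟩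
  have hA : MidpointConvex A := fun x hx y hy m hm =>
    hconv x hx y hy m hm.dist_left hm.dist_right
  choose π hπ using hexists
  refine ⟨π, continuous_of_dist_eq_infDist_iff fun x a => ⟨fun ha => ?_, ?_⟩, hπ⟩
  · exact Subtype.ext (hPT.eq_of_dist_eq_infDist hgeo hA a.2 (π x).2 ha (hπ x))
  · rintro rfl
    exact hπ x
end
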